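/- arXiv:1512.08227 — 17 statements merged into one kernel-verified Lean document; each statement's English description precedes it below -/
import Mathlib

section
/- Let f : ℝ → ℝ be a positive 2π-periodic C¹ function with ∫₀^{2π} f(θ)cos θ dθ = 0 and ∫₀^{2π} f(θ)sin θ dθ = 0. Then for every 2π-periodic C¹ function φ : ℝ → ℝ satisfying ∫₀^{2π} f(θ)φ(θ) dθ = 0, one has ∫₀^{2π} φ(θ)² dθ ≤ ∫₀^{2π} (φ'(θ))² dθ. -/
open Real

open MeasureTheory Set in
lemma aux_memLp (u : ℝ → ℂ) (hu : Continuous u) (a b : ℝ) :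
    MemLp u 2 (volume.restrict (Ioc a b)) := by
  obtain ⟨C, hC⟩ := (isCompact_Icc (a := a) (b := b)).exists_bound_of_continuousOn hu.continuousOn
  refine MemLp.of_bound hu.aestronglyMeasurable C ?_
  filter_upwards [ae_restrict_mem measurableSet_Ioc] with x hx
  exact hC x (Ioc_subset_Icc_self hx)

open MeasureTheory Set in
lemma aux_wirtinger (u u' : ℝ → ℝ) (hu : ∀ x, HasDerivAt u (u' x) x) (hu' : Continuous u')
    (hper : u (2 * π) = u 0) (hmean : ∫ x in (0:ℝ)..(2 * π), u x = 0) :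
    (∫ x in (0:ℝ)..(2 * π), (u x) ^ 2) ≤ ∫ x in (0:ℝ)..(2 * π), (u' x) ^ 2 := by
  have hab : (0:ℝ) < 2 * π := by positivity
  have huc : Continuous u := continuous_iff_continuousAt.2 fun x => (hu x).continuousAt
  have c1 : Continuous fun x => (u x : ℂ) := Complex.continuous_ofReal.comp huc
  have c2 : Continuous fun x => (u' x : ℂ) := Complex.continuous_ofReal.comp hu'
  have h1 := hasSum_sq_fourierCoeffOn hab (aux_memLp _ c1 0 (2 * π))
  have h2 := hasSum_sq_fourierCoeffOn hab (aux_memLp _ c2 0 (2 * π))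
  have key : ∀ n : ℤ, ‖fourierCoeffOn hab (fun x => (u x : ℂ)) n‖ ^ 2
      ≤ ‖fourierCoeffOn hab (fun x => (u' x : ℂ)) n‖ ^ 2 := by
    intro n
    by_cases hn : n = 0
    · subst hn
      have : fourierCoeffOn hab (fun x => (u x : ℂ)) 0 = 0 := by
        rw [fourierCoeffOn_eq_integral]
        have e : ∫ x in (0:ℝ)..(2 * π), (u x : ℂ) = 0 := by
          rw [intervalIntegral.integral_ofReal, hmean, Complex.ofReal_zero]
        simp [e]
      rw [this]; simp
    · have h := fourierCoeffOn_of_hasDerivAt hab (f := fun x => (u x : ℂ))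
        (f' := fun x => (u' x : ℂ)) hn (fun x _ => (hu x).ofReal_comp)
        (c2.intervalIntegrable _ _)
      gcongr
      rw [h, hper]
      simp only [sub_self, mul_zero, zero_sub, norm_mul, norm_neg, norm_div]
      have hn1 : (1:ℝ) ≤ |(n:ℝ)| := by exact_mod_cast Int.one_le_abs hn
      have : ‖((2 * π : ℝ) : ℂ) - ((0:ℝ):ℂ)‖ = 2 * π := by
        rw [← Complex.ofReal_sub, Complex.norm_real, sub_zero, Real.norm_of_nonneg hab.le]
      rw [this]
      simp only [norm_one, Complex.norm_I, Complex.norm_ofNat, Complex.norm_real,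
        Complex.norm_intCast, Real.norm_of_nonneg pi_pos.le, mul_one]
      rw [← mul_assoc]
      refine mul_le_of_le_one_left (norm_nonneg _) ?_
      rw [one_div, inv_mul_le_iff₀ (by positivity)]
      nlinarith
  have h3 := hasSum_le key h1 h2
  simp only [Complex.norm_real, Real.norm_eq_abs, sq_abs, smul_eq_mul, sub_zero] at h3
  exact le_of_mul_le_mul_left h3 (by positivity)

theorem poincare_type_inequality_on_circle
    (f φ : ℝ → ℝ)
    (hf_pos : ∀ θ, 0 < f θ)
    (hf_per : ∀ θ, f (θ + 2 * π) = f θ)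
    (hf_C1 : ContDiff ℝ 1 f)
    (hf_cos : ∫ θ in (0:ℝ)..(2 * π), f θ * Real.cos θ = 0)
    (hf_sin : ∫ θ in (0:ℝ)..(2 * π), f θ * Real.sin θ = 0)
    (hφ_per : ∀ θ, φ (θ + 2 * π) = φ θ)
    (hφ_C1 : ContDiff ℝ 1 φ)
    (hfφ : ∫ θ in (0:ℝ)..(2 * π), f θ * φ θ = 0) :
    (∫ θ in (0:ℝ)..(2 * π), (φ θ) ^ 2) ≤ ∫ θ in (0:ℝ)..(2 * π), (deriv φ θ) ^ 2 := by
  have hpp : (0:ℝ) < 2 * π := by positivity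
  have fc : Continuous f := hf_C1.continuous
  have φc : Continuous φ := hφ_C1.continuous
  have φ'c : Continuous (deriv φ) := hφ_C1.continuous_deriv le_rfl
  have hφd : ∀ x, HasDerivAt φ (deriv φ x) x := fun x =>
    (hφ_C1.differentiable one_ne_zero x).hasDerivAt
  have fcc : Continuous fun θ => f θ * cos θ := by fun_prop
  have fsc : Continuous fun θ => f θ * sin θ := by fun_prop
  let A : ℝ → ℝ := fun x => ∫ θ in (0:ℝ)..x, f θ * cos θ
  let B : ℝ → ℝ := fun x => ∫ θ in (0:ℝ)..x, f θ * sin θ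
  have hA : ∀ x, HasDerivAt A (f x * cos x) x := fun x => fcc.integral_hasStrictDerivAt 0 x |>.hasDerivAt
  have hB : ∀ x, HasDerivAt B (f x * sin x) x := fun x => fsc.integral_hasStrictDerivAt 0 x |>.hasDerivAt
  have A0 : A 0 = 0 := by simp [A]
  have B0 : B 0 = 0 := by simp [B]
  have A1 : A (2 * π) = 0 := hf_cos
  have B1 : B (2 * π) = 0 := hf_sin
  let h : ℝ → ℝ := fun x => sin x * A x - cos x * B x
  let k : ℝ → ℝ := fun x => cos x * A x + sin x * B x
  have hh : ∀ x, HasDerivAt h (k x) x := fun x => by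
    refine (((hasDerivAt_sin x).mul (hA x)).sub ((hasDerivAt_cos x).mul (hB x))).congr_deriv ?_
    simp only [k]; ring
  have hk : ∀ x, HasDerivAt k (f x - h x) x := fun x => by
    refine (((hasDerivAt_cos x).mul (hA x)).add ((hasDerivAt_sin x).mul (hB x))).congr_deriv ?_
    simp only [h]; linear_combination f x * sin_sq_add_cos_sq x
  have hc : Continuous h := continuous_iff_continuousAt.2 fun x => (hh x).continuousAt
  have kc : Continuous k := continuous_iff_continuousAt.2 fun x => (hk x).continuousAt
  have h0 : h 0 = 0 := by simp [h, A0, B0]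
  have h1 : h (2 * π) = 0 := by simp [h, A1, B1]
  have k0 : k 0 = 0 := by simp [k, A0, B0]
  have k1 : k (2 * π) = 0 := by simp [k, A1, B1]
  have hform : ∀ x, h x = ∫ θ in (0:ℝ)..x, f θ * sin (x - θ) := fun x => by
    simp only [h, A, B]
    rw [← intervalIntegral.integral_const_mul, ← intervalIntegral.integral_const_mul,
      ← intervalIntegral.integral_sub ((fcc.const_mul _).intervalIntegrable _ _)
        ((fsc.const_mul _).intervalIntegrable _ _)]
    congr 1; ext θ; rw [sin_sub]; ring
  have gc : ∀ x, Continuous fun θ => f θ * sin (x - θ) := fun x => by fun_prop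
  have hfull : ∀ x, ∫ θ in (0:ℝ)..(2 * π), f θ * sin (x - θ) = 0 := fun x => by
    have : ∫ θ in (0:ℝ)..(2 * π), f θ * sin (x - θ)
      = ∫ θ in (0:ℝ)..(2 * π), (sin x * (f θ * cos θ) - cos x * (f θ * sin θ)) := by
      congr 1; ext θ; rw [sin_sub]; ring
    rw [this, intervalIntegral.integral_sub ((fcc.const_mul _).intervalIntegrable _ _)
        ((fsc.const_mul _).intervalIntegrable _ _), intervalIntegral.integral_const_mul,
        intervalIntegral.integral_const_mul, hf_cos, hf_sin]
    ring
  have hnn : ∀ x ∈ Set.Icc (0:ℝ) (2 * π), 0 ≤ h x := by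
    intro x hx
    rcases le_total x π with hxp | hxp
    · rw [hform]
      refine intervalIntegral.integral_nonneg hx.1 fun θ hθ => mul_nonneg (hf_pos θ).le ?_
      exact sin_nonneg_of_nonneg_of_le_pi (by linarith [hθ.2]) (by linarith [hθ.1])
    · have e := intervalIntegral.integral_add_adjacent_intervals
        ((gc x).intervalIntegrable 0 x) ((gc x).intervalIntegrable x (2 * π))
        (μ := MeasureTheory.volume)
      rw [hfull, ← hform] at e
      have : 0 ≤ ∫ θ in x..(2 * π), -(f θ * sin (x - θ)) := by
        refine intervalIntegral.integral_nonneg hx.2 fun θ hθ => ?_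
        rw [← mul_neg, ← sin_neg]
        refine mul_nonneg (hf_pos θ).le ?_
        exact sin_nonneg_of_nonneg_of_le_pi (by linarith [hθ.1]) (by linarith [hθ.2])
      rw [intervalIntegral.integral_neg] at this
      linarith
  -- integration by parts
  have ibp : ∀ v v' : ℝ → ℝ, (∀ x, HasDerivAt v (v' x) x) → Continuous v' →
      ∫ x in (0:ℝ)..(2 * π), k x * v' x = (∫ x in (0:ℝ)..(2 * π), h x * v x) -
        ∫ x in (0:ℝ)..(2 * π), f x * v x := by
    intro v v' hv hv'
    have vc : Continuous v := continuous_iff_continuousAt.2 fun x => (hv x).continuousAt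
    have hvc : Continuous fun x => h x * v x := hc.mul vc
    have fvc : Continuous fun x => f x * v x := fc.mul vc
    rw [intervalIntegral.integral_mul_deriv_eq_deriv_mul (fun x _ => hk x) (fun x _ => hv x)
      ((fc.sub hc).intervalIntegrable _ _) (hv'.intervalIntegrable _ _), k0, k1,
      ← intervalIntegral.integral_sub (hvc.intervalIntegrable _ _)
        (fvc.intervalIntegrable _ _)]
    rw [zero_mul, zero_mul, sub_zero, zero_sub, ← intervalIntegral.integral_neg]
    congr 1; ext x; ring
  have E1 := ibp φ (deriv φ) hφd φ'c
  rw [hfφ, sub_zero] at E1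
  have E2 := ibp h k hh kc
  have Fh : 0 ≤ ∫ x in (0:ℝ)..(2 * π), f x * h x :=
    intervalIntegral.integral_nonneg hpp.le fun x hx => mul_nonneg (hf_pos x).le (hnn x hx)
  have Ih : 0 < ∫ x in (0:ℝ)..(2 * π), h x := by
    have e := intervalIntegral.integral_eq_sub_of_hasDerivAt (fun x _ => hk x)
      ((fc.sub hc).intervalIntegrable 0 (2 * π))
    rw [k0, k1, intervalIntegral.integral_sub (fc.intervalIntegrable _ _)
      (hc.intervalIntegrable _ _)] at e
    have : 0 < ∫ x in (0:ℝ)..(2 * π), f x :=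
      intervalIntegral.intervalIntegral_pos_of_pos (fc.intervalIntegrable _ _) hf_pos hpp
    linarith
  obtain ⟨t, ht⟩ : ∃ t : ℝ, (∫ x in (0:ℝ)..(2 * π), φ x) + t * ∫ x in (0:ℝ)..(2 * π), h x = 0 :=
    ⟨-(∫ x in (0:ℝ)..(2 * π), φ x) / ∫ x in (0:ℝ)..(2 * π), h x, by field_simp; ring⟩
  have W := aux_wirtinger (fun x => φ x + t * h x) (fun x => deriv φ x + t * k x)
    (fun x => (hφd x).add ((hh x).const_mul t)) (by fun_prop)
    (by have := hφ_per 0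
        rw [zero_add] at this
        simp only [this, h0, h1])
    (by rw [intervalIntegral.integral_add (φc.intervalIntegrable _ _)
          ((hc.const_mul t).intervalIntegrable _ _), intervalIntegral.integral_const_mul, ht])
  have expand : ∀ p q : ℝ → ℝ, Continuous p → Continuous q →
      ∫ x in (0:ℝ)..(2 * π), (p x + t * q x) ^ 2 = (∫ x in (0:ℝ)..(2 * π), p x ^ 2) +
        2 * t * (∫ x in (0:ℝ)..(2 * π), q x * p x) + t ^ 2 * ∫ x in (0:ℝ)..(2 * π), q x * q x := by
    intro p q hp hq
    rw [← intervalIntegral.integral_const_mul, ← intervalIntegral.integral_const_mul,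
      ← intervalIntegral.integral_add, ← intervalIntegral.integral_add]
    · congr 1; ext x; ring
    all_goals exact Continuous.intervalIntegrable (by fun_prop) _ _
  rw [expand φ h φc hc, expand (deriv φ) k φ'c kc, E1, E2] at W
  nlinarith [mul_nonneg (sq_nonneg t) Fh]
end

section
/- Let f : ℝ → ℝ be a positive 2π-periodic C¹ function with ∫₀^{2π} f(θ)cos θ dθ = 0 and ∫₀^{2π} f(θ)sin θ dθ = 0, and let φ : ℝ → ℝ be a 2π-periodic C¹ function with ∫₀^{2π} f(θ)φ(θ) dθ = 0. If ∫₀^{2π} φ(θ)² dθ = ∫₀^{2π} (φ'(θ))² dθ, then there exist real constants a, b such that φ(θ) = a cos θ + b sin θ for all θ. -/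
open Real

lemma wirt_hasSum (u u' : ℝ → ℝ) (hu : ∀ x, HasDerivAt u (u' x) x) (hu' : Continuous u')
    (hb : u (2 * π) = u 0) :
    HasSum (fun n : ℤ => ((n : ℝ) ^ 2 - 1) *
        ‖fourierCoeffOn Real.two_pi_pos (fun x => (u x : ℂ)) n‖ ^ 2)
      ((2 * π)⁻¹ * ((∫ x in (0:ℝ)..(2 * π), u' x ^ 2) - ∫ x in (0:ℝ)..(2 * π), u x ^ 2)) := by
  have hcu : Continuous u := continuous_iff_continuousAt.2 fun x => (hu x).continuousAt
  have hmem : ∀ v : ℝ → ℝ, Continuous v → MeasureTheory.MemLp (fun x => (v x : ℂ)) 2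
      (MeasureTheory.volume.restrict (Set.Ioc 0 (2 * π))) := by
    intro v hv
    have hv' : Continuous (fun x => (v x : ℂ)) := by fun_prop
    obtain ⟨B, hB⟩ := isCompact_Icc.exists_bound_of_continuousOn
      (hv'.continuousOn (s := Set.Icc 0 (2 * π)))
    refine MeasureTheory.MemLp.of_bound hv'.aestronglyMeasurable B ?_
    refine (MeasureTheory.ae_restrict_iff' measurableSet_Ioc).2 (Filter.Eventually.of_forall ?_)
    exact fun x hx => hB x (Set.Ioc_subset_Icc_self hx)
  have h1 := hasSum_sq_fourierCoeffOn Real.two_pi_pos (hmem u hcu)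
  have h2 := hasSum_sq_fourierCoeffOn Real.two_pi_pos (hmem u' hu')
  have h3 := h2.sub h1
  have e : ∀ n : ℤ, ‖fourierCoeffOn Real.two_pi_pos (fun x => (u' x : ℂ)) n‖ ^ 2 =
      (n : ℝ) ^ 2 * ‖fourierCoeffOn Real.two_pi_pos (fun x => (u x : ℂ)) n‖ ^ 2 := by
    intro n
    by_cases hn : n = 0
    · subst hn
      rw [fourierCoeffOn_eq_integral]
      have : ∫ x in (0:ℝ)..(2 * π), u' x = 0 := by
        rw [intervalIntegral.integral_eq_sub_of_hasDerivAt (fun x _ => hu x)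
          (hu'.intervalIntegrable _ _), hb, sub_self]
      simp [intervalIntegral.integral_ofReal, this]
    · have := fourierCoeffOn_of_hasDerivAt Real.two_pi_pos hn
        (f := fun x => (u x : ℂ)) (f' := fun x => (u' x : ℂ))
        (fun x _ => (hu x).ofReal_comp)
        ((by fun_prop : Continuous (fun x => (u' x : ℂ))).intervalIntegrable _ _)
      rw [this, hb]
      have hn' : (n : ℝ) ≠ 0 := by exact_mod_cast hn
      simp only [sub_self, mul_zero, zero_sub, norm_mul, norm_neg, norm_div, norm_one]
      have hp := Real.pi_pos
      simp [abs_of_pos hp]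
      field_simp
      simp
  convert! h3 using 1
  · ext n; rw [e]; ring
  · simp; ring

lemma wirt_nonneg (u u' : ℝ → ℝ) (h0 : ∫ x in (0:ℝ)..(2 * π), u x = 0) (n : ℤ) :
    0 ≤ ((n : ℝ) ^ 2 - 1) *
        ‖fourierCoeffOn Real.two_pi_pos (fun x => (u x : ℂ)) n‖ ^ 2 := by
  by_cases hn : n = 0
  · subst hn
    rw [fourierCoeffOn_eq_integral]
    simp [intervalIntegral.integral_ofReal, h0]
  · have : (1 : ℝ) ≤ (n : ℝ) ^ 2 := by
      have : 0 < n ^ 2 := by positivity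
      exact_mod_cast this
    have := sub_nonneg.2 this
    positivity

lemma wirt_ineq (u u' : ℝ → ℝ) (hu : ∀ x, HasDerivAt u (u' x) x) (hu' : Continuous u')
    (hb : u (2 * π) = u 0) (h0 : ∫ x in (0:ℝ)..(2 * π), u x = 0) :
    (∫ x in (0:ℝ)..(2 * π), u x ^ 2) ≤ ∫ x in (0:ℝ)..(2 * π), u' x ^ 2 := by
  have h := (wirt_hasSum u u' hu hu' hb).nonneg (wirt_nonneg u u' h0)
  have hp : 0 < (2 * π)⁻¹ := inv_pos.2 Real.two_pi_pos
  have := nonneg_of_mul_nonneg_right h hp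
  linarith

lemma wirt_eq (u u' : ℝ → ℝ) (hu : ∀ x, HasDerivAt u (u' x) x) (hu' : Continuous u')
    (hper : Function.Periodic u (2 * π)) (h0 : ∫ x in (0:ℝ)..(2 * π), u x = 0)
    (heq : (∫ x in (0:ℝ)..(2 * π), u x ^ 2) = ∫ x in (0:ℝ)..(2 * π), u' x ^ 2) :
    ∃ a b : ℝ, ∀ θ, u θ = a * Real.cos θ + b * Real.sin θ := by
  have hcu : Continuous u := continuous_iff_continuousAt.2 fun x => (hu x).continuousAt
  have h := wirt_hasSum u u' hu hu' (by simpa using hper 0)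
  rw [heq, sub_self, mul_zero] at h
  have hz := (hasSum_zero_iff_of_nonneg (wirt_nonneg u u' h0)).1 h
  haveI : Fact (0 < 2 * π) := ⟨Real.two_pi_pos⟩
  have hperC : Function.Periodic (fun x => (u x : ℂ)) (2 * π) := fun x => by simp [hper x]
  let F : C(AddCircle (2 * π), ℂ) := ⟨hperC.lift, by
    refine continuous_coinduced_dom.2 ?_
    show Continuous (fun x => (u x : ℂ))
    fun_prop⟩
  have hF : ∀ x : ℝ, F (x : AddCircle (2 * π)) = (u x : ℂ) := fun x => rfl
  have hc : ∀ n, fourierCoeff F n =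
      fourierCoeffOn Real.two_pi_pos (fun x => (u x : ℂ)) n := by
    intro n
    rw [fourierCoeff_eq_intervalIntegral _ _ 0, fourierCoeffOn_eq_integral]
    simp only [fourier_coe_apply, zero_add, sub_zero, hF]
  have hzero : ∀ n : ℤ, n ∉ ({1, -1} : Finset ℤ) → fourierCoeff F n = 0 := by
    intro n hn
    simp only [Finset.mem_insert, Finset.mem_singleton, not_or] at hn
    rw [hc]
    by_cases hn0 : n = 0
    · subst hn0
      rw [fourierCoeffOn_eq_integral]
      simp [intervalIntegral.integral_ofReal, h0]
    have := congrFun hz n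
    simp only [Pi.zero_apply, mul_eq_zero] at this
    rcases this with h | h
    · exfalso
      have : n ^ 2 = 1 := by
        have : (n : ℝ) ^ 2 = 1 := by linarith
        exact_mod_cast this
      rcases sq_eq_one_iff.1 this with h | h <;> tauto
    · simpa using h
  have hs : Summable (fourierCoeff F) := summable_of_ne_finset_zero hzero
  set c := fourierCoeff F 1
  set d := fourierCoeff F (-1)
  refine ⟨c.re + d.re, d.im - c.im, fun θ => ?_⟩
  have h1 := has_pointwise_sum_fourier_series_of_summable hs (θ : AddCircle (2 * π))
  have h2 := hasSum_sum_of_ne_finset_zero (L := SummationFilter.unconditional ℤ) (s := ({1, -1} : Finset ℤ))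
    (f := fun i => fourierCoeff F i • fourier i (θ : AddCircle (2 * π)))
    (fun n hn => by simp [hzero n hn])
  have h3 := h1.unique h2
  rw [Finset.sum_pair (by norm_num), hF] at h3
  have e1 : fourier 1 (θ : AddCircle (2 * π)) = Complex.exp (θ * Complex.I) := by
    rw [fourier_coe_apply]
    congr 1
    have : (π : ℂ) ≠ 0 := by exact_mod_cast Real.pi_ne_zero
    push_cast
    field_simp
  have e2 : fourier (-1) (θ : AddCircle (2 * π)) = Complex.exp ((-θ : ℝ) * Complex.I) := by
    rw [fourier_coe_apply]
    congr 1
    have : (π : ℂ) ≠ 0 := by exact_mod_cast Real.pi_ne_zero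
    push_cast
    field_simp
  rw [e1, e2] at h3
  have h4 := congrArg Complex.re h3
  simp only [Complex.ofReal_re, Complex.add_re, smul_eq_mul, Complex.mul_re,
    Complex.exp_ofReal_mul_I_re, Complex.exp_ofReal_mul_I_im, Real.cos_neg, Real.sin_neg] at h4
  rw [h4]
  ring

/-- Existence of the (nonnegative) support function. -/
lemma support_exists (f : ℝ → ℝ) (hf_pos : ∀ θ, 0 < f θ) (hf : Continuous f)
    (hf_cos : ∫ θ in (0:ℝ)..(2 * π), f θ * Real.cos θ = 0)
    (hf_sin : ∫ θ in (0:ℝ)..(2 * π), f θ * Real.sin θ = 0) :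
    ∃ h h' : ℝ → ℝ, (∀ x, HasDerivAt h (h' x) x) ∧ (∀ x, HasDerivAt h' (f x - h x) x) ∧
      h 0 = 0 ∧ h (2 * π) = 0 ∧ h' 0 = 0 ∧ h' (2 * π) = 0 ∧
      ∀ x ∈ Set.Ioo 0 (2 * π), 0 < h x := by
  have hcc : Continuous fun s => f s * Real.cos s := by fun_prop
  have hcs : Continuous fun s => f s * Real.sin s := by fun_prop
  set C : ℝ → ℝ := fun x => ∫ s in (0:ℝ)..x, f s * Real.cos s with hC
  set S : ℝ → ℝ := fun x => ∫ s in (0:ℝ)..x, f s * Real.sin s with hS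
  have dC : ∀ x, HasDerivAt C (f x * Real.cos x) x := fun x => hcc.integral_hasStrictDerivAt 0 x |>.hasDerivAt
  have dS : ∀ x, HasDerivAt S (f x * Real.sin x) x := fun x => hcs.integral_hasStrictDerivAt 0 x |>.hasDerivAt
  have C0 : C 0 = 0 := by simp [hC]
  have S0 : S 0 = 0 := by simp [hS]
  have C1 : C (2 * π) = 0 := hf_cos
  have S1 : S (2 * π) = 0 := hf_sin
  refine ⟨fun x => Real.sin x * C x - Real.cos x * S x,
    fun x => Real.cos x * C x + Real.sin x * S x, ?_, ?_, by simp [C0, S0], by simp [C1, S1],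
    by simp [C0, S0], by simp [C1, S1], ?_⟩
  · intro x
    convert! ((Real.hasDerivAt_sin x).mul (dC x)).sub ((Real.hasDerivAt_cos x).mul (dS x)) using 1
    ring
  · intro x
    convert! ((Real.hasDerivAt_cos x).mul (dC x)).add ((Real.hasDerivAt_sin x).mul (dS x)) using 1
    linear_combination (-f x) * Real.sin_sq_add_cos_sq x
  · rintro x ⟨hx0, hx1⟩
    have key : ∀ a b : ℝ, ∫ s in a..b, Real.sin (x - s) * f s =
        Real.sin x * (∫ s in a..b, f s * Real.cos s)
          - Real.cos x * (∫ s in a..b, f s * Real.sin s) := by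
      intro a b
      rw [← intervalIntegral.integral_const_mul, ← intervalIntegral.integral_const_mul,
        ← intervalIntegral.integral_sub ((hcc.const_mul _).intervalIntegrable _ _)
          ((hcs.const_mul _).intervalIntegrable _ _)]
      congr 1
      ext s
      rw [Real.sin_sub]
      ring
    rcases le_or_gt x π with hx | hx
    · have : 0 < ∫ s in (0:ℝ)..x, Real.sin (x - s) * f s := by
        refine intervalIntegral.intervalIntegral_pos_of_pos_on
          ((by fun_prop : Continuous fun s => Real.sin (x - s) * f s).intervalIntegrable _ _) ?_ hx0
        rintro s ⟨hs0, hs1⟩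
        exact mul_pos (Real.sin_pos_of_pos_of_lt_pi (by linarith) (by linarith)) (hf_pos s)
      rw [key] at this
      exact this
    · have : 0 < ∫ s in x..(2 * π), -(Real.sin (x - s) * f s) := by
        refine intervalIntegral.intervalIntegral_pos_of_pos_on
          ((by fun_prop : Continuous fun s => -(Real.sin (x - s) * f s)).intervalIntegrable _ _) ?_ hx1
        rintro s ⟨hs0, hs1⟩
        rw [← neg_mul, ← Real.sin_neg]
        exact mul_pos (Real.sin_pos_of_pos_of_lt_pi (by linarith) (by linarith)) (hf_pos s)
      rw [intervalIntegral.integral_neg, key] at this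
      have a1 : C x + ∫ s in x..(2 * π), f s * Real.cos s = 0 := by
        rw [← hf_cos]
        exact intervalIntegral.integral_add_adjacent_intervals
          (hcc.intervalIntegrable _ _) (hcc.intervalIntegrable _ _)
      have a2 : S x + ∫ s in x..(2 * π), f s * Real.sin s = 0 := by
        rw [← hf_sin]
        exact intervalIntegral.integral_add_adjacent_intervals
          (hcs.intervalIntegrable _ _) (hcs.intervalIntegrable _ _)
      rw [eq_neg_of_add_eq_zero_right a1, eq_neg_of_add_eq_zero_right a2] at this
      show 0 < Real.sin x * C x - Real.cos x * S x
      linarith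

theorem poincare_type_equality_case_on_circle
    (f φ : ℝ → ℝ)
    (hf_pos : ∀ θ, 0 < f θ)
    (hf_per : ∀ θ, f (θ + 2 * π) = f θ)
    (hf_C1 : ContDiff ℝ 1 f)
    (hf_cos : ∫ θ in (0:ℝ)..(2 * π), f θ * Real.cos θ = 0)
    (hf_sin : ∫ θ in (0:ℝ)..(2 * π), f θ * Real.sin θ = 0)
    (hφ_per : ∀ θ, φ (θ + 2 * π) = φ θ)
    (hφ_C1 : ContDiff ℝ 1 φ)
    (hfφ : ∫ θ in (0:ℝ)..(2 * π), f θ * φ θ = 0)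
    (heq : (∫ θ in (0:ℝ)..(2 * π), (φ θ) ^ 2) = ∫ θ in (0:ℝ)..(2 * π), (deriv φ θ) ^ 2) :
    ∃ a b : ℝ, ∀ θ, φ θ = a * Real.cos θ + b * Real.sin θ := by
  have cf : Continuous f := hf_C1.continuous
  have cφ : Continuous φ := hφ_C1.continuous
  have cφ' : Continuous (deriv φ) := hφ_C1.continuous_deriv le_rfl
  have dφ : ∀ x, HasDerivAt φ (deriv φ x) x := fun x =>
    (hφ_C1.differentiable one_ne_zero x).hasDerivAt
  obtain ⟨h, h', dh, dh', h0, h1, h0', h1', hpos⟩ :=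
    support_exists f hf_pos cf hf_cos hf_sin
  have ch : Continuous h := continuous_iff_continuousAt.2 fun x => (dh x).continuousAt
  have ch' : Continuous h' := continuous_iff_continuousAt.2 fun x => (dh' x).continuousAt
  have ih : 0 < ∫ x in (0:ℝ)..(2 * π), h x :=
    intervalIntegral.intervalIntegral_pos_of_pos_on (ch.intervalIntegrable _ _) hpos
      Real.two_pi_pos
  have ihf : 0 < ∫ x in (0:ℝ)..(2 * π), h x * f x :=
    intervalIntegral.intervalIntegral_pos_of_pos_on ((ch.mul cf).intervalIntegrable _ _)
      (fun x hx => mul_pos (hpos x hx) (hf_pos x)) Real.two_pi_pos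
  -- integration by parts
  have parts : ∀ v v' : ℝ → ℝ, (∀ x, HasDerivAt v (v' x) x) → Continuous v' →
      ∫ x in (0:ℝ)..(2 * π), (v' x * h' x + v x * (f x - h x)) = 0 := by
    intro v v' dv cv'
    have cv : Continuous v := continuous_iff_continuousAt.2 fun x => (dv x).continuousAt
    rw [intervalIntegral.integral_eq_sub_of_hasDerivAt (fun x _ => (dv x).mul (dh' x))
      ((by fun_prop : Continuous fun x => v' x * h' x + v x * (f x - h x)).intervalIntegrable _ _)]
    simp [h0', h1']
  have p1 := parts φ (deriv φ) dφ cφ'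
  have p2 := parts h h' dh ch'
  set t := (∫ x in (0:ℝ)..(2 * π), φ x) / ∫ x in (0:ℝ)..(2 * π), h x with ht
  have hφb : φ (2 * π) = φ 0 := by simpa using hφ_per 0
  have ii : ∀ v : ℝ → ℝ, Continuous v →
      IntervalIntegrable v MeasureTheory.volume 0 (2 * π) := fun v hv => hv.intervalIntegrable _ _
  have hw := wirt_ineq (fun x => φ x - t * h x) (fun x => deriv φ x - t * h' x)
    (fun x => (dφ x).sub ((dh x).const_mul t)) (by fun_prop) (by simp [h0, h1, hφb])
    (by
      rw [intervalIntegral.integral_sub (ii _ cφ) (ii _ (by fun_prop)),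
        intervalIntegral.integral_const_mul, ht, div_mul_cancel₀ _ ih.ne', sub_self])
  have expand : (∫ x in (0:ℝ)..(2 * π), (deriv φ x - t * h' x) ^ 2)
      - (∫ x in (0:ℝ)..(2 * π), (φ x - t * h x) ^ 2)
      = (∫ x in (0:ℝ)..(2 * π), (deriv φ x) ^ 2) - (∫ x in (0:ℝ)..(2 * π), (φ x) ^ 2)
      - 2 * t * (∫ x in (0:ℝ)..(2 * π), (deriv φ x * h' x + φ x * (f x - h x)))
      + 2 * t * (∫ x in (0:ℝ)..(2 * π), f x * φ x)
      + t ^ 2 * (∫ x in (0:ℝ)..(2 * π), (h' x * h' x + h x * (f x - h x)))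
      - t ^ 2 * (∫ x in (0:ℝ)..(2 * π), h x * f x) := by
    simp only [← intervalIntegral.integral_const_mul]
    rw [← intervalIntegral.integral_sub (ii _ (by fun_prop)) (ii _ (by fun_prop)),
      ← intervalIntegral.integral_sub (ii _ (by fun_prop)) (ii _ (by fun_prop)),
      ← intervalIntegral.integral_sub (ii _ (by fun_prop)) (ii _ (by fun_prop)),
      ← intervalIntegral.integral_add (ii _ (by fun_prop)) (ii _ (by fun_prop)),
      ← intervalIntegral.integral_add (ii _ (by fun_prop)) (ii _ (by fun_prop)),
      ← intervalIntegral.integral_sub (ii _ (by fun_prop)) (ii _ (by fun_prop))]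
    congr 1
    ext x
    ring
  rw [p1, p2, hfφ, heq] at expand
  have t0 : t = 0 := by
    by_contra hne
    have : 0 < t ^ 2 * ∫ x in (0:ℝ)..(2 * π), h x * f x := by positivity
    linarith
  have m0 : ∫ x in (0:ℝ)..(2 * π), φ x = 0 := by
    rcases div_eq_zero_iff.1 (ht.symm.trans t0) with h | h
    · exact h
    · exact absurd h ih.ne'
  exact wirt_eq φ (deriv φ) dφ cφ' hφ_per m0 heq
end

section
/- Let φ : ℝ → ℝ be a 2π-periodic C¹ function, and define L : ℝ → ℝ by L(σ) = ∫₀^{2π} √(1 + σ²φ(θ)² + σ²(φ'(θ))²) / (1 + σ²φ(θ)²) dθ. Then L is twice differentiable at σ = 0, with L(0) = 2π, L'(0) = 0, and L''(0) = ∫₀^{2π} (φ'(θ))² dθ − ∫₀^{2π} φ(θ)² dθ. -/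
open Real

theorem hasDerivAt_integral_of_cont (F F' : ℝ → ℝ → ℝ) (a b x₀ : ℝ)
    (hF : Continuous (Function.uncurry F)) (hF' : Continuous (Function.uncurry F'))
    (h : ∀ t x, HasDerivAt (fun x => F x t) (F' x t) x) :
    HasDerivAt (fun x => ∫ t in a..b, F x t) (∫ t in a..b, F' x₀ t) x₀ := by
  obtain ⟨C, hC⟩ := ((isCompact_closedBall x₀ 1).prod
    (isCompact_uIcc (a := a) (b := b))).exists_bound_of_continuousOn hF'.continuousOn
  have c1 : ∀ x, Continuous (F x) := fun x => hF.comp (by fun_prop : Continuous fun t => (x, t))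
  have c2 : ∀ x, Continuous (F' x) := fun x => hF'.comp (by fun_prop : Continuous fun t => (x, t))
  refine (intervalIntegral.hasDerivAt_integral_of_dominated_loc_of_deriv_le
    (bound := fun _ => C) (Metric.closedBall_mem_nhds x₀ one_pos)
    (Filter.Eventually.of_forall fun x => (c1 x).aestronglyMeasurable)
    ((c1 x₀).intervalIntegrable _ _) (c2 x₀).aestronglyMeasurable ?_
    intervalIntegrable_const ?_).2
  · exact Filter.Eventually.of_forall fun t ht x hx =>
      hC (x, t) ⟨hx, Set.uIoc_subset_uIcc ht⟩
  · exact Filter.Eventually.of_forall fun t _ x _ => h t x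

theorem total_curvature_expansion
    (φ : ℝ → ℝ)
    (hφ_per : ∀ θ, φ (θ + 2 * π) = φ θ)
    (hφ_C1 : ContDiff ℝ 1 φ)
    (L : ℝ → ℝ)
    (hL : ∀ σ, L σ = ∫ θ in (0:ℝ)..(2 * π),
      Real.sqrt (1 + σ ^ 2 * (φ θ) ^ 2 + σ ^ 2 * (deriv φ θ) ^ 2) /
        (1 + σ ^ 2 * (φ θ) ^ 2)) :
    DifferentiableAt ℝ L 0 ∧ DifferentiableAt ℝ (deriv L) 0 ∧
      L 0 = 2 * π ∧ deriv L 0 = 0 ∧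
      deriv (deriv L) 0 =
        (∫ θ in (0:ℝ)..(2 * π), (deriv φ θ) ^ 2) -
          ∫ θ in (0:ℝ)..(2 * π), (φ θ) ^ 2 := by
  have hc : Continuous φ := hφ_C1.continuous
  have hc' : Continuous (deriv φ) := hφ_C1.continuous_deriv le_rfl
  have hS : ∀ s t : ℝ, 0 < 1 + s ^ 2 * (φ t) ^ 2 + s ^ 2 * (deriv φ t) ^ 2 :=
    fun s t => by positivity
  have hD : ∀ s t : ℝ, 1 + s ^ 2 * (φ t) ^ 2 ≠ 0 := fun s t => by positivity
  let G : ℝ → ℝ → ℝ := fun s t =>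
    ((φ t) ^ 2 + (deriv φ t) ^ 2) /
      (Real.sqrt (1 + s ^ 2 * (φ t) ^ 2 + s ^ 2 * (deriv φ t) ^ 2) * (1 + s ^ 2 * (φ t) ^ 2))
    - 2 * (φ t) ^ 2 * Real.sqrt (1 + s ^ 2 * (φ t) ^ 2 + s ^ 2 * (deriv φ t) ^ 2) /
      (1 + s ^ 2 * (φ t) ^ 2) ^ 2
  have hG : Continuous (Function.uncurry G) := by
    refine Continuous.sub (Continuous.div (by fun_prop) (by fun_prop) ?_)
      (Continuous.div (by fun_prop) (by fun_prop) ?_)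
    · exact fun x => mul_ne_zero (Real.sqrt_pos.2 (hS x.1 x.2)).ne' (hD x.1 x.2)
    · exact fun x => pow_ne_zero _ (hD x.1 x.2)
  let K : ℝ → ℝ := fun s => ∫ t in (0:ℝ)..(2 * π), G s t
  have hK : Continuous K :=
    intervalIntegral.continuous_parametric_intervalIntegral_of_continuous' hG _ _
  have hL' : ∀ s, HasDerivAt L (s * K s) s := by
    intro s
    have hLe : L = fun σ => ∫ θ in (0:ℝ)..(2 * π),
      Real.sqrt (1 + σ ^ 2 * (φ θ) ^ 2 + σ ^ 2 * (deriv φ θ) ^ 2) /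
        (1 + σ ^ 2 * (φ θ) ^ 2) := funext hL
    have hsK : s * K s = ∫ t in (0:ℝ)..(2 * π), s * G s t := by
      simp only [K, intervalIntegral.integral_const_mul]
    rw [hLe, hsK]
    refine hasDerivAt_integral_of_cont _ (fun s t => s * G s t) _ _ s ?_ ?_ ?_
    · exact Continuous.div (by fun_prop) (by fun_prop) fun x => hD x.1 x.2
    · exact continuous_fst.mul hG
    · intro t x
      have h2 : HasDerivAt (fun x : ℝ => x ^ 2) (2 * x) x := by simpa using hasDerivAt_pow 2 x
      have hd := (h2.mul_const ((φ t) ^ 2)).const_add 1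
      have hs := (hd.add (h2.mul_const ((deriv φ t) ^ 2))).sqrt (hS x t).ne'
      refine (hs.div hd (hD x t)).congr_deriv ?_
      have e1 := (Real.sqrt_pos.2 (hS x t)).ne'
      have e2 := hD x t
      simp only [G, Pi.add_apply]
      field_simp
  have hd : deriv L = fun s => s * K s := funext fun s => (hL' s).deriv
  have hdd : HasDerivAt (deriv L) (K 0) 0 := by
    rw [hd, hasDerivAt_iff_tendsto_slope_zero]
    refine ((hK.tendsto 0).mono_left nhdsWithin_le_nhds).congr' ?_
    filter_upwards [self_mem_nhdsWithin] with t ht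
    have ht' : t ≠ 0 := ht
    simp [ht']
  refine ⟨(hL' 0).differentiableAt, hdd.differentiableAt, ?_, ?_, ?_⟩
  · simp [hL]
  · simp [hd]
  · rw [hdd.deriv, ← intervalIntegral.integral_sub
      ((by fun_prop : Continuous fun t => (deriv φ t) ^ 2).intervalIntegrable _ _)
      ((by fun_prop : Continuous fun t => (φ t) ^ 2).intervalIntegrable _ _)]
    simp only [K, G]
    congr 1
    ext t
    simp
    ring
end

section
/- Let f : ℝ → ℝ be a positive 2π-periodic C¹ function with ∫₀^{2π} f(θ)cos θ dθ = 0 and ∫₀^{2π} f(θ)sin θ dθ = 0, and let φ : ℝ → ℝ be a 2π-periodic C¹ function with ∫₀^{2π} f(θ)φ(θ) dθ = 0. Then for every σ ∈ ℝ, ∫₀^{2π} √(1 + σ²φ(θ)² + σ²(φ'(θ))²) / (1 + σ²φ(θ)²) dθ ≥ 2π. -/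
open Real

namespace FenchelAux

lemma speed_bound (p q c x y : ℝ) (h : p ^ 2 + q ^ 2 + c ^ 2 = 1) (k : ℝ) (hk : 0 ≤ k) (hk1 : k < 1)
    (w : ℝ) (hw : 0 < w) (hw2 : w ^ 2 = 1 + x ^ 2) :
    (k * ((p + x * c) / w)) ^ 2 < 1 ∧
    |k * (((q + y * c) * w - (p + x * c) * (x * y / w)) / w ^ 2)| /
      √(1 - (k * ((p + x * c) / w)) ^ 2) ≤ √(1 + x ^ 2 + y ^ 2) / (1 + x ^ 2) := by
  have hN : (p + x * c) ^ 2 ≤ w ^ 2 := by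
    rw [hw2]; nlinarith [sq_nonneg (c - x * p), sq_nonneg q, sq_nonneg (x * q)]
  have hg : ((p + x * c) / w) ^ 2 ≤ 1 := by
    rw [div_pow]; exact (div_le_one (by positivity)).2 hN
  have hk2 : k ^ 2 < 1 := by nlinarith
  have h1 : (k * ((p + x * c) / w)) ^ 2 < 1 := by
    rw [mul_pow]; nlinarith [sq_nonneg ((p + x * c) / w), sq_nonneg k]
  refine ⟨h1, ?_⟩
  have hpos : 0 < 1 - (k * ((p + x * c) / w)) ^ 2 := by linarith
  rw [div_le_iff₀ (Real.sqrt_pos.2 hpos)]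
  refine abs_le_of_sq_le_sq ?_ (by positivity)
  rw [mul_pow, mul_pow, Real.sq_sqrt hpos.le, div_pow (√(1 + x ^ 2 + y ^ 2)), Real.sq_sqrt (by positivity), ← hw2]
  set g := (p + x * c) / w with hgd
  have hNg : p + x * c = g * w := by rw [hgd]; field_simp
  set d := ((q + y * c) * w - (p + x * c) * (x * y / w)) / w ^ 2 with hd
  have hdd : d * w ^ 3 = (q + y * c) * w ^ 2 - (p + x * c) * (x * y) := by
    rw [hd]; field_simp
  have key : d ^ 2 ≤ (w ^ 2 + y ^ 2) / (w ^ 2) ^ 2 * (1 - g ^ 2) := by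
    have h6 : (d * w ^ 3) ^ 2 ≤ (w ^ 2 + y ^ 2) * (w ^ 2 - (p + x * c) ^ 2) := by
      rw [hdd]
      have : (w ^ 2 + y ^ 2) * (w ^ 2 - (p + x * c) ^ 2)
          - ((q + y * c) * w ^ 2 - (p + x * c) * (x * y)) ^ 2
          = w ^ 2 * (c - p * x - q * y) ^ 2 := by
        rw [hw2]
        have hp : p ^ 2 = 1 - q ^ 2 - c ^ 2 := by linarith
        linear_combination (-(1 + x ^ 2) * (1 + x ^ 2 + y ^ 2)) * h
      nlinarith [mul_nonneg (sq_nonneg w) (sq_nonneg (c - p * x - q * y))]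
    rw [hNg] at h6
    rw [div_mul_eq_mul_div, le_div_iff₀ (by positivity)]
    have hw2p : 0 < w ^ 2 := by positivity
    refine le_of_mul_le_mul_right ?_ hw2p
    nlinarith [h6]
  have hv : 0 ≤ (w ^ 2 + y ^ 2) / (w ^ 2) ^ 2 := by positivity
  calc k ^ 2 * d ^ 2 ≤ k ^ 2 * ((w ^ 2 + y ^ 2) / (w ^ 2) ^ 2 * (1 - g ^ 2)) := by gcongr
    _ = (w ^ 2 + y ^ 2) / (w ^ 2) ^ 2 * (k ^ 2 - (k * g) ^ 2) := by ring
    _ ≤ _ := by gcongr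

/-- spherical distance bounded by arc length -/
lemma dist_le (ψ ψ' S v : ℝ → ℝ) (hψ : ∀ t, HasDerivAt ψ (ψ' t) t)
    (hv : ∀ t, v t = √(1 + ψ t ^ 2 + ψ' t ^ 2) / (1 + ψ t ^ 2))
    (hS : ∀ t, HasDerivAt S (v t) t) (a b c : ℝ) (h : a ^ 2 + b ^ 2 + c ^ 2 = 1)
    (s t : ℝ) (hst : s ≤ t) :
    |arccos ((a * cos t + b * sin t + ψ t * c) / √(1 + ψ t ^ 2))
      - arccos ((a * cos s + b * sin s + ψ s * c) / √(1 + ψ s ^ 2))| ≤ S t - S s := by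
  set g : ℝ → ℝ := fun t => (a * cos t + b * sin t + ψ t * c) / √(1 + ψ t ^ 2) with hg
  have hk : ∀ k : ℝ, 0 ≤ k → k < 1 → |arccos (k * g t) - arccos (k * g s)| ≤ S t - S s := by
    intro k hk0 hk1
    have hder : ∀ t, ∃ d, HasDerivAt (fun t => arccos (k * g t)) d t ∧ |d| ≤ v t := by
      intro t
      have hw : 0 < √(1 + ψ t ^ 2) := by positivity
      have hw2 : √(1 + ψ t ^ 2) ^ 2 = 1 + ψ t ^ 2 := Real.sq_sqrt (by positivity)
      obtain ⟨h1, h2⟩ := speed_bound (a * cos t + b * sin t) (a * (-sin t) + b * cos t) c (ψ t) (ψ' t)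
        (by nlinarith [Real.sin_sq_add_cos_sq t]) k hk0 hk1 _ hw hw2
      have hN : HasDerivAt (fun t => a * cos t + b * sin t + ψ t * c)
          (a * (-sin t) + b * cos t + ψ' t * c) t :=
        (((Real.hasDerivAt_cos t).const_mul a).add ((Real.hasDerivAt_sin t).const_mul b)).add
          ((hψ t).mul_const c)
      have hW : HasDerivAt (fun t => √(1 + ψ t ^ 2)) (ψ t * ψ' t / √(1 + ψ t ^ 2)) t := by
        have hq : HasDerivAt (fun t => 1 + ψ t ^ 2) (2 * (ψ t * ψ' t)) t := by
          have h3 : HasDerivAt (fun t => 1 + ψ t * ψ t) (ψ' t * ψ t + ψ t * ψ' t) t :=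
            ((hψ t).mul (hψ t)).const_add 1
          have h4 : ψ' t * ψ t + ψ t * ψ' t = 2 * (ψ t * ψ' t) := by ring
          rw [h4] at h3
          simpa only [pow_two] using h3
        have := hq.sqrt (by positivity)
        convert this using 1
        field_simp
      have hgd := (hN.div hW hw.ne').const_mul k
      have hlt := abs_lt.1 ((sq_lt_one_iff_abs_lt_one _).1 h1)
      have := (Real.hasDerivAt_arccos (x := k * g t) hlt.1.ne' hlt.2.ne).comp t hgd
      refine ⟨_, this, ?_⟩
      rw [hv]
      refine le_trans (le_of_eq ?_) h2
      rw [abs_mul, abs_neg, abs_of_nonneg (by positivity : 0 ≤ 1 / √(1 - (k * g t) ^ 2))]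
      rw [one_div, inv_mul_eq_div]
    choose d hd hdv using hder
    have m1 : Monotone (fun t => S t - arccos (k * g t)) :=
      monotone_of_hasDerivAt_nonneg (fun t => (hS t).sub (hd t))
        (fun t => by have := abs_le.1 (hdv t); simp; linarith)
    have m2 : Monotone (fun t => S t + arccos (k * g t)) :=
      monotone_of_hasDerivAt_nonneg (fun t => (hS t).add (hd t))
        (fun t => by have := abs_le.1 (hdv t); simp; linarith)
    have := m1 hst
    have := m2 hst
    simp only at *
    rw [abs_le]; constructor <;> linarith
  have hc : Continuous (fun k : ℝ => |arccos (k * g t) - arccos (k * g s)|) := by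
    have := Real.continuous_arccos
    fun_prop
  have hlim := (hc.tendsto 1).mono_left (nhdsWithin_le_nhds (s := Set.Iio 1))
  simp only [one_mul] at hlim
  refine le_of_tendsto hlim ?_
  filter_upwards [Ioo_mem_nhdsLT (show (0:ℝ) < 1 by norm_num)] with k hk'
  exact hk k hk'.1.le hk'.2

lemma cos_add_pos (x y : ℝ) (hx : -1 ≤ x ∧ x ≤ 1) (hy : -1 ≤ y ∧ y ≤ 1)
    (h : arccos x + arccos y < π) : 0 < x + y := by
  have := Real.cos_lt_cos_of_nonneg_of_le_pi (arccos_nonneg y)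
    (by linarith [arccos_nonneg x] : π - arccos x ≤ π) (by linarith)
  rw [Real.cos_pi_sub, Real.cos_arccos hx.1 hx.2, Real.cos_arccos hy.1 hy.2] at this
  linarith

lemma unit_vec (c s x : ℝ) (h : s ^ 2 + c ^ 2 = 1) :
    (c / √(1 + x ^ 2)) ^ 2 + (s / √(1 + x ^ 2)) ^ 2 + (x / √(1 + x ^ 2)) ^ 2 = 1 := by
  rw [div_pow, div_pow, div_pow, Real.sq_sqrt (by positivity)]
  field_simp
  linarith

lemma inner_bound (a b c x t : ℝ) (h : a ^ 2 + b ^ 2 + c ^ 2 = 1) :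
    -1 ≤ (a * cos t + b * sin t + x * c) / √(1 + x ^ 2) ∧
      (a * cos t + b * sin t + x * c) / √(1 + x ^ 2) ≤ 1 := by
  rw [← abs_le, ← sq_le_one_iff_abs_le_one, div_pow, Real.sq_sqrt (by positivity),
    div_le_one (by positivity)]
  nlinarith [Real.sin_sq_add_cos_sq t, sq_nonneg (a * sin t - b * cos t),
    sq_nonneg (c * cos t - x * a), sq_nonneg (c * sin t - x * b)]

lemma inner_self (c s x : ℝ) (h : s ^ 2 + c ^ 2 = 1) :
    (c / √(1 + x ^ 2) * c + s / √(1 + x ^ 2) * s + x * (x / √(1 + x ^ 2))) / √(1 + x ^ 2) = 1 := by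
  have h0 : 0 < √(1 + x ^ 2) := by positivity
  have h2 : √(1 + x ^ 2) ^ 2 = 1 + x ^ 2 := Real.sq_sqrt (by positivity)
  field_simp
  rw [h2]; linarith

end FenchelAux

open FenchelAux

theorem fenchel_total_curvature_lower_bound
    (f φ : ℝ → ℝ)
    (hf_pos : ∀ θ, 0 < f θ)
    (hf_per : ∀ θ, f (θ + 2 * π) = f θ)
    (hf_C1 : ContDiff ℝ 1 f)
    (hf_cos : ∫ θ in (0:ℝ)..(2 * π), f θ * Real.cos θ = 0)
    (hf_sin : ∫ θ in (0:ℝ)..(2 * π), f θ * Real.sin θ = 0)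
    (hφ_per : ∀ θ, φ (θ + 2 * π) = φ θ)
    (hφ_C1 : ContDiff ℝ 1 φ)
    (hfφ : ∫ θ in (0:ℝ)..(2 * π), f θ * φ θ = 0)
    (σ : ℝ) :
    2 * π ≤ ∫ θ in (0:ℝ)..(2 * π),
      Real.sqrt (1 + σ ^ 2 * (φ θ) ^ 2 + σ ^ 2 * (deriv φ θ) ^ 2) /
        (1 + σ ^ 2 * (φ θ) ^ 2) := by
  by_contra! hL
  have hfc := hf_C1.continuous
  have hφc := hφ_C1.continuous
  have hφ'c : Continuous (deriv φ) := hφ_C1.continuous_deriv le_rfl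
  set v : ℝ → ℝ := fun θ => Real.sqrt (1 + σ ^ 2 * (φ θ) ^ 2 + σ ^ 2 * (deriv φ θ) ^ 2) /
        (1 + σ ^ 2 * (φ θ) ^ 2) with hvdef
  have hvc : Continuous v := by
    apply Continuous.div (by fun_prop) (by fun_prop)
    intro x; positivity
  have hv0 : ∀ t, 0 ≤ v t := fun t => by simp only [hvdef]; positivity
  set ψ : ℝ → ℝ := fun t => σ * φ t with hψdef
  have hψ : ∀ t, HasDerivAt ψ (σ * deriv φ t) t := fun t =>
    ((hφ_C1.differentiable one_ne_zero) t).hasDerivAt.const_mul σ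
  have hv : ∀ t, v t = √(1 + ψ t ^ 2 + (σ * deriv φ t) ^ 2) / (1 + ψ t ^ 2) := fun t => by
    simp only [hvdef, hψdef, mul_pow]
  set S : ℝ → ℝ := fun t => ∫ θ in (0:ℝ)..t, v θ with hSdef
  have hS : ∀ t, HasDerivAt S (v t) t := fun t => hvc.integral_hasStrictDerivAt 0 t |>.hasDerivAt
  have hS0 : S 0 = 0 := by simp [hSdef]
  have hSL : S (2 * π) < 2 * π := hL
  have hSc : Continuous S := continuous_iff_continuousAt.2 fun t => (hS t).continuousAt
  have hSm : Monotone S := monotone_of_hasDerivAt_nonneg hS hv0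
  have h2pi : (0:ℝ) ≤ 2 * π := by positivity
  have hSn : 0 ≤ S (2 * π) := hS0 ▸ hSm h2pi
  obtain ⟨s, ⟨hs0, hs1⟩, hs⟩ := intermediate_value_Icc h2pi hSc.continuousOn
    (show S (2 * π) / 2 ∈ Set.Icc (S 0) (S (2 * π)) by rw [hS0]; constructor <;> linarith)
  set a1 := cos 0 / √(1 + ψ 0 ^ 2)
  set a2 := sin 0 / √(1 + ψ 0 ^ 2)
  set a3 := ψ 0 / √(1 + ψ 0 ^ 2)
  set b1 := cos s / √(1 + ψ s ^ 2)
  set b2 := sin s / √(1 + ψ s ^ 2)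
  set b3 := ψ s / √(1 + ψ s ^ 2)
  have hA : a1 ^ 2 + a2 ^ 2 + a3 ^ 2 = 1 := unit_vec _ _ _ (sin_sq_add_cos_sq 0)
  have hB : b1 ^ 2 + b2 ^ 2 + b3 ^ 2 = 1 := unit_vec _ _ _ (sin_sq_add_cos_sq s)
  have hAA : (a1 * cos 0 + a2 * sin 0 + ψ 0 * a3) / √(1 + ψ 0 ^ 2) = 1 :=
    inner_self _ _ _ (sin_sq_add_cos_sq 0)
  have hBB : (b1 * cos s + b2 * sin s + ψ s * b3) / √(1 + ψ s ^ 2) = 1 :=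
    inner_self _ _ _ (sin_sq_add_cos_sq s)
  have hψ2 : ψ (2 * π) = ψ 0 := by
    have := hφ_per 0
    simp only [zero_add] at this
    simp only [hψdef, this]
  have hAA' : (a1 * cos (2 * π) + a2 * sin (2 * π) + ψ (2 * π) * a3) / √(1 + ψ (2 * π) ^ 2) = 1 := by
    rw [hψ2, cos_two_pi, sin_two_pi]
    rwa [cos_zero, sin_zero] at hAA
  have hdA := dist_le ψ _ S v hψ hv hS a1 a2 a3 hA
  have hdB := dist_le ψ _ S v hψ hv hS b1 b2 b3 hB
  have hpos : ∀ t ∈ Set.Icc 0 (2 * π),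
      0 < (a1 + b1) * cos t + (a2 + b2) * sin t + ψ t * (a3 + b3) := by
    intro t ⟨ht0, ht1⟩
    have hsum : 0 < (a1 * cos t + a2 * sin t + ψ t * a3) / √(1 + ψ t ^ 2)
        + (b1 * cos t + b2 * sin t + ψ t * b3) / √(1 + ψ t ^ 2) := by
      apply cos_add_pos _ _ (inner_bound _ _ _ _ _ hA) (inner_bound _ _ _ _ _ hB)
      rcases le_total t s with h | h
      · have e1 := abs_le.1 (hdA 0 t ht0)
        have e2 := abs_le.1 (hdB t s h)
        rw [hAA, arccos_one] at e1
        rw [hBB, arccos_one] at e2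
        linarith [e1.2, e2.1]
      · have e1 := abs_le.1 (hdA t (2 * π) ht1)
        have e2 := abs_le.1 (hdB s t h)
        rw [hAA', arccos_one] at e1
        rw [hBB, arccos_one] at e2
        linarith [e1.1, e2.2]
    rw [← add_div] at hsum
    have hw : 0 < √(1 + ψ t ^ 2) := by positivity
    have := (div_pos_iff_of_pos_right hw).1 hsum
    linarith
  have hint : 0 < ∫ t in (0:ℝ)..(2 * π),
      f t * ((a1 + b1) * cos t + (a2 + b2) * sin t + ψ t * (a3 + b3)) := by
    apply intervalIntegral.intervalIntegral_pos_of_pos_on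
    · apply Continuous.intervalIntegrable; fun_prop
    · intro t ht
      exact mul_pos (hf_pos t) (hpos t ⟨ht.1.le, ht.2.le⟩)
    · positivity
  have hzero : ∫ t in (0:ℝ)..(2 * π),
      f t * ((a1 + b1) * cos t + (a2 + b2) * sin t + ψ t * (a3 + b3)) = 0 := by
    have : ∀ t, f t * ((a1 + b1) * cos t + (a2 + b2) * sin t + ψ t * (a3 + b3))
        = (a1 + b1) * (f t * cos t) + (a2 + b2) * (f t * sin t)
          + ((a3 + b3) * σ) * (f t * φ t) := fun t => by simp only [hψdef]; ring
    simp only [this]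
    rw [intervalIntegral.integral_add, intervalIntegral.integral_add,
      intervalIntegral.integral_const_mul, intervalIntegral.integral_const_mul,
      intervalIntegral.integral_const_mul, hf_cos, hf_sin, hfφ]
    · simp
    all_goals apply Continuous.intervalIntegrable; fun_prop
  linarith
end

section
/- Let f : ℝ → ℝ be a positive 2π-periodic C¹ function with ∫₀^{2π} f(θ)cos θ dθ = 0 and ∫₀^{2π} f(θ)sin θ dθ = 0. Define its Fourier coefficients a₀ = (1/π)∫₀^{2π} f(θ) dθ, and for n ≥ 2, aₙ = (1/π)∫₀^{2π} f(θ)cos(nθ) dθ, bₙ = (1/π)∫₀^{2π} f(θ)sin(nθ) dθ. Then ∑_{n=2}^{∞} (aₙ² + bₙ²)/(n² − 1) ≤ a₀²/2. -/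
open Real

lemma aux_parseval (F : ℝ → ℝ) (hF : Continuous F) :
    HasSum (fun n : ℤ => ((∫ x in (0:ℝ)..(2 * π), F x * Real.cos (n * x)) ^ 2 +
      (∫ x in (0:ℝ)..(2 * π), F x * Real.sin (n * x)) ^ 2))
      (2 * π * ∫ x in (0:ℝ)..(2 * π), F x ^ 2) := by
  have hp : (0:ℝ) < 2 * π := by positivity
  have hL : MeasureTheory.MemLp (fun x => (F x : ℂ)) 2
      (MeasureTheory.volume.restrict (Set.Ioc 0 (2 * π))) := by
    have hc : Continuous (fun x => (F x : ℂ)) := by fun_prop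
    obtain ⟨C, hC⟩ := (isCompact_Icc (a := (0:ℝ)) (b := 2 * π)).exists_bound_of_continuousOn
      hc.continuousOn
    refine MeasureTheory.MemLp.of_bound hc.aestronglyMeasurable C ?_
    refine (MeasureTheory.ae_restrict_iff' measurableSet_Ioc).2 (Filter.Eventually.of_forall ?_)
    intro x hx
    exact hC x (Set.Ioc_subset_Icc_self hx)
  have key := (hasSum_sq_fourierCoeffOn hp hL).mul_left ((2 * π) ^ 2)
  convert! key using 1
  · funext n
    rw [fourierCoeffOn_eq_integral]
    have e : ∫ x in (0:ℝ)..(2 * π), fourier (-n) (x : AddCircle (2 * π - 0)) • (F x : ℂ)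
        = ((∫ x in (0:ℝ)..(2 * π), F x * Real.cos (n * x) : ℝ) : ℂ)
          - ((∫ x in (0:ℝ)..(2 * π), F x * Real.sin (n * x) : ℝ) : ℂ) * Complex.I := by
      rw [← intervalIntegral.integral_ofReal, ← intervalIntegral.integral_ofReal,
        ← intervalIntegral.integral_mul_const, ← intervalIntegral.integral_sub]
      · apply intervalIntegral.integral_congr
        intro x _
        simp only [fourier_coe_apply, smul_eq_mul]
        have : 2 * (π:ℂ) * Complex.I * ((-n : ℤ) : ℂ) * (x:ℂ) / ((2 * π - 0 : ℝ) : ℂ)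
            = ((-(n * x) : ℝ) : ℂ) * Complex.I := by
          have : (π:ℂ) ≠ 0 := by exact_mod_cast Real.pi_ne_zero
          push_cast
          field_simp
          ring
        rw [this, Complex.exp_mul_I, ← Complex.ofReal_cos, ← Complex.ofReal_sin, Real.cos_neg,
          Real.sin_neg]
        push_cast
        ring
      · apply Continuous.intervalIntegrable; fun_prop
      · apply Continuous.intervalIntegrable; fun_prop
    rw [e, norm_smul, mul_pow ‖_‖, ← Complex.normSq_eq_norm_sq, Complex.normSq_apply]
    simp
    field_simp
    rw [sq_abs]
    ring
  · simp
    field_simp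

theorem fourier_coefficient_inequality
    (f : ℝ → ℝ)
    (hf_pos : ∀ θ, 0 < f θ)
    (hf_per : ∀ θ, f (θ + 2 * π) = f θ)
    (hf_C1 : ContDiff ℝ 1 f)
    (hf_cos : ∫ θ in (0:ℝ)..(2 * π), f θ * Real.cos θ = 0)
    (hf_sin : ∫ θ in (0:ℝ)..(2 * π), f θ * Real.sin θ = 0)
    (a₀ : ℝ) (a b : ℕ → ℝ)
    (ha₀ : a₀ = (1 / π) * ∫ θ in (0:ℝ)..(2 * π), f θ)
    (ha : ∀ n, 2 ≤ n → a n = (1 / π) * ∫ θ in (0:ℝ)..(2 * π), f θ * Real.cos (n * θ))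
    (hb : ∀ n, 2 ≤ n → b n = (1 / π) * ∫ θ in (0:ℝ)..(2 * π), f θ * Real.sin (n * θ)) :
    (∑' n : ℕ, ((a (n + 2)) ^ 2 + (b (n + 2)) ^ 2) / (((n + 2 : ℕ) : ℝ) ^ 2 - 1))
      ≤ a₀ ^ 2 / 2 := by
  have hp : (0:ℝ) < 2 * π := by positivity
  have hf : Continuous f := hf_C1.continuous
  have hfc : Continuous fun t => f t * Real.cos t := by fun_prop
  have hfs : Continuous fun t => f t * Real.sin t := by fun_prop
  set C : ℝ → ℝ := fun x => ∫ t in (0:ℝ)..x, f t * Real.cos t with hC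
  set S : ℝ → ℝ := fun x => ∫ t in (0:ℝ)..x, f t * Real.sin t with hS
  have dC : ∀ x, HasDerivAt C (f x * Real.cos x) x := fun x =>
    intervalIntegral.integral_hasDerivAt_right (hfc.intervalIntegrable _ _)
      (hfc.stronglyMeasurableAtFilter _ _) hfc.continuousAt
  have dS : ∀ x, HasDerivAt S (f x * Real.sin x) x := fun x =>
    intervalIntegral.integral_hasDerivAt_right (hfs.intervalIntegrable _ _)
      (hfs.stronglyMeasurableAtFilter _ _) hfs.continuousAt
  have C0 : C 0 = 0 := by simp [hC]
  have S0 : S 0 = 0 := by simp [hS]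
  have C1 : C (2 * π) = 0 := hf_cos
  have S1 : S (2 * π) = 0 := hf_sin
  set h : ℝ → ℝ := fun x => Real.sin x * C x - Real.cos x * S x with hh
  set k : ℝ → ℝ := fun x => Real.cos x * C x + Real.sin x * S x with hk
  have dh : ∀ x, HasDerivAt h (k x) x := by
    intro x
    convert! ((Real.hasDerivAt_sin x).mul (dC x)).sub ((Real.hasDerivAt_cos x).mul (dS x)) using 1
    simp only [hk]; ring
  have dk : ∀ x, HasDerivAt k (f x - h x) x := by
    intro x
    convert! ((Real.hasDerivAt_cos x).mul (dC x)).add ((Real.hasDerivAt_sin x).mul (dS x)) using 1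
    simp only [hh]
    linear_combination (-(f x)) * Real.sin_sq_add_cos_sq x
  have ch : Continuous h := continuous_iff_continuousAt.2 fun x => (dh x).continuousAt
  have hsub : ∀ θ u v : ℝ, Real.sin θ * (∫ t in u..v, f t * Real.cos t)
      - Real.cos θ * (∫ t in u..v, f t * Real.sin t) = ∫ t in u..v, f t * Real.sin (θ - t) := by
    intro θ u v
    rw [← intervalIntegral.integral_const_mul, ← intervalIntegral.integral_const_mul,
      ← intervalIntegral.integral_sub]
    · apply intervalIntegral.integral_congr
      intro t _
      simp only [Real.sin_sub]; ring
    · apply Continuous.intervalIntegrable; fun_prop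
    · apply Continuous.intervalIntegrable; fun_prop
  have hpos : ∀ x ∈ Set.Icc 0 (2 * π), 0 ≤ h x := by
    intro x hx
    rcases le_total x π with hxp | hxp
    · have : h x = ∫ t in (0:ℝ)..x, f t * Real.sin (x - t) := hsub x 0 x
      rw [this]
      apply intervalIntegral.integral_nonneg hx.1
      intro t ht
      exact mul_nonneg (hf_pos t).le
        (Real.sin_nonneg_of_nonneg_of_le_pi (by linarith [ht.2]) (by linarith [ht.1]))
    · have e1 : C x = - ∫ t in x..(2 * π), f t * Real.cos t := by
        have := intervalIntegral.integral_add_adjacent_intervals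
          (hfc.intervalIntegrable 0 x (μ := MeasureTheory.volume)) (hfc.intervalIntegrable x (2 * π))
        simp only [hC]; linarith
      have e2 : S x = - ∫ t in x..(2 * π), f t * Real.sin t := by
        have := intervalIntegral.integral_add_adjacent_intervals
          (hfs.intervalIntegrable 0 x (μ := MeasureTheory.volume)) (hfs.intervalIntegrable x (2 * π))
        simp only [hS]; linarith
      have : h x = ∫ t in x..(2 * π), f t * Real.sin (t - x) := by
        have h1 := hsub x x (2 * π)
        have h2 : ∫ t in x..(2 * π), f t * Real.sin (t - x)
            = - ∫ t in x..(2 * π), f t * Real.sin (x - t) := by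
          rw [← intervalIntegral.integral_neg]
          apply intervalIntegral.integral_congr
          intro t _
          simp only []
          rw [← neg_sub x t, Real.sin_neg]; ring
        rw [h2, ← h1]
        simp only [hh, e1, e2]; ring
      rw [this]
      apply intervalIntegral.integral_nonneg hx.2
      intro t ht
      exact mul_nonneg (hf_pos t).le
        (Real.sin_nonneg_of_nonneg_of_le_pi (by linarith [ht.1]) (by linarith [ht.2]))
  have hI : 0 ≤ ∫ x in (0:ℝ)..(2 * π), h x * f x :=
    intervalIntegral.integral_nonneg hp.le fun x hx => mul_nonneg (hpos x hx) (hf_pos x).le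
  have h0 : h 0 = 0 := by simp [hh, C0, S0]
  have h1 : h (2 * π) = 0 := by simp [hh, C1, S1]
  have k0 : k 0 = 0 := by simp [hk, C0, S0]
  have k1 : k (2 * π) = 0 := by simp [hk, C1, S1]
  -- Fourier coefficients
  set fc : ℤ → ℝ := fun n => ∫ x in (0:ℝ)..(2 * π), f x * Real.cos (n * x) with hfc'
  set fs : ℤ → ℝ := fun n => ∫ x in (0:ℝ)..(2 * π), f x * Real.sin (n * x) with hfs'
  set gc : ℤ → ℝ := fun n => ∫ x in (0:ℝ)..(2 * π), h x * Real.cos (n * x) with hgc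
  set gs : ℤ → ℝ := fun n => ∫ x in (0:ℝ)..(2 * π), h x * Real.sin (n * x) with hgs
  have dcos : ∀ (n : ℤ) (x : ℝ), HasDerivAt (fun x : ℝ => Real.cos (n * x))
      (-(Real.sin (n * x)) * n) x := fun n x => by
    simpa using ((hasDerivAt_id x).const_mul (n:ℝ)).cos
  have dsin : ∀ (n : ℤ) (x : ℝ), HasDerivAt (fun x : ℝ => Real.sin (n * x))
      (Real.cos (n * x) * n) x := fun n x => by
    simpa using ((hasDerivAt_id x).const_mul (n:ℝ)).sin
  have rc : ∀ n : ℤ, fc n = (1 - (n:ℝ) ^ 2) * gc n := by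
    intro n
    have := intervalIntegral.integral_eq_sub_of_hasDerivAt (a := 0) (b := 2 * π)
      (f := fun x => k x * Real.cos (n * x) + n * (h x * Real.sin (n * x)))
      (f' := fun x => f x * Real.cos (n * x) - (1 - (n:ℝ) ^ 2) * (h x * Real.cos (n * x)))
      (fun x _ => by
        convert! ((dk x).mul (dcos n x)).add (((dh x).mul (dsin n x)).const_mul (n:ℝ)) using 1
        ring) (by apply Continuous.intervalIntegrable; fun_prop)
    rw [intervalIntegral.integral_sub (by apply Continuous.intervalIntegrable; fun_prop)
      (by apply Continuous.intervalIntegrable; fun_prop),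
      intervalIntegral.integral_const_mul] at this
    simp only [h0, h1, k0, k1] at this
    simp only [hfc', hgc]; linarith
  have rs : ∀ n : ℤ, fs n = (1 - (n:ℝ) ^ 2) * gs n := by
    intro n
    have := intervalIntegral.integral_eq_sub_of_hasDerivAt (a := 0) (b := 2 * π)
      (f := fun x => k x * Real.sin (n * x) - n * (h x * Real.cos (n * x)))
      (f' := fun x => f x * Real.sin (n * x) - (1 - (n:ℝ) ^ 2) * (h x * Real.sin (n * x)))
      (fun x _ => by
        convert! ((dk x).mul (dsin n x)).sub (((dh x).mul (dcos n x)).const_mul (n:ℝ)) using 1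
        ring) (by apply Continuous.intervalIntegrable; fun_prop)
    rw [intervalIntegral.integral_sub (by apply Continuous.intervalIntegrable; fun_prop)
      (by apply Continuous.intervalIntegrable; fun_prop),
      intervalIntegral.integral_const_mul] at this
    simp only [h0, h1, k0, k1] at this
    simp only [hfs', hgs]; linarith
  have P : HasSum (fun n : ℤ => gc n * fc n + gs n * fs n)
      (2 * π * ∫ x in (0:ℝ)..(2 * π), h x * f x) := by
    have p1 := aux_parseval (fun x => h x + f x) (by fun_prop)
    have p2 := aux_parseval (fun x => h x - f x) (by fun_prop)
    convert! (p1.sub p2).mul_left (1 / 4) using 1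
    · funext n
      simp only [add_mul, sub_mul]
      rw [intervalIntegral.integral_add, intervalIntegral.integral_add,
        intervalIntegral.integral_sub, intervalIntegral.integral_sub]
      · simp only [hfc', hfs', hgc, hgs]; ring
      all_goals (apply Continuous.intervalIntegrable; fun_prop)
    · rw [← mul_sub, ← intervalIntegral.integral_sub]
      · have : ∫ x in (0:ℝ)..(2 * π), ((h x + f x) ^ 2 - (h x - f x) ^ 2)
            = 4 * ∫ x in (0:ℝ)..(2 * π), h x * f x := by
          rw [← intervalIntegral.integral_const_mul]
          apply intervalIntegral.integral_congr
          intro x _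
          simp only []; ring
        rw [this]; ring
      all_goals (apply Continuous.intervalIntegrable; fun_prop)
  have Q := (hasSum_nat_add_iff' 2).2 P.nat_add_neg
  have ec : ∀ n : ℤ, fc (-n) = fc n ∧ gc (-n) = gc n ∧ fs (-n) = - fs n ∧ gs (-n) = - gs n := by
    intro n
    simp [hfc', hgc, hfs', hgs]
  have f1 : fc 1 = 0 := by simpa [hfc'] using hf_cos
  have f2 : fs 1 = 0 := by simpa [hfs'] using hf_sin
  have z1 : fc 0 = π * a₀ := by
    rw [ha₀]; simp [hfc']
  have z2 : gc 0 = π * a₀ := by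
    have := rc 0; simp at this; rw [← this, z1]
  have z3 : fs 0 = 0 := by simp [hfs']
  have Q2 := Q.mul_left (-1 / (2 * π ^ 2))
  have R : HasSum (fun n : ℕ => ((a (n + 2)) ^ 2 + (b (n + 2)) ^ 2) / (((n + 2 : ℕ) : ℝ) ^ 2 - 1))
      (a₀ ^ 2 / 2 - (∫ x in (0:ℝ)..(2 * π), h x * f x) / π) := by
    convert! Q2 using 1
    · funext n
      obtain ⟨i1, i2, i3, i4⟩ := ec ((n + 2 : ℕ) : ℤ)
      rw [i1, i2, i3, i4]
      have ea : a (n + 2) = 1 / π * fc ((n + 2 : ℕ) : ℤ) := by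
        rw [ha _ (by omega)]; simp [hfc']
      have eb : b (n + 2) = 1 / π * fs ((n + 2 : ℕ) : ℤ) := by
        rw [hb _ (by omega)]; simp [hfs']
      rw [ea, eb, rc, rs]
      have : (((n + 2 : ℕ) : ℝ) ^ 2 - 1) ≠ 0 := by
        push_cast
        have : (0:ℝ) ≤ n := by positivity
        nlinarith
      simp only [Int.cast_natCast]
      generalize ((n + 2 : ℕ) : ℝ) = m at *
      have hpi := Real.pi_ne_zero
      field_simp
      ring
    · obtain ⟨i1, i2, i3, i4⟩ := ec 1
      simp only [Finset.sum_range_succ, Finset.sum_range_zero, Nat.cast_zero, Nat.cast_one, neg_zero,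
        i1, i2, i3, i4, f1, f2, z1, z2, z3]
      have hpi := Real.pi_ne_zero
      field_simp
      ring
  rw [R.tsum_eq]
  have : 0 ≤ (∫ x in (0:ℝ)..(2 * π), h x * f x) / π := div_nonneg hI Real.pi_pos.le
  linarith
end

section
/- Let f : ℝ → ℝ be a positive 2π-periodic C¹ function with ∫₀^{2π} f(θ)cos θ dθ = 0 and ∫₀^{2π} f(θ)sin θ dθ = 0. Define its Fourier coefficients a₀ = (1/π)∫₀^{2π} f(θ) dθ, and for n ≥ 2, aₙ = (1/π)∫₀^{2π} f(θ)cos(nθ) dθ, bₙ = (1/π)∫₀^{2π} f(θ)sin(nθ) dθ. Then the strict inequality ∑_{n=2}^{∞} (aₙ² + bₙ²)/(n² − 1) < a₀²/2 holds. -/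
open Real

lemma aux_exp_int (m : ℤ) : Complex.exp (-(Complex.I * m * ((2 * π : ℝ) : ℂ))) = 1 := by
  rw [Complex.exp_eq_one_iff]
  exact ⟨-m, by push_cast; ring⟩

lemma aux_J (m : ℤ) : ∫ x in (0:ℝ)..(2 * π), ((π : ℂ) - x) * Complex.exp (-(Complex.I * m * x))
    = -2 * π * Complex.I / m := by
  by_cases hm : m = 0
  · subst hm
    have : ∫ x in (0:ℝ)..(2 * π), ((π - x : ℝ) : ℂ) = 0 := by
      rw [intervalIntegral.integral_ofReal, intervalIntegral.integral_sub (by simp) (by simp)]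
      simp only [intervalIntegral.integral_const, integral_id]
      norm_num
      norm_cast
      ring_nf
    simpa using this
  · have hm' : (m : ℂ) ≠ 0 := by exact_mod_cast hm
    have hd : ∀ x : ℝ, HasDerivAt (fun x : ℝ => ((π : ℂ) - x) * Complex.exp (-(Complex.I * m * x)) * (Complex.I / m)
        - Complex.exp (-(Complex.I * m * x)) / (m : ℂ) ^ 2)
        (((π : ℂ) - x) * Complex.exp (-(Complex.I * m * x))) x := by
      intro x
      have h1 : HasDerivAt (fun x : ℝ => (x : ℂ)) 1 x := Complex.ofRealCLM.hasDerivAt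
      have h2 : HasDerivAt (fun x : ℝ => Complex.exp (-(Complex.I * m * x)))
          (Complex.exp (-(Complex.I * m * x)) * (-(Complex.I * m * 1))) x :=
        ((h1.const_mul _).neg).cexp
      have h3 := (((h1.const_sub (π : ℂ)).mul h2).mul_const (Complex.I / m)).sub
        (h2.div_const ((m : ℂ) ^ 2))
      refine h3.congr_deriv ?_
      field_simp
      ring_nf
      simp only [Complex.I_sq]
      ring
    rw [intervalIntegral.integral_eq_sub_of_hasDerivAt (fun x _ => hd x)
      (Continuous.intervalIntegrable (by fun_prop) _ _)]
    rw [aux_exp_int]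
    simp
    ring

lemma aux_coeff (n : ℤ) : ∫ x in (0:ℝ)..(2 * π), Complex.exp (-(Complex.I * n * x)) *
      (((π - x) * Real.sin x : ℝ) : ℂ)
    = -π * (1 / ((n : ℂ) - 1) - 1 / ((n : ℂ) + 1)) := by
  have h : ∀ x : ℝ, Complex.exp (-(Complex.I * n * x)) * (((π - x) * Real.sin x : ℝ) : ℂ)
      = (((π : ℂ) - x) * Complex.exp (-(Complex.I * ((n - 1 : ℤ) : ℂ) * x))) * (-Complex.I / 2)
        - (((π : ℂ) - x) * Complex.exp (-(Complex.I * ((n + 1 : ℤ) : ℂ) * x))) * (-Complex.I / 2) := by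
    intro x
    push_cast
    rw [Complex.sin]
    have e1 : Complex.exp (-(Complex.I * (n - 1) * x)) =
      Complex.exp (-(Complex.I * n * x)) * Complex.exp (x * Complex.I) := by
      rw [← Complex.exp_add]; congr 1; ring
    have e2 : Complex.exp (-(Complex.I * (n + 1) * x)) =
      Complex.exp (-(Complex.I * n * x)) * Complex.exp (-x * Complex.I) := by
      rw [← Complex.exp_add]; congr 1; ring
    rw [e1, e2]
    ring
  simp_rw [h]
  rw [intervalIntegral.integral_sub (Continuous.intervalIntegrable (by fun_prop) _ _)
    (Continuous.intervalIntegrable (by fun_prop) _ _), intervalIntegral.integral_mul_const,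
    intervalIntegral.integral_mul_const, aux_J, aux_J]
  push_cast
  ring_nf
  simp only [Complex.I_sq]
  ring

lemma aux_summ : Summable (fun n : ℤ => -(1 / 2 : ℂ) * (1 / ((n : ℂ) - 1) - 1 / ((n : ℂ) + 1))) := by
  have h := ((Real.summable_one_div_int_pow (p := 2)).2 (by norm_num)).mul_left 2
  refine Summable.of_norm_bounded_eventually h ?_
  have : ({0, 1, -1} : Set ℤ).Finite := by simp
  filter_upwards [this.compl_mem_cofinite] with n hn
  simp only [Set.mem_compl_iff, Set.mem_insert_iff, Set.mem_singleton_iff, not_or] at hn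
  obtain ⟨h0, h1, h2⟩ := hn
  have hn4 : (4 : ℤ) ≤ n ^ 2 := by
    rcases lt_or_ge n 0 with h | h
    · nlinarith [show n ≤ -2 by omega]
    · nlinarith [show 2 ≤ n by omega]
  have hn4' : (4 : ℝ) ≤ (n : ℝ) ^ 2 := by exact_mod_cast hn4
  have e : -(1 / 2 : ℂ) * (1 / ((n : ℂ) - 1) - 1 / ((n : ℂ) + 1)) = ((-(1 / ((n : ℝ) ^ 2 - 1)) : ℝ) : ℂ) := by
    have a1 : (n : ℂ) - 1 ≠ 0 := by exact_mod_cast sub_ne_zero.2 h1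
    have a2 : (n : ℂ) + 1 ≠ 0 := by
      have : n + 1 ≠ 0 := by omega
      exact_mod_cast this
    have a3 : (n : ℂ) ^ 2 - 1 ≠ 0 := by
      rw [show (n : ℂ) ^ 2 - 1 = (n - 1) * (n + 1) by ring]; exact mul_ne_zero a1 a2
    push_cast
    rw [show (n : ℂ) ^ 2 - 1 = (n - 1) * (n + 1) by ring]
    field_simp
    ring
  rw [e, Complex.norm_real, norm_neg, Real.norm_of_nonneg (by apply one_div_nonneg.2; linarith)]
  rw [div_le_iff₀ (by linarith)]
  rw [mul_one_div, div_mul_eq_mul_div, le_div_iff₀ (by linarith)]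
  linarith

lemma aux_K (x : ℝ) (h0 : 0 ≤ x) (h1 : x < 2 * π) :
    HasSum (fun n : ℕ => Real.cos (((n + 2 : ℕ) : ℝ) * x) / (((n + 2 : ℕ) : ℝ) ^ 2 - 1))
      (1 / 2 + Real.cos x / 4 - (π - x) * Real.sin x / 2) := by
  have : Fact (0 < 2 * π) := ⟨by positivity⟩
  let g : ℝ → ℂ := fun x => (((π - x) * Real.sin x : ℝ) : ℂ)
  have hg : Continuous g := by fun_prop
  let G : C(AddCircle (2 * π), ℂ) := ⟨AddCircle.liftIco (2 * π) 0 g,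
    AddCircle.liftIco_zero_continuous (by simp [g]) hg.continuousOn⟩
  have hc : ∀ n : ℤ, fourierCoeff G n = -(1 / 2 : ℂ) * (1 / ((n : ℂ) - 1) - 1 / ((n : ℂ) + 1)) := by
    intro n
    change fourierCoeff (AddCircle.liftIco (2 * π) 0 g) n = _
    rw [fourierCoeff_liftIco_eq, fourierCoeffOn_eq_integral]
    have : ∀ x : ℝ, fourier (-n) (x : AddCircle (0 + 2 * π - 0)) • g x =
        Complex.exp (-(Complex.I * n * x)) * (((π - x) * Real.sin x : ℝ) : ℂ) := by
      intro x
      rw [fourier_coe_apply, smul_eq_mul]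
      congr 2
      push_cast
      have : (π : ℂ) ≠ 0 := by exact_mod_cast Real.pi_ne_zero
      field_simp
      ring
    simp_rw [this]
    rw [zero_add, aux_coeff]
    have : (π : ℂ) ≠ 0 := by exact_mod_cast Real.pi_ne_zero
    rw [Complex.real_smul]
    push_cast
    field_simp
    ring
  have hs : Summable (fourierCoeff G) := by
    rw [show fourierCoeff G = _ from funext hc]
    exact aux_summ
  have H := has_pointwise_sum_fourier_series_of_summable hs (x : AddCircle (2 * π))
  have hGx : G (x : AddCircle (2 * π)) = g x := by
    change AddCircle.liftIco (2 * π) 0 g (x : AddCircle (2 * π)) = g x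
    exact AddCircle.liftIco_zero_coe_apply ⟨h0, h1⟩
  rw [hGx] at H
  have H2 := H.nat_add_neg
  have H3 := Complex.hasSum_re H2
  have H4 := (hasSum_nat_add_iff' 2).2 H3
  have key : ∀ n : ℕ, (fourierCoeff G (n : ℤ) • fourier (n : ℤ) (x : AddCircle (2 * π)) +
      fourierCoeff G (-(n : ℤ)) • fourier (-(n : ℤ)) (x : AddCircle (2 * π))).re
      = -(1 / ((n : ℝ) - 1) - 1 / ((n : ℝ) + 1)) * Real.cos (n * x) := by
    intro n
    have e : fourierCoeff G (-(n : ℤ)) = fourierCoeff G (n : ℤ) := by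
      rw [hc, hc]
      push_cast
      rw [show (-(n : ℂ) - 1) = -(n + 1) by ring, show (-(n : ℂ) + 1) = -(n - 1) by ring]
      simp only [one_div, inv_neg]
      ring
    rw [e, hc, fourier_coe_apply, fourier_coe_apply]
    have hp : (π : ℂ) ≠ 0 := by exact_mod_cast Real.pi_ne_zero
    have e1 : 2 * (π : ℂ) * Complex.I * ((n : ℤ) : ℂ) * x / ((2 * π : ℝ) : ℂ) = ((n * x : ℝ) : ℂ) * Complex.I := by
      push_cast; field_simp
    have e2 : 2 * (π : ℂ) * Complex.I * ((-(n : ℤ) : ℤ) : ℂ) * x / ((2 * π : ℝ) : ℂ) = -((n * x : ℝ) : ℂ) * Complex.I := by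
      push_cast; field_simp
    rw [e1, e2, smul_eq_mul, smul_eq_mul, ← mul_add]
    have e3 : Complex.exp (((n * x : ℝ) : ℂ) * Complex.I) + Complex.exp (-((n * x : ℝ) : ℂ) * Complex.I)
       = ((2 * Real.cos (n * x) : ℝ) : ℂ) := by
      rw [← Complex.two_cos]
      push_cast
      rfl
    rw [e3]
    have e4 : -(1 / 2 : ℂ) * (1 / (((n : ℤ) : ℂ) - 1) - 1 / (((n : ℤ) : ℂ) + 1)) =
      ((-(1 / 2 : ℝ) * (1 / ((n : ℝ) - 1) - 1 / ((n : ℝ) + 1)) : ℝ) : ℂ) := by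
      push_cast; ring
    rw [e4, ← Complex.ofReal_mul, Complex.ofReal_re]
    ring
  simp only [key] at H4
  have H5 := H4.mul_left (-(1 / 2))
  convert! H5 using 1
  · funext n
    have : (n : ℝ) + 2 - 1 ≠ 0 := by have : (0:ℝ) ≤ n := n.cast_nonneg; intro h; linarith
    have : (n : ℝ) + 2 + 1 ≠ 0 := by positivity
    push_cast
    rw [show ((n : ℝ) + 2) ^ 2 - 1 = (n + 2 - 1) * (n + 2 + 1) by ring]
    field_simp
    ring
  · simp [Finset.sum_range_succ, hc, g]
    norm_num
    rw [← Complex.ofReal_sin, Complex.ofReal_re]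
    ring

lemma aux_exch (F : ℕ → ℝ → ℝ) (k f : ℝ → ℝ) (c : ℕ → ℝ) (hf : Continuous f)
    (hF : ∀ n, Continuous (F n)) (hc : Summable c) (hb : ∀ n t, |F n t| ≤ c n)
    (hs : ∀ t, 0 < t → t ≤ 2 * π → HasSum (fun n => F n t) (k t)) :
    HasSum (fun n => ∫ t in (0:ℝ)..(2 * π), f t * F n t) (∫ t in (0:ℝ)..(2 * π), f t * k t) := by
  apply intervalIntegral.hasSum_integral_of_dominated_convergence (fun n t => |f t| * c n)
  · intro n
    exact (hf.mul (hF n)).aestronglyMeasurable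
  · intro n
    refine Filter.Eventually.of_forall fun t _ => ?_
    rw [Real.norm_eq_abs, abs_mul]
    exact mul_le_mul_of_nonneg_left (hb n t) (abs_nonneg _)
  · exact Filter.Eventually.of_forall fun t _ => hc.mul_left _
  · simp_rw [tsum_mul_left]
    exact Continuous.intervalIntegrable (by fun_prop) _ _
  · refine Filter.Eventually.of_forall fun t ht => ?_
    rw [Set.uIoc_of_le (by positivity)] at ht
    exact (hs t ht.1 ht.2).mul_left _

lemma aux_W_nonneg (d : ℝ) (hd : |d| ≤ 2 * π) : 0 ≤ (π - |d|) * Real.sin |d| := by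
  rcases le_total |d| π with h | h
  · exact mul_nonneg (by linarith) (Real.sin_nonneg_of_nonneg_of_le_pi (abs_nonneg _) h)
  · have : 0 ≤ Real.sin (|d| - π) := Real.sin_nonneg_of_nonneg_of_le_pi (by linarith) (by linarith)
    rw [Real.sin_sub_pi] at this
    nlinarith

lemma aux_W_one : 0 < (π - 1) * Real.sin 1 :=
  mul_pos (by linarith [Real.pi_gt_three])
    (Real.sin_pos_of_pos_of_lt_pi one_pos (by linarith [Real.pi_gt_three]))

theorem fourier_coefficient_strict_inequality
    (f : ℝ → ℝ)
    (hf_pos : ∀ θ, 0 < f θ)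
    (hf_per : ∀ θ, f (θ + 2 * π) = f θ)
    (hf_C1 : ContDiff ℝ 1 f)
    (hf_cos : ∫ θ in (0:ℝ)..(2 * π), f θ * Real.cos θ = 0)
    (hf_sin : ∫ θ in (0:ℝ)..(2 * π), f θ * Real.sin θ = 0)
    (a₀ : ℝ) (a b : ℕ → ℝ)
    (ha₀ : a₀ = (1 / π) * ∫ θ in (0:ℝ)..(2 * π), f θ)
    (ha : ∀ n, 2 ≤ n → a n = (1 / π) * ∫ θ in (0:ℝ)..(2 * π), f θ * Real.cos (n * θ))
    (hb : ∀ n, 2 ≤ n → b n = (1 / π) * ∫ θ in (0:ℝ)..(2 * π), f θ * Real.sin (n * θ)) :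
    (∑' n : ℕ, ((a (n + 2)) ^ 2 + (b (n + 2)) ^ 2) / (((n + 2 : ℕ) : ℝ) ^ 2 - 1))
      < a₀ ^ 2 / 2 := by
  have hf : Continuous f := hf_C1.continuous
  have hpi : 0 < π := Real.pi_pos
  set I : ℝ := ∫ θ in (0:ℝ)..(2 * π), f θ with hI
  let c : ℕ → ℝ := fun n => 1 / (((n + 2 : ℕ) : ℝ) ^ 2 - 1)
  have hc : Summable c := by
    have := (aux_K 0 le_rfl (by positivity)).summable
    simpa [c] using this
  have hc0 : ∀ n, 0 ≤ c n := by
    intro n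
    apply one_div_nonneg.2
    push_cast
    have : (0:ℝ) ≤ n := n.cast_nonneg
    nlinarith
  let A : ℕ → ℝ := fun n => ∫ θ in (0:ℝ)..(2 * π), f θ * Real.cos (((n + 2 : ℕ) : ℝ) * θ)
  let B : ℕ → ℝ := fun n => ∫ θ in (0:ℝ)..(2 * π), f θ * Real.sin (((n + 2 : ℕ) : ℝ) * θ)
  have hA : ∀ n, |A n| ≤ I := by
    intro n
    change ‖∫ θ in (0:ℝ)..(2 * π), f θ * Real.cos (((n + 2 : ℕ) : ℝ) * θ)‖ ≤ ∫ θ in (0:ℝ)..(2 * π), f θ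
    refine intervalIntegral.norm_integral_le_of_norm_le (mul_pos two_pos hpi).le ?_ (hf.intervalIntegrable _ _)
    refine Filter.Eventually.of_forall fun t _ => ?_
    rw [norm_mul, Real.norm_of_nonneg (hf_pos t).le]
    exact mul_le_of_le_one_right (hf_pos t).le (Real.abs_cos_le_one _)
  have hB : ∀ n, |B n| ≤ I := by
    intro n
    change ‖∫ θ in (0:ℝ)..(2 * π), f θ * Real.sin (((n + 2 : ℕ) : ℝ) * θ)‖ ≤ ∫ θ in (0:ℝ)..(2 * π), f θ
    refine intervalIntegral.norm_integral_le_of_norm_le (mul_pos two_pos hpi).le ?_ (hf.intervalIntegrable _ _)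
    refine Filter.Eventually.of_forall fun t _ => ?_
    rw [norm_mul, Real.norm_of_nonneg (hf_pos t).le]
    exact mul_le_of_le_one_right (hf_pos t).le (Real.abs_sin_le_one _)
  let K : ℝ → ℝ := fun d => 1 / 2 + Real.cos d / 4 - (π - |d|) * Real.sin |d| / 2
  -- first exchange
  have h1 : ∀ s, 0 < s → s ≤ 2 * π → HasSum (fun n => c n *
      (Real.cos (((n + 2 : ℕ) : ℝ) * s) * A n + Real.sin (((n + 2 : ℕ) : ℝ) * s) * B n))
      (∫ t in (0:ℝ)..(2 * π), f t * K (s - t)) := by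
    intro s hs0 hs1
    have := aux_exch (fun n t => Real.cos (((n + 2 : ℕ) : ℝ) * (s - t)) * c n) (fun t => K (s - t)) f c hf
      (fun n => by fun_prop) hc
      (fun n t => by
        rw [abs_mul, abs_of_nonneg (hc0 n)]
        exact mul_le_of_le_one_left (hc0 n) (Real.abs_cos_le_one _))
      (fun t ht0 ht1 => by
        have h := aux_K |s - t| (abs_nonneg _) (by rw [abs_lt]; constructor <;> linarith)
        rw [Real.cos_abs] at h
        convert! h using 2 with n
        rw [← Real.cos_abs (_ * (s - t)), abs_mul, abs_of_nonneg (Nat.cast_nonneg _)]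
        simp only [c]
        ring)
    convert! this using 2 with n
    have e : ∀ t, f t * (Real.cos (((n + 2 : ℕ) : ℝ) * (s - t)) * c n) =
      (c n * Real.cos (((n + 2 : ℕ) : ℝ) * s)) * (f t * Real.cos (((n + 2 : ℕ) : ℝ) * t)) +
      (c n * Real.sin (((n + 2 : ℕ) : ℝ) * s)) * (f t * Real.sin (((n + 2 : ℕ) : ℝ) * t)) := by
      intro t
      rw [mul_sub, Real.cos_sub]
      ring
    simp_rw [e]
    rw [intervalIntegral.integral_add (Continuous.intervalIntegrable (by fun_prop) _ _)
      (Continuous.intervalIntegrable (by fun_prop) _ _), intervalIntegral.integral_const_mul,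
      intervalIntegral.integral_const_mul]
    simp only [A, B]
    ring
  have h2 : HasSum (fun n => c n * (A n ^ 2 + B n ^ 2))
      (∫ s in (0:ℝ)..(2 * π), f s * ∫ t in (0:ℝ)..(2 * π), f t * K (s - t)) := by
    have := aux_exch (fun n s => c n *
      (Real.cos (((n + 2 : ℕ) : ℝ) * s) * A n + Real.sin (((n + 2 : ℕ) : ℝ) * s) * B n))
      (fun s => ∫ t in (0:ℝ)..(2 * π), f t * K (s - t)) f (fun n => c n * (I + I)) hf
      (fun n => by fun_prop) (hc.mul_right _)
      (fun n t => by
        rw [abs_mul, abs_of_nonneg (hc0 n)]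
        refine mul_le_mul_of_nonneg_left ((abs_add_le _ _).trans (add_le_add ?_ ?_)) (hc0 n)
        · rw [abs_mul]
          exact (mul_le_of_le_one_left (abs_nonneg _) (Real.abs_cos_le_one _)).trans (hA n)
        · rw [abs_mul]
          exact (mul_le_of_le_one_left (abs_nonneg _) (Real.abs_sin_le_one _)).trans (hB n)) h1
    convert! this using 2 with n
    have e : ∀ s, f s * (c n *
      (Real.cos (((n + 2 : ℕ) : ℝ) * s) * A n + Real.sin (((n + 2 : ℕ) : ℝ) * s) * B n)) =
      (c n * A n) * (f s * Real.cos (((n + 2 : ℕ) : ℝ) * s)) +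
      (c n * B n) * (f s * Real.sin (((n + 2 : ℕ) : ℝ) * s)) := by
      intro s
      ring
    simp_rw [e]
    rw [intervalIntegral.integral_add (Continuous.intervalIntegrable (by fun_prop) _ _)
      (Continuous.intervalIntegrable (by fun_prop) _ _), intervalIntegral.integral_const_mul,
      intervalIntegral.integral_const_mul]
    change _ = c n * A n * A n + c n * B n * B n
    ring
  let V : ℝ → ℝ := fun s => ∫ t in (0:ℝ)..(2 * π), f t * ((π - |s - t|) * Real.sin |s - t|)
  have hV : Continuous V := by
    apply intervalIntegral.continuous_parametric_intervalIntegral_of_continuous'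
    fun_prop
  have hVpos : ∀ s, 0 ≤ s → s ≤ 2 * π → 0 < V s := by
    intro s hs0 hs1
    apply intervalIntegral.integral_pos (by positivity) (by fun_prop)
    · intro t ht
      exact mul_nonneg (hf_pos t).le (aux_W_nonneg _ (by
        rw [abs_le]; constructor <;> linarith [ht.1, ht.2]))
    · rcases le_total s π with h | h
      · refine ⟨s + 1, ⟨by linarith, by linarith [Real.pi_gt_three]⟩, mul_pos (hf_pos _) ?_⟩
        rw [show |s - (s + 1)| = 1 by norm_num]
        exact aux_W_one
      · refine ⟨s - 1, ⟨by linarith [Real.pi_gt_three], by linarith⟩, mul_pos (hf_pos _) ?_⟩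
        rw [show |s - (s - 1)| = 1 by norm_num]
        exact aux_W_one
  have h3 : ∀ s, ∫ t in (0:ℝ)..(2 * π), f t * K (s - t) = I / 2 - V s / 2 := by
    intro s
    have e : ∀ t, f t * K (s - t) = (1 / 2 * f t + (Real.cos s / 4) * (f t * Real.cos t)
        + (Real.sin s / 4) * (f t * Real.sin t))
        - 1 / 2 * (f t * ((π - |s - t|) * Real.sin |s - t|)) := by
      intro t
      simp only [K]
      rw [Real.cos_sub]
      ring
    simp_rw [e]
    rw [intervalIntegral.integral_sub (Continuous.intervalIntegrable (by fun_prop) _ _)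
      (Continuous.intervalIntegrable (by fun_prop) _ _),
      intervalIntegral.integral_add (Continuous.intervalIntegrable (by fun_prop) _ _)
      (Continuous.intervalIntegrable (by fun_prop) _ _),
      intervalIntegral.integral_add (Continuous.intervalIntegrable (by fun_prop) _ _)
      (Continuous.intervalIntegrable (by fun_prop) _ _)]
    simp only [intervalIntegral.integral_const_mul]
    rw [hf_cos, hf_sin]
    change 1 / 2 * I + _ * 0 + _ * 0 - 1 / 2 * V s = _
    ring
  have h4 : ∫ s in (0:ℝ)..(2 * π), f s * ∫ t in (0:ℝ)..(2 * π), f t * K (s - t) < I ^ 2 / 2 := by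
    have e : ∀ s, f s * (I / 2 - V s / 2) = (I / 2) * f s - (1 / 2) * (f s * V s) := by
      intro s; ring
    simp_rw [h3, e]
    rw [intervalIntegral.integral_sub (Continuous.intervalIntegrable (by fun_prop) _ _)
      (Continuous.intervalIntegrable (by fun_prop) _ _), intervalIntegral.integral_const_mul,
      intervalIntegral.integral_const_mul]
    have hp : 0 < ∫ s in (0:ℝ)..(2 * π), f s * V s := by
      apply intervalIntegral.integral_pos (by positivity) (by fun_prop)
      · intro t ht
        exact (mul_pos (hf_pos t) (hVpos t ht.1.le ht.2)).le
      · exact ⟨0, ⟨le_rfl, by positivity⟩, mul_pos (hf_pos _) (hVpos _ le_rfl (by positivity))⟩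
    rw [← hI]
    nlinarith
  have h5 := h2.mul_left ((1 / π) ^ 2)
  have h6 : ∀ n : ℕ, ((a (n + 2)) ^ 2 + (b (n + 2)) ^ 2) / (((n + 2 : ℕ) : ℝ) ^ 2 - 1)
      = (1 / π) ^ 2 * (c n * (A n ^ 2 + B n ^ 2)) := by
    intro n
    rw [ha _ (by omega), hb _ (by omega)]
    simp only [A, B, c]
    ring
  simp_rw [h6]
  rw [h5.tsum_eq, ha₀]
  have : 0 < (1 / π) ^ 2 := by positivity
  nlinarith
end

section
/- Let f : ℝ → ℝ be a positive continuous 2π-periodic function. Suppose u₁, u₂ : ℝ → ℝ are 2π-periodic C² functions with ∫₀^{2π} f u₁ dθ = ∫₀^{2π} f u₂ dθ = 0, and suppose there exist real constants μ₁ ≠ μ₂ and c₁, c₂ such that u₁'' + μ₁u₁ = c₁ f and u₂'' + μ₂u₂ = c₂ f on ℝ. Then ∫₀^{2π} u₁(θ)u₂(θ) dθ = 0. -/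
open Real

theorem f_eigenfunctions_orthogonal
    (f u₁ u₂ : ℝ → ℝ)
    (hf_pos : ∀ θ, 0 < f θ)
    (hf_cont : Continuous f)
    (hf_per : ∀ θ, f (θ + 2 * π) = f θ)
    (hu₁_per : ∀ θ, u₁ (θ + 2 * π) = u₁ θ)
    (hu₂_per : ∀ θ, u₂ (θ + 2 * π) = u₂ θ)
    (hu₁_C2 : ContDiff ℝ 2 u₁)
    (hu₂_C2 : ContDiff ℝ 2 u₂)
    (hfu₁ : ∫ θ in (0:ℝ)..(2 * π), f θ * u₁ θ = 0)
    (hfu₂ : ∫ θ in (0:ℝ)..(2 * π), f θ * u₂ θ = 0)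
    (μ₁ μ₂ c₁ c₂ : ℝ) (hμ : μ₁ ≠ μ₂)
    (heq₁ : ∀ θ, deriv (deriv u₁) θ + μ₁ * u₁ θ = c₁ * f θ)
    (heq₂ : ∀ θ, deriv (deriv u₂) θ + μ₂ * u₂ θ = c₂ * f θ) :
    ∫ θ in (0:ℝ)..(2 * π), u₁ θ * u₂ θ = 0 := by
  have hd : ∀ u : ℝ → ℝ, ContDiff ℝ 2 u →
      (∀ x, HasDerivAt u (deriv u x) x) ∧
      (∀ x, HasDerivAt (deriv u) (deriv (deriv u) x) x) := by
    intro u hu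
    have h1 : ContDiff ℝ 1 (deriv u) := by
      have h : ContDiff ℝ (1 + 1) u := by
        rw [one_add_one_eq_two]
        exact hu
      exact (contDiff_succ_iff_deriv.mp h).2.2
    exact ⟨fun x => (hu.differentiable (by norm_num) x).hasDerivAt,
      fun x => (h1.differentiable (by norm_num) x).hasDerivAt⟩
  have hp : ∀ u : ℝ → ℝ, (∀ θ, u (θ + 2 * π) = u θ) →
      u (2 * π) = u 0 ∧ deriv u (2 * π) = deriv u 0 := by
    intro u hu
    have h1 := hu 0
    have h2 : deriv (fun θ => u (θ + 2 * π)) 0 = deriv u 0 := by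
      rw [show (fun θ => u (θ + 2 * π)) = u from funext hu]
    rw [deriv_comp_add_const] at h2
    rw [zero_add] at h1 h2
    exact ⟨h1, h2⟩
  obtain ⟨a1, b1⟩ := hd u₁ hu₁_C2
  obtain ⟨a2, b2⟩ := hd u₂ hu₂_C2
  obtain ⟨p1, q1⟩ := hp u₁ hu₁_per
  obtain ⟨p2, q2⟩ := hp u₂ hu₂_per
  have k1 : Continuous u₁ := hu₁_C2.continuous
  have k2 : Continuous u₂ := hu₂_C2.continuous
  have key := intervalIntegral.integral_eq_sub_of_hasDerivAt (a := 0) (b := 2 * π)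
    (f := fun x => deriv u₁ x * u₂ x - u₁ x * deriv u₂ x)
    (f' := fun x => c₁ * (f x * u₂ x) - c₂ * (f x * u₁ x) - (μ₁ - μ₂) * (u₁ x * u₂ x))
    (fun x _ => by
      refine (((b1 x).mul (a2 x)).sub ((a1 x).mul (b2 x))).congr_deriv ?_
      linear_combination u₂ x * heq₁ x - u₁ x * heq₂ x)
    (Continuous.intervalIntegrable (by fun_prop) _ _)
  rw [intervalIntegral.integral_sub (Continuous.intervalIntegrable (by fun_prop) _ _)
      (Continuous.intervalIntegrable (by fun_prop) _ _),
    intervalIntegral.integral_sub (Continuous.intervalIntegrable (by fun_prop) _ _)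
      (Continuous.intervalIntegrable (by fun_prop) _ _)] at key
  simp only [intervalIntegral.integral_const_mul, hfu₁, hfu₂, p1, p2, q1, q2] at key
  have h0 : (μ₁ - μ₂) * ∫ θ in (0:ℝ)..(2 * π), u₁ θ * u₂ θ = 0 := by linarith
  exact (mul_eq_zero.mp h0).resolve_left (sub_ne_zero.mpr hμ)
end

section
/- Let f : ℝ → ℝ be a positive continuous 2π-periodic function and let u : ℝ → ℝ be a 2π-periodic C¹ function with ∫₀^{2π} f(θ)u(θ) dθ = 0. Then ∫₀^{2π} (u'(θ))² dθ ≥ [(∫₀^{2π} f dθ)² / (2π · ∫₀^{2π} f² dθ)] · ∫₀^{2π} u(θ)² dθ. In particular, the constant (∫₀^{2π} f dθ)² / (2π ∫₀^{2π} f² dθ) is strictly positive. -/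
open Real

lemma wirtinger_aux (u : ℝ → ℝ) (hu_per : u (2 * π) = u 0) (hu : ContDiff ℝ 1 u) :
    2 * π * (∫ θ in (0:ℝ)..(2 * π), (u θ) ^ 2) - (∫ θ in (0:ℝ)..(2 * π), u θ) ^ 2 ≤
      2 * π * ∫ θ in (0:ℝ)..(2 * π), (deriv u θ) ^ 2 := by
  have hpi := Real.pi_pos
  have hab : (0:ℝ) < 2 * π := by positivity
  have hc : Continuous u := hu.continuous
  have hc' : Continuous (deriv u) := hu.continuous_deriv le_rfl
  have hL : ∀ g : ℝ → ℝ, Continuous g → MeasureTheory.MemLp (fun x => (g x : ℂ)) 2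
      (MeasureTheory.volume.restrict (Set.Ioc 0 (2 * π))) := by
    intro g hg
    have h1 : Continuous (fun x => (g x : ℂ)) := Complex.continuous_ofReal.comp hg
    rw [MeasureTheory.memLp_two_iff_integrable_sq_norm h1.aestronglyMeasurable]
    exact (h1.norm.pow 2).integrableOn_Ioc
  have hU := hasSum_sq_fourierCoeffOn hab (hL u hc)
  have hD := hasSum_sq_fourierCoeffOn hab (hL _ hc')
  have h0 : fourierCoeffOn hab (fun x => (u x : ℂ)) 0 =
      (((2 * π)⁻¹ * ∫ θ in (0:ℝ)..(2 * π), u θ : ℝ) : ℂ) := by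
    rw [fourierCoeffOn_eq_integral]
    simp [intervalIntegral.integral_ofReal]
  have hcoef : ∀ n : ℤ, n ≠ 0 → ‖fourierCoeffOn hab (fun x => (u x : ℂ)) n‖ ≤
      ‖fourierCoeffOn hab (fun x => ((deriv u x : ℝ) : ℂ)) n‖ := by
    intro n hn
    rw [fourierCoeffOn_of_hasDerivAt hab (f' := fun x => ((deriv u x : ℝ) : ℂ)) hn
      (fun x _ => ((hu.differentiable one_ne_zero) x).hasDerivAt.ofReal_comp)
      ((Complex.continuous_ofReal.comp hc').intervalIntegrable _ _)]
    have h1 : (1:ℝ) ≤ |(n:ℝ)| := by exact_mod_cast Int.one_le_abs hn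
    rw [hu_per]
    simp only [sub_self, mul_zero, zero_sub, norm_mul, norm_neg, norm_div, norm_one,
      Complex.norm_I, Complex.norm_real, Complex.ofReal_zero, sub_zero, Complex.norm_intCast,
      Complex.norm_ofNat, mul_one, Complex.ofReal_mul, Complex.ofReal_ofNat, Real.norm_eq_abs,
      abs_of_pos hpi]
    rw [← mul_assoc]
    refine mul_le_of_le_one_left (norm_nonneg _) ?_
    rw [one_div, inv_mul_le_iff₀ (by positivity)]
    nlinarith
  have key := hasSum_le (fun n => ?_) hU
    (hD.add (hasSum_ite_eq (0:ℤ) (‖fourierCoeffOn hab (fun x => (u x : ℂ)) 0‖ ^ 2)))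
  · rw [h0] at key
    simp only [Complex.norm_real, Real.norm_eq_abs, sq_abs, sub_zero, smul_eq_mul] at key
    rw [mul_pow] at key
    have e : (2 * π) * (2 * π)⁻¹ = 1 := mul_inv_cancel₀ hab.ne'
    have k2 := mul_le_mul_of_nonneg_left key (sq_nonneg (2 * π))
    generalize (∫ θ in (0:ℝ)..(2 * π), (u θ) ^ 2) = U at *
    generalize (∫ θ in (0:ℝ)..(2 * π), (deriv u θ) ^ 2) = D at *
    generalize (∫ θ in (0:ℝ)..(2 * π), u θ) = M at *
    field_simp at k2
    nlinarith
  · by_cases hn : n = 0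
    · subst hn; simp
    · simp only [hn, if_false, add_zero]
      gcongr
      exact hcoef n hn

theorem first_f_eigenvalue_lower_bound_circle
    (f u : ℝ → ℝ)
    (hf_pos : ∀ θ, 0 < f θ)
    (hf_cont : Continuous f)
    (hf_per : ∀ θ, f (θ + 2 * π) = f θ)
    (hu_per : ∀ θ, u (θ + 2 * π) = u θ)
    (hu_C1 : ContDiff ℝ 1 u)
    (hfu : ∫ θ in (0:ℝ)..(2 * π), f θ * u θ = 0) :
    0 < (∫ θ in (0:ℝ)..(2 * π), f θ) ^ 2 /
        (2 * π * ∫ θ in (0:ℝ)..(2 * π), (f θ) ^ 2) ∧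
    ((∫ θ in (0:ℝ)..(2 * π), f θ) ^ 2 /
        (2 * π * ∫ θ in (0:ℝ)..(2 * π), (f θ) ^ 2)) *
        (∫ θ in (0:ℝ)..(2 * π), (u θ) ^ 2)
      ≤ ∫ θ in (0:ℝ)..(2 * π), (deriv u θ) ^ 2 := by
  have hpi := Real.pi_pos
  have hab : (0:ℝ) < 2 * π := by positivity
  have hc : Continuous u := hu_C1.continuous
  have hW := wirtinger_aux u (by simpa using hu_per 0) hu_C1
  have hF : 0 < ∫ θ in (0:ℝ)..(2 * π), f θ :=
    intervalIntegral.intervalIntegral_pos_of_pos (hf_cont.intervalIntegrable _ _) hf_pos hab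
  have hG : 0 < ∫ θ in (0:ℝ)..(2 * π), (f θ) ^ 2 :=
    intervalIntegral.intervalIntegral_pos_of_pos ((hf_cont.pow 2).intervalIntegrable _ _)
      (fun θ => pow_pos (hf_pos θ) 2) hab
  have hQ : ∀ t c : ℝ, 0 ≤ t ^ 2 * (∫ θ in (0:ℝ)..(2 * π), (f θ) ^ 2) +
      (∫ θ in (0:ℝ)..(2 * π), (u θ) ^ 2) + 2 * t * c * (∫ θ in (0:ℝ)..(2 * π), f θ) +
      2 * c * (∫ θ in (0:ℝ)..(2 * π), u θ) + 2 * π * c ^ 2 := by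
    intro t c
    have hn : 0 ≤ ∫ θ in (0:ℝ)..(2 * π), (t * f θ + u θ + c) ^ 2 :=
      intervalIntegral.integral_nonneg hab.le (fun θ _ => sq_nonneg _)
    have he : (∫ θ in (0:ℝ)..(2 * π), (t * f θ + u θ + c) ^ 2) =
        ∫ θ in (0:ℝ)..(2 * π), (t ^ 2 * (f θ) ^ 2 + (u θ) ^ 2 + 2 * t * c * f θ +
          2 * c * u θ + c ^ 2 + 2 * t * (f θ * u θ)) := by
      congr 1; ext θ; ring
    rw [he] at hn
    rw [intervalIntegral.integral_add, intervalIntegral.integral_add,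
      intervalIntegral.integral_add, intervalIntegral.integral_add,
      intervalIntegral.integral_add] at hn
    · simp only [intervalIntegral.integral_const_mul, hfu, intervalIntegral.integral_const,
        smul_eq_mul, sub_zero, mul_zero, add_zero] at hn
      exact hn
    all_goals exact Continuous.intervalIntegrable (by fun_prop) _ _
  generalize (∫ θ in (0:ℝ)..(2 * π), (u θ) ^ 2) = U at *
  generalize (∫ θ in (0:ℝ)..(2 * π), (deriv u θ) ^ 2) = D at *
  generalize (∫ θ in (0:ℝ)..(2 * π), u θ) = M at *
  generalize (∫ θ in (0:ℝ)..(2 * π), (f θ) ^ 2) = G at *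
  generalize (∫ θ in (0:ℝ)..(2 * π), f θ) = F at *
  refine ⟨by positivity, ?_⟩
  have hq : ∀ t : ℝ, 0 ≤ (2 * π * G - F ^ 2) * (t * t) + (-2 * F * M) * t +
      (2 * π * U - M ^ 2) := by
    intro t
    have h := mul_nonneg hab.le (hQ t (-(t * F + M) / (2 * π)))
    field_simp at h
    nlinarith
  have hd := discrim_le_zero hq
  unfold discrim at hd
  have h3 : F ^ 2 * U ≤ G * (2 * π * U - M ^ 2) := by
    have : 2 * π * (F ^ 2 * U) ≤ 2 * π * (G * (2 * π * U - M ^ 2)) := by nlinarith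
    exact le_of_mul_le_mul_left this hab
  rw [div_mul_eq_mul_div, div_le_iff₀ (by positivity)]
  nlinarith [mul_le_mul_of_nonneg_left hW hG.le]
end

section
/- Fix n ≥ 1. Let f : ℝⁿ → ℝ be a positive continuous function that is 2π-periodic in each coordinate, and let u : ℝⁿ → ℝ be a C¹ function, 2π-periodic in each coordinate, with ∫_{[0,2π]ⁿ} f u dx = 0. Then ∫_{[0,2π]ⁿ} |∇u|² dx ≥ [(∫_{[0,2π]ⁿ} f dx)² / ((2π)ⁿ · ∫_{[0,2π]ⁿ} f² dx)] · ∫_{[0,2π]ⁿ} u² dx. -/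
open Real MeasureTheory

lemma wirtinger_one (g g' : ℝ → ℝ) (hg : ∀ x, HasDerivAt g (g' x) x) (hg' : Continuous g')
    (hper : g (2 * π) = g 0) :
    (∫ x in Set.Icc (0:ℝ) (2 * π), g x ^ 2) - (∫ x in Set.Icc (0:ℝ) (2 * π), g x) ^ 2 / (2 * π)
      ≤ ∫ x in Set.Icc (0:ℝ) (2 * π), g' x ^ 2 := by
  have hab : (0:ℝ) < 2 * π := by positivity
  have hgc : Continuous g := continuous_iff_continuousAt.2 fun x => (hg x).continuousAt
  have key : ∀ h : ℝ → ℝ, Continuous h →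
      HasSum (fun i => ‖fourierCoeffOn hab (fun x => (h x : ℂ)) i‖ ^ 2)
        ((2 * π)⁻¹ * ∫ x in (0:ℝ)..(2*π), h x ^ 2) := by
    intro h hh
    have hc : Continuous (fun x => (h x : ℂ)) := by fun_prop
    have hL : MemLp (fun x => (h x : ℂ)) 2 (volume.restrict (Set.Ioc 0 (2 * π))) := by
      have : MemLp (fun x => (h x : ℂ)) 2 (volume.restrict (Set.Icc 0 (2 * π))) :=
        (memLp_two_iff_integrable_sq_norm hc.aestronglyMeasurable).2
          ((by fun_prop : Continuous fun x => ‖(h x : ℂ)‖ ^ 2).continuousOn.integrableOn_compact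
            isCompact_Icc)
      exact this.mono_measure (Measure.restrict_mono Set.Ioc_subset_Icc_self le_rfl)
    have := hasSum_sq_fourierCoeffOn hab hL
    simpa using this
  have h1 := key g hgc
  have h2 := key g' hg'
  have h0 : ‖fourierCoeffOn hab (fun x => (g x : ℂ)) 0‖ ^ 2
      = ((2 * π)⁻¹ * ∫ x in (0:ℝ)..(2*π), g x) ^ 2 := by
    rw [fourierCoeffOn_eq_integral]
    simp only [neg_zero, fourier_zero, one_smul, intervalIntegral.integral_ofReal]
    rw [Complex.real_smul, ← Complex.ofReal_mul, Complex.norm_real, Real.norm_eq_abs, sq_abs]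
    simp
  have h3 := h2.add (hasSum_ite_eq (0:ℤ) (‖fourierCoeffOn hab (fun x => (g x : ℂ)) 0‖ ^ 2))
  have hle := hasSum_le (fun k => ?_) h1 h3
  · rw [h0] at hle
    simp only [integral_Icc_eq_integral_Ioc, ← intervalIntegral.integral_of_le hab.le]
    set A := ∫ x in (0:ℝ)..(2*π), g x ^ 2
    set B := ∫ x in (0:ℝ)..(2*π), g x
    set C := ∫ x in (0:ℝ)..(2*π), g' x ^ 2
    have := mul_le_mul_of_nonneg_left hle hab.le
    have e1 : 2 * π * ((2 * π)⁻¹ * A) = A := by field_simp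
    have e2 : 2 * π * ((2 * π)⁻¹ * C + ((2 * π)⁻¹ * B) ^ 2) = C + B ^ 2 / (2 * π) := by field_simp
    rw [e1, e2] at this
    linarith
  · by_cases hk : k = 0
    · subst hk
      simp only [if_true]
      exact le_add_of_nonneg_left (by positivity)
    · simp only [hk, if_false, add_zero]
      rw [fourierCoeffOn_of_hasDerivAt hab hk (f' := fun x => (g' x : ℂ))
        (fun x _ => (hg x).ofReal_comp) ((by fun_prop : Continuous fun x => (g' x : ℂ)).intervalIntegrable _ _)]
      rw [hper]
      simp only [sub_self, mul_zero, zero_sub, norm_mul, norm_neg, norm_div, norm_one, Complex.norm_I, Complex.norm_intCast]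
      have hk1 : (1:ℝ) ≤ |(k:ℝ)| := by exact_mod_cast Int.one_le_abs hk
      set c := ‖fourierCoeffOn hab (fun x => (g' x : ℂ)) k‖
      have hc : 0 ≤ c := norm_nonneg _
      have e : ‖((2 * π : ℝ) : ℂ) - ((0:ℝ) : ℂ)‖ = 2 * π := by
        rw [← Complex.ofReal_sub, Complex.norm_real, sub_zero, Real.norm_of_nonneg hab.le]
      rw [e]
      simp only [Complex.norm_ofNat, Complex.norm_real, Real.norm_of_nonneg pi_pos.le]
      have : 1 / (2 * π * 1 * |(k:ℝ)|) * (2 * π * c) = c / |(k:ℝ)| := by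
        field_simp
      rw [this]
      gcongr
      exact div_le_self hc hk1

lemma integral_six {X : Type*} [MeasurableSpace X] (μ : Measure X) (f1 f2 f3 f4 f5 f6 : X → ℝ)
    (c1 : Integrable f1 μ) (c2 : Integrable f2 μ) (c3 : Integrable f3 μ) (c4 : Integrable f4 μ)
    (c5 : Integrable f5 μ) (c6 : Integrable f6 μ) :
    ∫ x, (f1 x + f2 x - f3 x - f4 x - f5 x + f6 x) ∂μ =
      (∫ x, f1 x ∂μ) + (∫ x, f2 x ∂μ) - (∫ x, f3 x ∂μ) - (∫ x, f4 x ∂μ) - (∫ x, f5 x ∂μ)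
        + ∫ x, f6 x ∂μ := by
  have d1 : Integrable (fun x => f1 x + f2 x) μ := c1.add c2
  have d2 : Integrable (fun x => f1 x + f2 x - f3 x) μ := d1.sub c3
  have d3 : Integrable (fun x => f1 x + f2 x - f3 x - f4 x) μ := d2.sub c4
  have d4 : Integrable (fun x => f1 x + f2 x - f3 x - f4 x - f5 x) μ := d3.sub c5
  rw [integral_add d4 c6, integral_sub d3 c5, integral_sub d2 c4, integral_sub d1 c3,
    integral_add c1 c2]

lemma var_split {X Y : Type*} [TopologicalSpace X] [TopologicalSpace Y]
    [FirstCountableTopology X] [LocallyCompactSpace X] [FirstCountableTopology Y]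
    [LocallyCompactSpace Y] [SecondCountableTopology X] [SecondCountableTopology Y]
    [T2Space X] [T2Space Y]
    [MeasurableSpace X] [MeasurableSpace Y] [BorelSpace X] [BorelSpace Y]
    (μ : Measure X) (ν : Measure Y) [IsLocallyFiniteMeasure μ] [IsLocallyFiniteMeasure ν]
    [SFinite μ] [SFinite ν]
    (K : Set X) (S : Set Y) (hK : IsCompact K) (hS : IsCompact S)
    (L V : ℝ) (hL : 0 < L) (hV : 0 < V) (hKL : μ.real K = L) (hSV : ν.real S = V)
    (u : X → Y → ℝ) (hu : Continuous u.uncurry) :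
    (∫ t in K, ∫ y in S, u t y ^ 2 ∂ν ∂μ) - (∫ t in K, ∫ y in S, u t y ∂ν ∂μ) ^ 2 / (L * V) ≤
      (∫ y in S, ((∫ t in K, u t y ^ 2 ∂μ) - (∫ t in K, u t y ∂μ) ^ 2 / L) ∂ν) +
      ∫ t in K, ((∫ y in S, u t y ^ 2 ∂ν) - (∫ y in S, u t y ∂ν) ^ 2 / V) ∂μ := by
  have swap : ∀ w : X → Y → ℝ, Continuous w.uncurry →
      ∫ t in K, ∫ y in S, w t y ∂ν ∂μ = ∫ y in S, ∫ t in K, w t y ∂μ ∂ν := by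
    intro w hw
    apply integral_integral_swap
    rw [Measure.prod_restrict]
    exact hw.continuousOn.integrableOn_compact (hK.prod hS)
  have cx : ∀ w : X → Y → ℝ, Continuous w.uncurry → Continuous fun t => ∫ y in S, w t y ∂ν :=
    fun w hw => continuous_parametric_integral_of_continuous hw hS
  have cy : ∀ w : X → Y → ℝ, Continuous w.uncurry → Continuous fun y => ∫ t in K, w t y ∂μ :=
    fun w hw => continuous_parametric_integral_of_continuous (f := fun y t => w t y)
      (hw.comp continuous_swap) hK
  have ix : ∀ w : X → ℝ, Continuous w → Integrable w (μ.restrict K) :=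
    fun w hw => hw.continuousOn.integrableOn_compact hK
  have iy : ∀ w : Y → ℝ, Continuous w → Integrable w (ν.restrict S) :=
    fun w hw => hw.continuousOn.integrableOn_compact hS
  have hu2 : Continuous (fun t y => u t y ^ 2 : X → Y → ℝ).uncurry := hu.pow 2
  set B : X → ℝ := fun t => ∫ y in S, u t y ∂ν with hB
  set A : Y → ℝ := fun y => ∫ t in K, u t y ∂μ with hA
  have hBc : Continuous B := cx u hu
  have hAc : Continuous A := cy u hu
  have hut : ∀ t, Continuous (u t) := fun t => hu.comp (Continuous.prodMk_right t)
  have huA : Continuous (fun t y => u t y * A y : X → Y → ℝ).uncurry :=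
    hu.mul (hAc.comp continuous_snd)
  set I := ∫ t in K, B t ∂μ with hI
  have hIA : ∫ y in S, A y ∂ν = I := (swap u hu).symm
  have pt : ∀ t, 0 ≤ (∫ y in S, u t y ^ 2 ∂ν) + (∫ y in S, A y ^ 2 ∂ν) / L ^ 2
      - B t ^ 2 / V - I ^ 2 / (L ^ 2 * V)
      - 2 / L * (∫ y in S, u t y * A y ∂ν) + 2 * I / (L * V) * B t := by
    intro t
    have h0 : 0 ≤ ∫ y in S, (u t y - A y / L - B t / V + I / (L * V)) ^ 2 ∂ν :=
      integral_nonneg fun y => sq_nonneg _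
    have e : ∀ y, (u t y - A y / L - B t / V + I / (L * V)) ^ 2
        = u t y ^ 2 + 1 / L ^ 2 * A y ^ 2 - 2 / L * (u t y * A y)
          - (-2 * (I / (L * V) - B t / V)) * u t y - 2 / L * (I / (L * V) - B t / V) * A y
          + (I / (L * V) - B t / V) ^ 2 := by intro y; field_simp; ring
    simp_rw [e] at h0
    have c1 := iy _ ((hut t).pow 2)
    have c2 := (iy _ (hAc.pow 2)).const_mul (1 / L ^ 2)
    have c3 := (iy _ ((hut t).mul hAc)).const_mul (2 / L)
    have c4 := (iy _ (hut t)).const_mul (-2 * (I / (L * V) - B t / V))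
    have c5 := (iy _ hAc).const_mul (2 / L * (I / (L * V) - B t / V))
    have c6 := iy _ (continuous_const (y := (I / (L * V) - B t / V) ^ 2))
    have h0' := h0.trans_eq (integral_six _ _ _ _ _ _ _ c1 c2 c3 c4 c5 c6)
    clear h0
    rename' h0' => h0
    simp only [integral_const_mul, integral_const, measureReal_restrict_apply_univ, hSV, hIA,
      smul_eq_mul] at h0
    have hBt : ∫ y in S, u t y ∂ν = B t := rfl
    rw [hBt] at h0
    refine h0.trans_eq ?_
    field_simp
    ring
  have h1 := integral_nonneg (μ := μ.restrict K) (Pi.le_def.2 pt)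
  have c1 := ix _ (cx _ hu2)
  have c2 := ix _ (continuous_const (y := (∫ y in S, A y ^ 2 ∂ν) / L ^ 2))
  have c3 := (ix _ (hBc.pow 2)).div_const V
  have c4 := ix _ (continuous_const (y := I ^ 2 / (L ^ 2 * V)))
  have c5 := (ix _ (cx _ huA)).const_mul (2 / L)
  have c6 := (ix _ hBc).const_mul (2 * I / (L * V))
  have h1' := h1.trans_eq (integral_six _ _ _ _ _ _ _ c1 c2 c3 c4 c5 c6)
  clear h1
  rename' h1' => h1
  have d3 : Integrable (fun y => A y ^ 2 / L) (ν.restrict S) := (iy _ (hAc.pow 2)).div_const L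
  have d4 : Integrable (fun t => B t ^ 2 / V) (μ.restrict K) := c3
  have g1 := integral_sub (iy _ (cy _ hu2)) d3
  have g2 := integral_sub c1 d4
  simp only [hA, hB] at g1 g2
  rw [g1, g2, ← swap _ hu2]
  have e5 : ∫ t in K, ∫ y in S, u t y * A y ∂ν ∂μ = ∫ y in S, A y ^ 2 ∂ν := by
    rw [swap _ huA]
    congr 1; ext y
    rw [integral_mul_const, sq]
  simp only [integral_const_mul, integral_const, measureReal_restrict_apply_univ, hKL,
    smul_eq_mul, e5, integral_div, ← hI] at h1 ⊢
  have e6 : ∀ P Q R : ℝ, P + L * (Q / L ^ 2) - R - L * (I ^ 2 / (L ^ 2 * V)) - 2 / L * Q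
     + 2 * I / (L * V) * I = P - Q / L - R + I ^ 2 / (L * V) := by
    intros; field_simp; ring
  rw [e6] at h1
  linarith

lemma box_compact (n : ℕ) : IsCompact (Set.univ.pi fun _ : Fin n => Set.Icc (0:ℝ) (2 * π)) :=
  isCompact_univ_pi fun _ => isCompact_Icc

lemma box_vol (n : ℕ) :
    (volume : Measure (Fin n → ℝ)).real (Set.univ.pi fun _ : Fin n => Set.Icc (0:ℝ) (2 * π))
      = (2 * π) ^ n := by
  rw [measureReal_def, volume_pi_pi]
  simp [Real.volume_Icc, ENNReal.toReal_ofReal, pi_pos.le]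

lemma fubini_box (n : ℕ) (G : (Fin (n + 1) → ℝ) → ℝ) (hG : Continuous G) :
    ∫ x in Set.univ.pi fun _ : Fin (n + 1) => Set.Icc (0:ℝ) (2 * π), G x =
      ∫ t in Set.Icc (0:ℝ) (2 * π), ∫ y in Set.univ.pi fun _ : Fin n => Set.Icc (0:ℝ) (2 * π),
        G (Fin.cons t y) := by
  set e : ℝ × (Fin n → ℝ) ≃ᵐ (Fin (n + 1) → ℝ) :=
    (MeasurableEquiv.piFinSuccAbove (fun _ => ℝ) 0).symm
  have hem : MeasurePreserving e :=
    (volume_preserving_piFinSuccAbove (fun _ : Fin (n + 1) => ℝ) 0).symm _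
  have hee : ∀ z, e z = Fin.cons z.1 z.2 := fun z => by
    simp [e, MeasurableEquiv.piFinSuccAbove, Fin.insertNthEquiv, Fin.insertNth_zero']
  have hpre : e ⁻¹' (Set.univ.pi fun _ : Fin (n + 1) => Set.Icc (0:ℝ) (2 * π))
      = Set.Icc (0:ℝ) (2 * π) ×ˢ Set.univ.pi fun _ : Fin n => Set.Icc (0:ℝ) (2 * π) := by
    ext z
    simp only [Set.mem_preimage, hee, Set.mem_pi, Set.mem_univ, true_implies, Set.mem_prod,
      Fin.forall_fin_succ, Fin.cons_zero, Fin.cons_succ]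
  rw [← hem.map_eq, setIntegral_map_equiv, hpre, Measure.volume_eq_prod, setIntegral_prod]
  · simp only [hee]
  · simp only [hee]
    refine Continuous.continuousOn ?_ |>.integrableOn_compact (isCompact_Icc.prod (box_compact n))
    exact hG.comp (Continuous.finCons continuous_fst continuous_snd)

lemma hasFDerivAt_cons_right (n : ℕ) (u : (Fin (n + 1) → ℝ) → ℝ) (hu : Differentiable ℝ u)
    (t : ℝ) (y : Fin n → ℝ) (i : Fin n) :
    fderiv ℝ (fun y => u (Fin.cons t y)) y (Pi.single i 1) =
      fderiv ℝ u (Fin.cons t y) (Pi.single i.succ 1) := by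
  let L : (Fin n → ℝ) →L[ℝ] (Fin (n + 1) → ℝ) :=
    ContinuousLinearMap.pi (Fin.cons 0 fun j => ContinuousLinearMap.proj j)
  have hL : HasFDerivAt (fun y : Fin n → ℝ => (Fin.cons t y : Fin (n + 1) → ℝ)) L y := by
    rw [hasFDerivAt_pi']
    intro j
    refine Fin.cases ?_ (fun j => ?_) j
    · have : (ContinuousLinearMap.proj 0).comp L = 0 := by ext; simp [L]
      rw [this]
      simpa using hasFDerivAt_const t y
    · have : (ContinuousLinearMap.proj j.succ).comp L = ContinuousLinearMap.proj j := by
        ext; simp [L]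
      rw [this]
      simpa using hasFDerivAt_apply j y
  have h := ((hu (Fin.cons t y)).hasFDerivAt.comp y hL).fderiv
  have h' : fderiv ℝ (fun y => u (Fin.cons t y)) y = (fderiv ℝ u (Fin.cons t y)).comp L := h
  rw [h', ContinuousLinearMap.comp_apply]
  congr 1
  ext j
  refine Fin.cases ?_ (fun j => ?_) j
  · simp [L, Pi.single_apply, (Fin.succ_ne_zero i).symm]
  · simp [L, Pi.single_apply]

lemma hasDerivAt_cons_left (n : ℕ) (u : (Fin (n + 1) → ℝ) → ℝ) (hu : Differentiable ℝ u)
    (t : ℝ) (y : Fin n → ℝ) :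
    HasDerivAt (fun t => u (Fin.cons t y)) (fderiv ℝ u (Fin.cons t y) (Pi.single 0 1)) t := by
  have hL : HasDerivAt (fun t : ℝ => (Fin.cons t y : Fin (n + 1) → ℝ)) (Pi.single 0 1) t := by
    rw [hasDerivAt_pi]
    intro j
    refine Fin.cases ?_ (fun j => ?_) j
    · simpa using hasDerivAt_id' t
    · simpa using hasDerivAt_const t (y j)
  exact (hu (Fin.cons t y)).hasFDerivAt.comp_hasDerivAt t hL

lemma poincare_box (n : ℕ) : ∀ (u : (Fin n → ℝ) → ℝ) (_ : ContDiff ℝ 1 u)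
    (_ : ∀ (x : Fin n → ℝ) (i : Fin n), u (x + (2 * π) • (Pi.single i 1 : Fin n → ℝ)) = u x),
    (∫ x in Set.univ.pi fun _ : Fin n => Set.Icc (0:ℝ) (2 * π), (u x) ^ 2) -
      (∫ x in Set.univ.pi fun _ : Fin n => Set.Icc (0:ℝ) (2 * π), u x) ^ 2 / (2 * π) ^ n ≤
      ∫ x in Set.univ.pi fun _ : Fin n => Set.Icc (0:ℝ) (2 * π),
          ∑ i : Fin n, (fderiv ℝ u x (Pi.single i 1 : Fin n → ℝ)) ^ 2 := by
  induction n with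
  | zero =>
    intro u _ _
    have hv := box_vol 0
    have : ∀ x, u x = u 0 := fun x => by rw [Subsingleton.elim x 0]
    simp only [this, integral_const, measureReal_restrict_apply_univ, hv]
    simp
  | succ n ih =>
    intro u hu hper
    have hd : Differentiable ℝ u := hu.differentiable (by norm_num)
    have hc : Continuous u := hu.continuous
    have hD : ∀ v, Continuous fun x => fderiv ℝ u x v := fun v =>
      (hu.continuous_fderiv (by norm_num)).clm_apply continuous_const
    have hcons : Continuous fun z : ℝ × (Fin n → ℝ) => (Fin.cons z.1 z.2 : Fin (n + 1) → ℝ) :=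
      Continuous.finCons continuous_fst continuous_snd
    have hK : IsCompact (Set.Icc (0:ℝ) (2 * π)) := isCompact_Icc
    have hS := box_compact n
    set Q := Set.univ.pi fun _ : Fin n => Set.Icc (0:ℝ) (2 * π) with hQ
    have hpi : (0:ℝ) < 2 * π := by positivity
    have key := var_split (volume : Measure ℝ) (volume : Measure (Fin n → ℝ))
      (Set.Icc (0:ℝ) (2 * π)) Q hK hS (2 * π) ((2 * π) ^ n) hpi (by positivity)
      (by rw [measureReal_def, Real.volume_Icc, sub_zero, ENNReal.toReal_ofReal hpi.le])
      (box_vol n) (fun t y => u (Fin.cons t y)) (hc.comp hcons)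
    have i0 := fubini_box n (fun x => u x ^ 2) (hc.pow 2)
    have i1 := fubini_box n u hc
    have hsum : Continuous fun x => ∑ i : Fin (n + 1), (fderiv ℝ u x (Pi.single i 1)) ^ 2 :=
      continuous_finsetSum _ fun i _ => (hD _).pow 2
    have i2 := fubini_box n _ hsum
    rw [i0, i1, i2, pow_succ' (2 * π) n]
    refine key.trans ?_
    have hG0 : Continuous (fun (t : ℝ) (y : Fin n → ℝ) =>
        (fderiv ℝ u (Fin.cons t y) (Pi.single 0 1)) ^ 2).uncurry := ((hD _).comp hcons).pow 2
    have hG1 : Continuous (fun (t : ℝ) (y : Fin n → ℝ) =>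
        ∑ i : Fin n, (fderiv ℝ u (Fin.cons t y) (Pi.single i.succ 1)) ^ 2).uncurry :=
      continuous_finsetSum _ fun i _ => ((hD _).comp hcons).pow 2
    have hU : Continuous (fun (t : ℝ) (y : Fin n → ℝ) => u (Fin.cons t y)).uncurry :=
      hc.comp hcons
    have hU2 : Continuous (fun (t : ℝ) (y : Fin n → ℝ) => u (Fin.cons t y) ^ 2).uncurry :=
      (hc.comp hcons).pow 2
    have cx : ∀ w : ℝ → (Fin n → ℝ) → ℝ, Continuous w.uncurry →
        Continuous fun t => ∫ y in Q, w t y :=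
      fun w hw => continuous_parametric_integral_of_continuous hw hS
    have cy : ∀ w : ℝ → (Fin n → ℝ) → ℝ, Continuous w.uncurry →
        Continuous fun y => ∫ t in Set.Icc (0:ℝ) (2 * π), w t y :=
      fun w hw => continuous_parametric_integral_of_continuous (f := fun y t => w t y)
        (hw.comp continuous_swap) hK
    have ix : ∀ w : ℝ → ℝ, Continuous w → Integrable w (volume.restrict (Set.Icc (0:ℝ) (2 * π))) :=
      fun w hw => hw.continuousOn.integrableOn_compact hK
    have iy : ∀ w : (Fin n → ℝ) → ℝ, Continuous w → Integrable w (volume.restrict Q) :=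
      fun w hw => hw.continuousOn.integrableOn_compact hS
    have sec : ∀ w : ℝ → (Fin n → ℝ) → ℝ, Continuous w.uncurry → ∀ t, Continuous (w t) :=
      fun w hw t => hw.comp (Continuous.prodMk_right t)
    have s1 : ∫ y in Q, ((∫ t in Set.Icc (0:ℝ) (2 * π), u (Fin.cons t y) ^ 2)
          - (∫ t in Set.Icc (0:ℝ) (2 * π), u (Fin.cons t y)) ^ 2 / (2 * π))
        ≤ ∫ t in Set.Icc (0:ℝ) (2 * π), ∫ y in Q,
          (fderiv ℝ u (Fin.cons t y) (Pi.single 0 1)) ^ 2 := by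
      have sw := integral_integral_swap (μ := volume.restrict (Set.Icc (0:ℝ) (2 * π)))
        (ν := volume.restrict Q) (f := fun (t : ℝ) (y : Fin n → ℝ) =>
        (fderiv ℝ u (Fin.cons t y) (Pi.single 0 1)) ^ 2) (by
          rw [Measure.prod_restrict]
          exact hG0.continuousOn.integrableOn_compact (hK.prod hS))
      rw [sw]
      refine integral_mono (iy _ ((cy _ hU2).sub (((cy _ hU).pow 2).div_const _)))
        (iy _ (cy _ hG0)) fun y => ?_
      refine wirtinger_one (fun t => u (Fin.cons t y)) _
        (fun t => hasDerivAt_cons_left n u hd t y)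
        ((hD _).comp (hcons.comp (Continuous.prodMk_left y))) ?_
      have := hper (Fin.cons 0 y) 0
      rw [← this]
      congr 1
      ext j
      refine Fin.cases ?_ (fun j => ?_) j <;> simp
    have s2 : ∫ t in Set.Icc (0:ℝ) (2 * π), ((∫ y in Q, u (Fin.cons t y) ^ 2)
          - (∫ y in Q, u (Fin.cons t y)) ^ 2 / (2 * π) ^ n)
        ≤ ∫ t in Set.Icc (0:ℝ) (2 * π), ∫ y in Q,
          ∑ i : Fin n, (fderiv ℝ u (Fin.cons t y) (Pi.single i.succ 1)) ^ 2 := by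
      refine integral_mono (ix _ ((cx _ hU2).sub (((cx _ hU).pow 2).div_const _)))
        (ix _ (cx _ hG1)) fun t => ?_
      have := ih (fun y => u (Fin.cons t y)) (hu.comp (by
        rw [contDiff_pi]
        intro j
        refine Fin.cases ?_ (fun j => ?_) j
        · simpa using contDiff_const
        · simpa using contDiff_apply ℝ ℝ j)) (fun y i => by
          rw [← hper (Fin.cons t y) i.succ]
          congr 1
          ext j
          refine Fin.cases ?_ (fun j => ?_) j
          · simp [(Fin.succ_ne_zero i).symm]
          · simp [Pi.single_apply])
      simp only [hasFDerivAt_cons_right n u hd] at this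
      exact this
    refine (add_le_add s1 s2).trans_eq ?_
    rw [← integral_add (ix _ (cx _ hG0)) (ix _ (cx _ hG1))]
    congr 1; ext t
    rw [← integral_add (iy _ (sec _ hG0 t)) (iy _ (sec _ hG1 t))]
    congr 1; ext y
    rw [Fin.sum_univ_succ]

theorem first_f_eigenvalue_lower_bound_torus
    (n : ℕ) (hn : 1 ≤ n)
    (f u : (Fin n → ℝ) → ℝ)
    (hf_pos : ∀ x, 0 < f x)
    (hf_cont : Continuous f)
    (hf_per : ∀ (x : Fin n → ℝ) (i : Fin n), f (x + (2 * π) • (Pi.single i 1 : Fin n → ℝ)) = f x)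
    (hu_C1 : ContDiff ℝ 1 u)
    (hu_per : ∀ (x : Fin n → ℝ) (i : Fin n), u (x + (2 * π) • (Pi.single i 1 : Fin n → ℝ)) = u x)
    (hfu : ∫ x in Set.univ.pi fun _ : Fin n => Set.Icc (0:ℝ) (2 * π), f x * u x = 0) :
    ((∫ x in Set.univ.pi fun _ : Fin n => Set.Icc (0:ℝ) (2 * π), f x) ^ 2 /
        ((2 * π) ^ n *
          ∫ x in Set.univ.pi fun _ : Fin n => Set.Icc (0:ℝ) (2 * π), (f x) ^ 2)) *
        (∫ x in Set.univ.pi fun _ : Fin n => Set.Icc (0:ℝ) (2 * π), (u x) ^ 2)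
      ≤ ∫ x in Set.univ.pi fun _ : Fin n => Set.Icc (0:ℝ) (2 * π),
          ∑ i : Fin n, (fderiv ℝ u x (Pi.single i 1 : Fin n → ℝ)) ^ 2 := by
  have hP := poincare_box n u hu_C1 hu_per
  have hvol := box_vol n
  have hQ := box_compact n
  set Q := Set.univ.pi fun _ : Fin n => Set.Icc (0:ℝ) (2 * π) with hQdef
  set V : ℝ := (2 * π) ^ n with hV
  have hVpos : 0 < V := by positivity
  have hu := hu_C1.continuous
  have iy : ∀ w : (Fin n → ℝ) → ℝ, Continuous w → Integrable w (volume.restrict Q) :=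
    fun w hw => hw.continuousOn.integrableOn_compact hQ
  set F := ∫ x in Q, f x with hF
  set F2 := ∫ x in Q, f x ^ 2 with hF2
  set U := ∫ x in Q, u x with hU
  set U2 := ∫ x in Q, u x ^ 2 with hU2
  -- quadratic inequality from expanding a square with four free coefficients
  have quad : ∀ a b c : ℝ, 0 ≤ a ^ 2 * F2 + b ^ 2 * U2 + c ^ 2 * V + 2 * a * c * F
      + 2 * b * c * U := by
    intro a b c
    have h0 : 0 ≤ ∫ x in Q, (a * f x + b * u x + c) ^ 2 := integral_nonneg fun x => sq_nonneg _
    have e : ∀ x, (a * f x + b * u x + c) ^ 2 = a ^ 2 * f x ^ 2 + b ^ 2 * u x ^ 2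
        - (-(2 * a * c)) * f x - (-(2 * b * c)) * u x - (-(2 * a * b)) * (f x * u x) + c ^ 2 := by
      intro x; ring
    simp_rw [e] at h0
    have h1 := h0.trans_eq (integral_six (volume.restrict Q) _ _ _ _ _ _
      ((iy _ (hf_cont.pow 2)).const_mul (a ^ 2)) ((iy _ (hu.pow 2)).const_mul (b ^ 2))
      ((iy _ hf_cont).const_mul (-(2 * a * c))) ((iy _ hu).const_mul (-(2 * b * c)))
      ((iy _ (hf_cont.mul hu)).const_mul (-(2 * a * b)))
      (iy _ (continuous_const (y := c ^ 2))))
    simp only [integral_const_mul, integral_const, measureReal_restrict_apply_univ, hvol,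
      smul_eq_mul, hfu, ← hF, ← hF2, ← hU, ← hU2] at h1
    linarith
  refine le_trans ?_ hP
  have hFpos : 0 < F := by
    rw [hF, setIntegral_pos_iff_support_of_nonneg_ae (Filter.Eventually.of_forall fun x => (hf_pos x).le)
      (iy _ hf_cont)]
    have : Function.support f = Set.univ := by ext x; simp [(hf_pos x).ne']
    rw [this, Set.univ_inter]
    by_contra h
    rw [measureReal_def, nonpos_iff_eq_zero.1 (not_lt.1 h)] at hvol
    simp at hvol
    exact hVpos.ne hvol
  have hF2pos : 0 < F2 := by
    have := quad (-1) 0 (F / V)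
    have h2 : (F / V) ^ 2 * V = F ^ 2 / V := by field_simp
    have h3 : 2 * (-1) * (F / V) * F = - (2 * (F ^ 2 / V)) := by field_simp
    have h4 : 0 < F ^ 2 / V := by positivity
    nlinarith
  -- the discriminant inequality
  have main : F ^ 2 * U2 ≤ V * F2 * (U2 - U ^ 2 / V) := by
    have hU2nn : 0 ≤ U2 := integral_nonneg fun x => sq_nonneg _
    have e : V * F2 * (U2 - U ^ 2 / V) = V * F2 * U2 - F2 * U ^ 2 := by field_simp
    rw [e]
    rcases hU2nn.eq_or_lt with h | h
    · have h1 := quad 0 (-U) (U ^ 2 / V)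
      rw [← h] at h1 ⊢
      have h2 : (0:ℝ) ^ 2 * F2 + (-U) ^ 2 * 0 + (U ^ 2 / V) ^ 2 * V + 2 * 0 * (U ^ 2 / V) * F
          + 2 * (-U) * (U ^ 2 / V) * U = - ((U ^ 2) ^ 2 / V) := by field_simp; ring
      rw [h2] at h1
      have h3 : 0 ≤ (U ^ 2) ^ 2 / V := by positivity
      have h4 : (U ^ 2) ^ 2 / V = 0 := by linarith
      have h5 : U ^ 2 = 0 := by
        rcases div_eq_zero_iff.1 h4 with h6 | h6
        · exact pow_eq_zero_iff (two_ne_zero) |>.1 h6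
        · exact absurd h6 hVpos.ne'
      rw [h5]; simp
    · have h1 := quad (-(F * U2)) (-(U * F2)) (F2 * U2)
      have h2 : (-(F * U2)) ^ 2 * F2 + (-(U * F2)) ^ 2 * U2 + (F2 * U2) ^ 2 * V
          + 2 * (-(F * U2)) * (F2 * U2) * F + 2 * (-(U * F2)) * (F2 * U2) * U
          = (F2 * U2) * (V * F2 * U2 - F2 * U ^ 2 - F ^ 2 * U2) := by ring
      rw [h2] at h1
      have := nonneg_of_mul_nonneg_right h1 (mul_pos hF2pos h)
      linarith
  rw [div_mul_eq_mul_div, div_le_iff₀ (by positivity)]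
  linarith
end

section
/- Let f : ℝ → ℝ be a positive continuous 2π-periodic function. Then there exists a 2π-periodic C¹ function u : ℝ → ℝ, not identically zero, such that ∫₀^{2π} f(θ)u(θ) dθ = 0 and ∫₀^{2π} (u'(θ))² dθ ≤ ∫₀^{2π} u(θ)² dθ. -/
open Real

theorem first_f_eigenvalue_le_first_eigenvalue_circle
    (f : ℝ → ℝ)
    (hf_pos : ∀ θ, 0 < f θ)
    (hf_cont : Continuous f)
    (hf_per : ∀ θ, f (θ + 2 * π) = f θ) :
    ∃ u : ℝ → ℝ, ContDiff ℝ 1 u ∧ (∀ θ, u (θ + 2 * π) = u θ) ∧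
      (¬ ∀ θ, u θ = 0) ∧
      (∫ θ in (0:ℝ)..(2 * π), f θ * u θ) = 0 ∧
      (∫ θ in (0:ℝ)..(2 * π), (deriv u θ) ^ 2) ≤ ∫ θ in (0:ℝ)..(2 * π), (u θ) ^ 2 := by
  obtain ⟨a, b, hab, h0⟩ : ∃ a b : ℝ, (a ≠ 0 ∨ b ≠ 0) ∧
      a * (∫ θ in (0:ℝ)..(2 * π), f θ * cos θ) + b * (∫ θ in (0:ℝ)..(2 * π), f θ * sin θ) = 0 := by
    by_cases h : (∫ θ in (0:ℝ)..(2 * π), f θ * cos θ) = 0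
    · exact ⟨1, 0, by simp, by simp [h]⟩
    · exact ⟨-(∫ θ in (0:ℝ)..(2 * π), f θ * sin θ), ∫ θ in (0:ℝ)..(2 * π), f θ * cos θ,
        Or.inr h, by ring⟩
  have hd : ∀ θ, HasDerivAt (fun θ => a * cos θ + b * sin θ) (a * (-sin θ) + b * cos θ) θ :=
    fun θ => ((hasDerivAt_cos θ).const_mul a).add ((hasDerivAt_sin θ).const_mul b)
  have hd2 : ∀ θ, HasDerivAt (fun θ => a * (-sin θ) + b * cos θ)
      (a * (-cos θ) + b * (-sin θ)) θ :=
    fun θ => ((hasDerivAt_sin θ).neg.const_mul a).add ((hasDerivAt_cos θ).const_mul b)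
  refine ⟨fun θ => a * cos θ + b * sin θ, by fun_prop, by simp, ?_, ?_, ?_⟩
  · intro h
    have h1 := h 0
    have h2 := h (π / 2)
    simp at h1 h2
    tauto
  · refine Eq.trans ?_ h0
    rw [← intervalIntegral.integral_const_mul, ← intervalIntegral.integral_const_mul,
      ← intervalIntegral.integral_add
        (Continuous.intervalIntegrable (by fun_prop) _ _)
        (Continuous.intervalIntegrable (by fun_prop) _ _)]
    congr 1
    funext θ
    ring
  · apply le_of_eq
    simp only [fun θ => (hd θ).deriv]
    rw [← sub_eq_zero, ← intervalIntegral.integral_sub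
        (Continuous.intervalIntegrable (by fun_prop) _ _)
        (Continuous.intervalIntegrable (by fun_prop) _ _),
      intervalIntegral.integral_eq_sub_of_hasDerivAt
        (f := fun θ => (a * cos θ + b * sin θ) * (a * (-sin θ) + b * cos θ))
        (fun θ _ => ((hd θ).mul (hd2 θ)).congr_deriv (by ring))
        (Continuous.intervalIntegrable (by fun_prop) _ _)]
    simp
end

section
/- Let f : ℝ → ℝ be a positive continuous 2π-periodic function such that ∫₀^{2π} f(θ)cos θ dθ ≠ 0 or ∫₀^{2π} f(θ)sin θ dθ ≠ 0 (i.e. f is not orthogonal to the first eigenspace of the circle). Then there exists a 2π-periodic C¹ function u : ℝ → ℝ, not identically zero, such that ∫₀^{2π} f(θ)u(θ) dθ = 0 and ∫₀^{2π} (u'(θ))² dθ < ∫₀^{2π} u(θ)² dθ. -/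
open Real

lemma circle_aux (f g : ℝ → ℝ) (hf_pos : ∀ θ, 0 < f θ) (hf_cont : Continuous f)
    (hg : ContDiff ℝ 1 g) (hgp : ∀ θ, g (θ + 2 * π) = g θ)
    (hg0 : (∫ θ in (0:ℝ)..(2 * π), g θ) = 0)
    (hge : (∫ θ in (0:ℝ)..(2 * π), (deriv g θ) ^ 2) = ∫ θ in (0:ℝ)..(2 * π), (g θ) ^ 2)
    (hne : (∫ θ in (0:ℝ)..(2 * π), f θ * g θ) ≠ 0) :
    ∃ u : ℝ → ℝ, ContDiff ℝ 1 u ∧ (∀ θ, u (θ + 2 * π) = u θ) ∧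
      (¬ ∀ θ, u θ = 0) ∧
      (∫ θ in (0:ℝ)..(2 * π), f θ * u θ) = 0 ∧
      (∫ θ in (0:ℝ)..(2 * π), (deriv u θ) ^ 2) < ∫ θ in (0:ℝ)..(2 * π), (u θ) ^ 2 := by
  have hgc : Continuous g := hg.continuous
  have hF : 0 < ∫ θ in (0:ℝ)..(2 * π), f θ :=
    intervalIntegral.intervalIntegral_pos_of_pos (hf_cont.intervalIntegrable _ _) hf_pos
      (by positivity)
  obtain ⟨c, hc⟩ : ∃ c, c = (∫ θ in (0:ℝ)..(2 * π), f θ * g θ) / ∫ θ in (0:ℝ)..(2 * π), f θ :=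
    ⟨_, rfl⟩
  have hc0 : c ≠ 0 := by rw [hc]; exact div_ne_zero hne hF.ne'
  have hlt : (∫ θ in (0:ℝ)..(2 * π), (deriv (fun θ => g θ - c) θ) ^ 2)
      < ∫ θ in (0:ℝ)..(2 * π), (g θ - c) ^ 2 := by
    have h1 : (∫ θ in (0:ℝ)..(2 * π), (g θ - c) ^ 2)
        = (∫ θ in (0:ℝ)..(2 * π), (g θ) ^ 2) + 2 * π * c ^ 2 := by
      have : ∀ θ, (g θ - c) ^ 2 = (g θ) ^ 2 - (2 * c) * g θ + c ^ 2 := fun θ => by ring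
      simp_rw [this]
      rw [intervalIntegral.integral_add, intervalIntegral.integral_sub,
        intervalIntegral.integral_const_mul, hg0]
      · simp
      all_goals exact Continuous.intervalIntegrable (by fun_prop) _ _
    simp only [deriv_sub_const]
    rw [h1, hge]
    have : 0 < 2 * π * c ^ 2 := by positivity
    linarith
  refine ⟨fun θ => g θ - c, hg.sub contDiff_const, fun θ => by simp [hgp], ?_, ?_, hlt⟩
  · intro h0
    have h0' : (fun θ => g θ - c) = fun _ => 0 := funext h0
    have h0'' : ∀ θ, g θ - c = 0 := h0
    rw [h0'] at hlt
    simp [h0''] at hlt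
  · have : ∀ θ, f θ * (g θ - c) = f θ * g θ - c * f θ := fun θ => by ring
    simp_rw [this]
    rw [intervalIntegral.integral_sub, intervalIntegral.integral_const_mul, hc]
    · field_simp
      simp
    all_goals exact Continuous.intervalIntegrable (by fun_prop) _ _

theorem first_f_eigenvalue_strictly_less_circle
    (f : ℝ → ℝ)
    (hf_pos : ∀ θ, 0 < f θ)
    (hf_cont : Continuous f)
    (hf_per : ∀ θ, f (θ + 2 * π) = f θ)
    (hf_not_orth : (∫ θ in (0:ℝ)..(2 * π), f θ * Real.cos θ) ≠ 0 ∨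
      (∫ θ in (0:ℝ)..(2 * π), f θ * Real.sin θ) ≠ 0) :
    ∃ u : ℝ → ℝ, ContDiff ℝ 1 u ∧ (∀ θ, u (θ + 2 * π) = u θ) ∧
      (¬ ∀ θ, u θ = 0) ∧
      (∫ θ in (0:ℝ)..(2 * π), f θ * u θ) = 0 ∧
      (∫ θ in (0:ℝ)..(2 * π), (deriv u θ) ^ 2) < ∫ θ in (0:ℝ)..(2 * π), (u θ) ^ 2 := by
  rcases hf_not_orth with h | h
  · refine circle_aux f Real.cos hf_pos hf_cont Real.contDiff_cos Real.cos_add_two_pi ?_ ?_ h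
    · simp
    · simp [integral_sin_sq, integral_cos_sq]
  · refine circle_aux f Real.sin hf_pos hf_cont Real.contDiff_sin Real.sin_add_two_pi ?_ ?_ h
    · simp
    · simp [integral_sin_sq, integral_cos_sq]
end

section
/- Fix an integer k ≥ 1. List the Laplace eigenfunctions on the circle (with multiplicity) as e₀ = 1, e₁(θ) = cos θ, e₂(θ) = sin θ, e₃(θ) = cos 2θ, e₄(θ) = sin 2θ, …, so that the k-th eigenvalue (with multiplicity) is λ_k = ⌈k/2⌉². Let f : ℝ → ℝ be a positive continuous 2π-periodic function and let ψ₁, …, ψ_{k−1} : ℝ → ℝ be any continuous 2π-periodic functions. Then there exists a function u in the linear span of {e₀, e₁, …, e_k}, not identically zero, with ∫₀^{2π} f u dθ = 0, ∫₀^{2π} ψᵢ u dθ = 0 for all 1 ≤ i ≤ k−1, and ∫₀^{2π} (u')² dθ ≤ ⌈k/2⌉² · ∫₀^{2π} u² dθ. -/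
open Real

lemma aux_int_cos (p : ℤ) (hp : p ≠ 0) (φ : ℝ) :
    ∫ θ in (0:ℝ)..(2 * π), Real.cos (p * θ - φ) = 0 := by
  have hp' : (p : ℝ) ≠ 0 := by exact_mod_cast hp
  rw [intervalIntegral.integral_comp_mul_sub (fun x => Real.cos x) hp', integral_cos]
  have : Real.sin (p * (2 * π) - φ) = Real.sin (p * 0 - φ) := by
    have := Real.sin_add_int_mul_two_pi (-φ) p
    rw [mul_zero, zero_sub, ← this]; congr 1; ring
  rw [this]; simp

lemma aux_prod (a b : ℕ) (φ χ : ℝ) :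
    ∫ θ in (0:ℝ)..(2 * π), Real.cos (a * θ - φ) * Real.cos (b * θ - χ) =
      (∫ θ in (0:ℝ)..(2 * π), Real.cos (((a + b : ℤ) : ℝ) * θ - (φ + χ))) / 2 +
      (∫ θ in (0:ℝ)..(2 * π), Real.cos (((a - b : ℤ) : ℝ) * θ - (φ - χ))) / 2 := by
  rw [← add_div, ← intervalIntegral.integral_add
    (Continuous.intervalIntegrable (by fun_prop) _ _)
    (Continuous.intervalIntegrable (by fun_prop) _ _), ← intervalIntegral.integral_div]
  congr 1; ext θ
  have h1 : ((a + b : ℤ) : ℝ) * θ - (φ + χ) = (a * θ - φ) + (b * θ - χ) := by push_cast; ring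
  have h2 : ((a - b : ℤ) : ℝ) * θ - (φ - χ) = (a * θ - φ) - (b * θ - χ) := by push_cast; ring
  rw [h1, h2, Real.cos_add (a * θ - φ), Real.cos_sub (a * θ - φ)]; ring

lemma aux_ne (a b : ℕ) (hab : a ≠ b) (φ χ : ℝ) :
    ∫ θ in (0:ℝ)..(2 * π), Real.cos (a * θ - φ) * Real.cos (b * θ - χ) = 0 := by
  rw [aux_prod, aux_int_cos _ (by omega), aux_int_cos _ (by omega)]; simp

lemma aux_eq (a : ℕ) (ha : a ≠ 0) (φ χ : ℝ) :
    ∫ θ in (0:ℝ)..(2 * π), Real.cos (a * θ - φ) * Real.cos (a * θ - χ) =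
      π * Real.cos (φ - χ) := by
  rw [aux_prod, aux_int_cos _ (by omega)]
  have : ∀ θ : ℝ, ((a - a : ℤ) : ℝ) * θ - (φ - χ) = -(φ - χ) := by intro θ; simp
  simp only [this, Real.cos_neg]
  simp; ring

lemma aux_sq {m : ℕ} (c : Fin m → ℝ) (g : Fin m → ℝ → ℝ) (hg : ∀ i, Continuous (g i))
    (ho : ∀ i j, i ≠ j → ∫ θ in (0:ℝ)..(2 * π), g i θ * g j θ = 0) :
    ∫ θ in (0:ℝ)..(2 * π), (∑ i, c i * g i θ) ^ 2 =
      ∑ i, c i ^ 2 * ∫ θ in (0:ℝ)..(2 * π), g i θ * g i θ := by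
  have h : ∀ θ, (∑ i, c i * g i θ) ^ 2 = ∑ i, ∑ j, (c i * c j) * (g i θ * g j θ) := by
    intro θ
    rw [sq, Finset.sum_mul_sum]
    refine Finset.sum_congr rfl fun i _ => Finset.sum_congr rfl fun j _ => by ring
  simp only [h]
  rw [intervalIntegral.integral_finsetSum
    (fun i _ => Continuous.intervalIntegrable (by fun_prop) _ _)]
  refine Finset.sum_congr rfl fun i _ => ?_
  rw [intervalIntegral.integral_finsetSum
    (fun i _ => Continuous.intervalIntegrable (by fun_prop) _ _)]
  simp only [intervalIntegral.integral_const_mul]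
  rw [Finset.sum_eq_single i]
  · rw [sq]
  · intro j _ hj
    rw [ho i j (Ne.symm hj), mul_zero]
  · simp

lemma aux_ker (k : ℕ) (hk : 1 ≤ k) (a : Fin (k + 1) → ℝ) (b : Fin (k - 1) → Fin (k + 1) → ℝ) :
    ∃ c : Fin (k + 1) → ℝ, c ≠ 0 ∧ ∑ j, c j * a j = 0 ∧ ∀ i, ∑ j, c j * b i j = 0 := by
  let M : Matrix (Option (Fin (k - 1))) (Fin (k + 1)) ℝ := fun o j => o.elim (a j) (fun i => b i j)
  have hker : LinearMap.ker (Matrix.toLin' M) ≠ ⊥ :=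
    LinearMap.ker_ne_bot_of_finrank_lt (by simp; omega)
  obtain ⟨c, hc, hc0⟩ := Submodule.exists_mem_ne_zero_of_ne_bot hker
  rw [LinearMap.mem_ker, Matrix.toLin'_apply] at hc
  refine ⟨c, hc0, ?_, fun i => ?_⟩
  · have := congrFun hc none
    simpa [M, Matrix.mulVec, dotProduct, mul_comm] using this
  · have := congrFun hc (some i)
    simpa [M, Matrix.mulVec, dotProduct, mul_comm] using this

/-- phase of the `i`-th eigenfunction -/
noncomputable def auxPhase (i : ℕ) : ℝ := if i ≠ 0 ∧ i % 2 = 0 then π / 2 else 0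

lemma auxPhase_diff (i j : ℕ) (hij : i ≠ j) (h : (i + 1) / 2 = (j + 1) / 2) :
    Real.cos (auxPhase i - auxPhase j) = 0 := by
  rcases Nat.mod_two_eq_zero_or_one i with hi | hi <;>
  rcases Nat.mod_two_eq_zero_or_one j with hj | hj
  · omega
  · have : auxPhase i = π / 2 := if_pos ⟨by omega, hi⟩
    have : auxPhase j = 0 := if_neg (by omega)
    simp [*]
  · have : auxPhase j = π / 2 := if_pos ⟨by omega, hj⟩
    have : auxPhase i = 0 := if_neg (by omega)
    simp [*]
  · omega

theorem kth_f_eigenvalue_le_kth_eigenvalue_circle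
    (k : ℕ) (hk : 1 ≤ k)
    (e : ℕ → ℝ → ℝ)
    (he0 : ∀ θ, e 0 θ = 1)
    (he_cos : ∀ m : ℕ, 1 ≤ m → ∀ θ, e (2 * m - 1) θ = Real.cos (m * θ))
    (he_sin : ∀ m : ℕ, 1 ≤ m → ∀ θ, e (2 * m) θ = Real.sin (m * θ))
    (f : ℝ → ℝ)
    (hf_pos : ∀ θ, 0 < f θ)
    (hf_cont : Continuous f)
    (hf_per : ∀ θ, f (θ + 2 * π) = f θ)
    (ψ : Fin (k - 1) → ℝ → ℝ)
    (hψ_cont : ∀ i, Continuous (ψ i))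
    (hψ_per : ∀ i θ, ψ i (θ + 2 * π) = ψ i θ) :
    ∃ u : ℝ → ℝ,
      (∃ c : Fin (k + 1) → ℝ, ∀ θ, u θ = ∑ i : Fin (k + 1), c i * e i θ) ∧
      (¬ ∀ θ, u θ = 0) ∧
      (∫ θ in (0:ℝ)..(2 * π), f θ * u θ) = 0 ∧
      (∀ i : Fin (k - 1), (∫ θ in (0:ℝ)..(2 * π), ψ i θ * u θ) = 0) ∧
      (∫ θ in (0:ℝ)..(2 * π), (deriv u θ) ^ 2) ≤
        (((k + 1) / 2 : ℕ) : ℝ) ^ 2 * ∫ θ in (0:ℝ)..(2 * π), (u θ) ^ 2 := by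
  have he : ∀ i θ, e i θ = Real.cos ((((i + 1) / 2 : ℕ) : ℝ) * θ - auxPhase i) := by
    intro i θ
    rcases Nat.even_or_odd' i with ⟨m, rfl | rfl⟩
    · rcases Nat.eq_zero_or_pos m with rfl | hm
      · simp [he0, auxPhase]
      · have h1 : auxPhase (2 * m) = π / 2 := if_pos ⟨by omega, by omega⟩
        have h2 : (2 * m + 1) / 2 = m := by omega
        rw [he_sin m hm, h1, h2, Real.cos_sub_pi_div_two]
    · have h1 : auxPhase (2 * m + 1) = 0 := if_neg (by omega)
      have h2 : (2 * m + 1 + 1) / 2 = m + 1 := by omega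
      have h3 := he_cos (m + 1) (by omega) θ
      rw [show 2 * (m + 1) - 1 = 2 * m + 1 by omega] at h3
      rw [h3, h1, h2, sub_zero]
  have hec : ∀ i, Continuous (e i) := by
    intro i
    rw [show e i = _ from funext (he i)]
    fun_prop
  have horth : ∀ (φ : ℝ) (i j : Fin (k + 1)), i ≠ j → ∫ θ in (0:ℝ)..(2 * π),
      Real.cos ((((i + 1) / 2 : ℕ) : ℝ) * θ - (auxPhase i + φ)) *
      Real.cos ((((j + 1) / 2 : ℕ) : ℝ) * θ - (auxPhase j + φ)) = 0 := by
    intro φ i j hij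
    have hij' : (i : ℕ) ≠ j := fun h => hij (Fin.ext h)
    by_cases h : ((i : ℕ) + 1) / 2 = ((j : ℕ) + 1) / 2
    · rw [← h, aux_eq _ (by omega), add_sub_add_right_eq_sub, auxPhase_diff _ _ hij' h, mul_zero]
    · exact aux_ne _ _ h _ _
  obtain ⟨c, hc0, hcf, hcψ⟩ := aux_ker k hk (fun j => ∫ θ in (0:ℝ)..(2 * π), f θ * e j θ)
    (fun i j => ∫ θ in (0:ℝ)..(2 * π), ψ i θ * e j θ)
  have hint : ∀ g : ℝ → ℝ, Continuous g →
      ∫ θ in (0:ℝ)..(2 * π), g θ * ∑ i : Fin (k + 1), c i * e i θ =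
        ∑ j : Fin (k + 1), c j * ∫ θ in (0:ℝ)..(2 * π), g θ * e j θ := by
    intro g hg
    simp only [Finset.mul_sum, mul_left_comm (g _)]
    rw [intervalIntegral.integral_finsetSum
      (fun i _ => Continuous.intervalIntegrable
        (by have := hec i; fun_prop) _ _)]
    simp only [intervalIntegral.integral_const_mul]
  have hG : ∀ i : ℕ, π ≤ ∫ θ in (0:ℝ)..(2 * π), e i θ * e i θ := by
    intro i
    by_cases h : i = 0
    · subst h
      simp [he0]; linarith [Real.pi_pos]
    · simp only [he]
      rw [aux_eq _ (by omega)]; simp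
  have hu2 : ∫ θ in (0:ℝ)..(2 * π), (∑ i : Fin (k + 1), c i * e i θ) ^ 2 =
      ∑ i : Fin (k + 1), c i ^ 2 * ∫ θ in (0:ℝ)..(2 * π), e i θ * e i θ := by
    apply aux_sq c (fun i => e i) (fun i => hec i)
    intro i j hij
    have := horth 0 i j hij
    simpa [he] using this
  have hd : ∀ θ, deriv (fun θ => ∑ i : Fin (k + 1), c i * e i θ) θ =
      ∑ i : Fin (k + 1), (-(c i * (((i + 1) / 2 : ℕ) : ℝ))) *
        Real.cos ((((i + 1) / 2 : ℕ) : ℝ) * θ - (auxPhase i + π / 2)) := by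
    intro θ
    apply HasDerivAt.deriv
    apply HasDerivAt.fun_sum
    intro i _
    rw [show e i = _ from funext (he i)]
    have h := ((((hasDerivAt_id θ).const_mul (((i + 1) / 2 : ℕ) : ℝ)).sub_const
      (auxPhase i)).cos).const_mul (c i)
    refine HasDerivAt.congr_deriv h ?_
    rw [← sub_sub, Real.cos_sub_pi_div_two]
    simp only [id]; ring
  have hdu2 : ∫ θ in (0:ℝ)..(2 * π),
      (deriv (fun θ => ∑ i : Fin (k + 1), c i * e i θ) θ) ^ 2 =
      ∑ i : Fin (k + 1), c i ^ 2 * ((((i + 1) / 2 : ℕ) : ℝ) ^ 2 * π) := by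
    simp only [hd]
    rw [aux_sq _ (fun (i : Fin (k + 1)) θ =>
      Real.cos ((((i + 1) / 2 : ℕ) : ℝ) * θ - (auxPhase i + π / 2)))
      (fun i => by fun_prop) (horth (π / 2))]
    refine Finset.sum_congr rfl fun i _ => ?_
    by_cases h : ((i : ℕ) + 1) / 2 = 0
    · simp [h]
    · rw [aux_eq _ h, sub_self, Real.cos_zero]; ring
  refine ⟨fun θ => ∑ i : Fin (k + 1), c i * e i θ, ⟨c, fun _ => rfl⟩, ?_, ?_, ?_, ?_⟩
  · intro h0
    apply hc0
    simp only [h0] at hu2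
    have hz : ∑ i : Fin (k + 1), c i ^ 2 * ∫ θ in (0:ℝ)..(2 * π), e i θ * e i θ = 0 := by
      rw [← hu2]; simp
    rw [Finset.sum_eq_zero_iff_of_nonneg (fun (i : Fin (k + 1)) _ =>
      mul_nonneg (sq_nonneg (c i)) (Real.pi_pos.le.trans (hG i)))] at hz
    ext i
    rcases mul_eq_zero.1 (hz i (Finset.mem_univ i)) with h | h
    · simpa using h
    · linarith [hG i, Real.pi_pos]
  · rw [hint f hf_cont]; exact hcf
  · intro i
    rw [hint (ψ i) (hψ_cont i)]; exact hcψ i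
  · rw [hdu2, hu2, Finset.mul_sum]
    refine Finset.sum_le_sum fun i _ => ?_
    have h1 : (((i + 1) / 2 : ℕ) : ℝ) ≤ (((k + 1) / 2 : ℕ) : ℝ) := by
      have := i.2
      exact_mod_cast (by omega : ((i : ℕ) + 1) / 2 ≤ (k + 1) / 2)
    rw [mul_left_comm]
    have := hG i
    have := Real.pi_pos
    gcongr
end

section
/- Fix an integer k ≥ 2. Let f : ℝ → ℝ be a positive continuous 2π-periodic function, and let u₁, …, u_k : ℝ → ℝ be 2π-periodic C² functions, none identically zero, pairwise orthogonal in L²([0,2π]), each satisfying ∫₀^{2π} f uᵢ dθ = 0 and uᵢ'' + μᵢuᵢ = cᵢ f on ℝ for some real constants cᵢ, where μ₁ ≤ μ₂ ≤ … ≤ μ_k. Then μ_k ≥ ⌈(k−1)/2⌉². -/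
open Real

/-- Pythagoras for a finite family of pairwise orthogonal continuous functions. -/
lemma integral_sq_sum_orth {k : ℕ} (g : Fin k → ℝ → ℝ) (hg : ∀ i, Continuous (g i))
    (ho : ∀ i j, i ≠ j → (∫ θ in (0:ℝ)..(2 * π), g i θ * g j θ) = 0) (a : Fin k → ℝ) :
    (∫ θ in (0:ℝ)..(2 * π), (∑ i, a i * g i θ) ^ 2)
      = ∑ i, a i ^ 2 * ∫ θ in (0:ℝ)..(2 * π), g i θ * g i θ := by
  have h1 : ∀ θ, (∑ i, a i * g i θ) ^ 2
      = ∑ i, ∑ j, (a i * a j) * (g i θ * g j θ) := by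
    intro θ
    rw [sq, Finset.sum_mul_sum]
    exact Finset.sum_congr rfl fun i _ => Finset.sum_congr rfl fun j _ => by ring
  simp_rw [h1]
  rw [intervalIntegral.integral_finsetSum]
  · refine Finset.sum_congr rfl fun i _ => ?_
    rw [intervalIntegral.integral_finsetSum]
    · simp_rw [intervalIntegral.integral_const_mul]
      rw [Finset.sum_eq_single i]
      · ring
      · intro j _ hj
        rw [ho i j hj.symm, mul_zero]
      · simp
    · intro j _
      exact (continuous_const.mul ((hg i).mul (hg j))).intervalIntegrable _ _
  · intro i _
    exact (continuous_finsetSum _ fun j _ =>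
      continuous_const.mul ((hg i).mul (hg j))).intervalIntegrable _ _

/-- Higher Wirtinger inequality. -/
lemma wirtinger_high (m : ℕ) (v v' : ℝ → ℝ) (hv : ∀ x, HasDerivAt v (v' x) x)
    (hv' : Continuous v') (hper : v (2 * π) = v 0)
    (h0 : ∀ n : ℤ, -(m : ℤ) < n → n < m →
      (∫ θ in (0:ℝ)..(2 * π), v θ * (cos (n * θ) + sin (n * θ))) = 0) :
    (m : ℝ) ^ 2 * (∫ θ in (0:ℝ)..(2 * π), v θ ^ 2) ≤ ∫ θ in (0:ℝ)..(2 * π), v' θ ^ 2 := by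
  have hpi : (0:ℝ) < 2 * π := by positivity
  have hvc : Continuous v := continuous_iff_continuousAt.2 fun x => (hv x).continuousAt
  have memLp : ∀ w : ℝ → ℝ, Continuous w →
      MeasureTheory.MemLp (fun x => (w x : ℂ)) 2
        (MeasureTheory.volume.restrict (Set.Ioc 0 (2 * π))) := by
    intro w hw
    have hw' : Continuous (fun x => (w x : ℂ)) := Complex.continuous_ofReal.comp hw
    obtain ⟨C, hC⟩ := (isCompact_Icc (a := (0:ℝ)) (b := 2 * π)).exists_bound_of_continuousOn
      hw'.continuousOn
    refine MeasureTheory.MemLp.of_bound hw'.aestronglyMeasurable C ?_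
    refine (MeasureTheory.ae_restrict_iff' measurableSet_Ioc).2 (Filter.Eventually.of_forall ?_)
    intro x hx
    exact hC x (Set.Ioc_subset_Icc_self hx)
  have P1 := hasSum_sq_fourierCoeffOn hpi (memLp v hvc)
  have P2 := hasSum_sq_fourierCoeffOn hpi (memLp v' hv')
  have key : ∀ n : ℤ, (m : ℝ) ^ 2 * ‖fourierCoeffOn hpi (fun x => (v x : ℂ)) n‖ ^ 2
      ≤ ‖fourierCoeffOn hpi (fun x => (v' x : ℂ)) n‖ ^ 2 := by
    intro n
    by_cases hn : -(m : ℤ) < n ∧ n < m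
    · have hz : fourierCoeffOn hpi (fun x => (v x : ℂ)) n = 0 := by
        rw [fourierCoeffOn_eq_integral]
        have hp := h0 n hn.1 hn.2
        have hm := h0 (-n) (by omega) (by omega)
        have ic : IntervalIntegrable (fun θ => v θ * cos (n * θ)) MeasureTheory.volume
            0 (2 * π) := Continuous.intervalIntegrable (by fun_prop) _ _
        have is : IntervalIntegrable (fun θ => v θ * sin (n * θ)) MeasureTheory.volume
            0 (2 * π) := Continuous.intervalIntegrable (by fun_prop) _ _
        have hp' : (∫ θ in (0:ℝ)..(2 * π), v θ * cos (n * θ))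
            + (∫ θ in (0:ℝ)..(2 * π), v θ * sin (n * θ)) = 0 := by
          rw [← intervalIntegral.integral_add ic is]
          refine Eq.trans ?_ hp
          congr 1; ext θ; ring
        have hm' : (∫ θ in (0:ℝ)..(2 * π), v θ * cos (n * θ))
            - (∫ θ in (0:ℝ)..(2 * π), v θ * sin (n * θ)) = 0 := by
          rw [← intervalIntegral.integral_sub ic is]
          refine Eq.trans ?_ hm
          congr 1; ext θ
          push_cast
          rw [neg_mul, cos_neg, sin_neg]; ring
        have hc : (∫ θ in (0:ℝ)..(2 * π), v θ * cos (n * θ)) = 0 := by linarith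
        have hs : (∫ θ in (0:ℝ)..(2 * π), v θ * sin (n * θ)) = 0 := by linarith
        have e : ∀ x : ℝ, (fourier (-n) (x : AddCircle (2 * π - 0)) : ℂ) • (v x : ℂ)
            = ((v x * cos (n * x) : ℝ) : ℂ) - Complex.I * ((v x * sin (n * x) : ℝ) : ℂ) := by
          intro x
          rw [fourier_coe_apply]
          have hpc : (π : ℂ) ≠ 0 := by exact_mod_cast pi_ne_zero
          have : (2 * π * Complex.I * ((-n : ℤ) : ℂ) * x / ((2 * π - 0 : ℝ) : ℂ))
              = ((-(n * x) : ℝ) : ℂ) * Complex.I := by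
            push_cast
            field_simp
            ring
          rw [this, Complex.exp_mul_I, ← Complex.ofReal_cos, ← Complex.ofReal_sin, cos_neg, sin_neg,
            smul_eq_mul]
          push_cast
          ring
        simp_rw [e]
        rw [intervalIntegral.integral_sub, intervalIntegral.integral_const_mul,
          intervalIntegral.integral_ofReal, intervalIntegral.integral_ofReal, hc, hs]
        · simp
        · exact Continuous.intervalIntegrable (by fun_prop) _ _
        · exact Continuous.intervalIntegrable (by fun_prop) _ _
      rw [hz]; simp
    · have hnm : (m : ℤ) ≤ |n| := by
        rcases abs_cases n with h | h <;> omega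
      by_cases hn0 : n = 0
      · have : m = 0 := by subst hn0; simp at hnm; exact hnm
        subst this; simp
      · have hd := fourierCoeffOn_of_hasDerivAt hpi hn0 (f := fun x => (v x : ℂ))
          (f' := fun x => (v' x : ℂ)) (fun x _ => (hv x).ofReal_comp)
          ((Complex.continuous_ofReal.comp hv').intervalIntegrable _ _)
        have hpc : (π : ℂ) ≠ 0 := by exact_mod_cast pi_ne_zero
        have hnc : (n : ℂ) ≠ 0 := by exact_mod_cast hn0
        have h2 : fourierCoeffOn hpi (fun x => (v' x : ℂ)) n
            = Complex.I * n * fourierCoeffOn hpi (fun x => (v x : ℂ)) n := by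
          rw [hd, hper]
          push_cast
          field_simp
          ring
        rw [h2, norm_mul, norm_mul, Complex.norm_I, one_mul, mul_pow, Complex.norm_intCast]
        gcongr
        exact_mod_cast hnm
  have := hasSum_le key (P1.mul_left _) P2
  simp only [Complex.norm_real, norm_eq_abs, sq_abs, smul_eq_mul, sub_zero] at this
  have hinv : 0 < (2 * π)⁻¹ := by positivity
  rw [mul_left_comm] at this
  exact le_of_mul_le_mul_left this hinv

theorem kth_f_eigenvalue_ge_previous_eigenvalue_circle
    (k : ℕ) (hk : 2 ≤ k)
    (f : ℝ → ℝ)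
    (hf_pos : ∀ θ, 0 < f θ)
    (hf_cont : Continuous f)
    (hf_per : ∀ θ, f (θ + 2 * π) = f θ)
    (u : Fin k → ℝ → ℝ) (μ c : Fin k → ℝ)
    (hu_C2 : ∀ i, ContDiff ℝ 2 (u i))
    (hu_per : ∀ i θ, u i (θ + 2 * π) = u i θ)
    (hu_ne : ∀ i, ¬ ∀ θ, u i θ = 0)
    (hu_orth : ∀ i j, i ≠ j → (∫ θ in (0:ℝ)..(2 * π), u i θ * u j θ) = 0)
    (hfu : ∀ i, (∫ θ in (0:ℝ)..(2 * π), f θ * u i θ) = 0)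
    (heig : ∀ i θ, deriv (deriv (u i)) θ + μ i * u i θ = c i * f θ)
    (hμ_mono : Monotone μ) :
    (((k / 2 : ℕ) : ℝ)) ^ 2 ≤ μ ⟨k - 1, by omega⟩ := by
  have hpi : (0:ℝ) < 2 * π := by positivity
  have huc : ∀ i, Continuous (u i) := fun i => (hu_C2 i).continuous
  have hud : ∀ i x, HasDerivAt (u i) (deriv (u i) x) x := fun i x =>
    ((hu_C2 i).differentiable (by norm_num) x).hasDerivAt
  have hC1 : ∀ i, ContDiff ℝ 1 (deriv (u i)) := fun i =>
    ((contDiff_succ_iff_deriv (n := 1)).1 (by simpa [one_add_one_eq_two] using hu_C2 i)).2.2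
  have hu'c : ∀ i, Continuous (deriv (u i)) := fun i => (hC1 i).continuous
  have hu'd : ∀ i x, HasDerivAt (deriv (u i)) (deriv (deriv (u i)) x) x := fun i x =>
    ((hC1 i).differentiable (by norm_num) x).hasDerivAt
  have hu''c : ∀ i, Continuous (deriv (deriv (u i))) := fun i =>
    (hC1 i).continuous_deriv (by norm_num)
  have hu'per : ∀ i, deriv (u i) (2 * π) = deriv (u i) 0 := by
    intro i
    have h : (fun θ => u i (θ + 2 * π)) = u i := funext (hu_per i)
    have h2 := deriv_comp_add_const (u i) (2 * π) 0
    rw [h] at h2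
    rw [h2, zero_add]
  have hu2 : ∀ i, u i (2 * π) = u i 0 := fun i => by
    have := hu_per i 0
    rwa [zero_add] at this
  -- energies
  have hen : ∀ i j, (∫ θ in (0:ℝ)..(2 * π), deriv (u i) θ * deriv (u j) θ)
      = μ i * ∫ θ in (0:ℝ)..(2 * π), u i θ * u j θ := by
    intro i j
    rw [intervalIntegral.integral_mul_deriv_eq_deriv_mul (fun x _ => hu'd i x)
      (fun x _ => hud j x) ((hu''c i).intervalIntegrable _ _) ((hu'c j).intervalIntegrable _ _),
      hu'per, hu2]
    have e : ∀ θ, deriv (deriv (u i)) θ * u j θ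
        = c i * (f θ * u j θ) - μ i * (u i θ * u j θ) := by
      intro θ
      have := heig i θ
      have h : deriv (deriv (u i)) θ = c i * f θ - μ i * u i θ := by linarith
      rw [h]; ring
    simp_rw [e]
    rw [intervalIntegral.integral_sub, intervalIntegral.integral_const_mul,
      intervalIntegral.integral_const_mul, hfu]
    · ring
    · exact (continuous_const.mul (hf_cont.mul (huc j))).intervalIntegrable _ _
    · exact (continuous_const.mul ((huc i).mul (huc j))).intervalIntegrable _ _
  have hpos : ∀ i, 0 < ∫ θ in (0:ℝ)..(2 * π), u i θ * u i θ := by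
    intro i
    apply intervalIntegral.integral_pos hpi ((huc i).mul (huc i)).continuousOn
    · intro x _; exact mul_self_nonneg _
    · have hne := hu_ne i
      push Not at hne
      obtain ⟨θ, hθ⟩ := hne
      have hp : Function.Periodic (u i) (2 * π) := hu_per i
      obtain ⟨y, hy, hy2⟩ := hp.exists_mem_Ico₀ hpi θ
      refine ⟨y, Set.Ico_subset_Icc_self hy, ?_⟩
      change 0 < u i y * u i y
      rw [← hy2]
      exact mul_self_pos.2 hθ
  -- dimension count
  set m := k / 2 with hm
  let ι := ↥(Finset.Ioo (-(m : ℤ)) m)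
  let A : ι → Fin k → ℝ := fun n i =>
    ∫ θ in (0:ℝ)..(2 * π), u i θ * (cos ((n : ℤ) * θ) + sin ((n : ℤ) * θ))
  have hker : LinearMap.ker (Matrix.mulVecLin (Matrix.of A)) ≠ ⊥ := by
    apply LinearMap.ker_ne_bot_of_finrank_lt
    simp only [Module.finrank_fintype_fun_eq_card, Fintype.card_fin, ι, Fintype.card_coe,
      Int.card_Ioo]
    omega
  obtain ⟨a, ha, ha0⟩ := (Submodule.ne_bot_iff _).1 hker
  have hA : ∀ n : ι, ∑ i, A n i * a i = 0 := by
    intro n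
    have := congrFun (LinearMap.mem_ker.1 ha) n
    simpa [Matrix.mulVec, dotProduct] using this
  have hW := wirtinger_high m (fun θ => ∑ i, a i * u i θ) (fun θ => ∑ i, a i * deriv (u i) θ)
    (fun x => HasDerivAt.fun_sum fun i _ => (hud i x).const_mul (a i))
    (continuous_finsetSum _ fun i _ => continuous_const.mul (hu'c i))
    (by simp only [hu2])
    (by
      intro n h1 h2
      refine Eq.trans ?_ (hA ⟨n, Finset.mem_Ioo.2 ⟨h1, h2⟩⟩)
      simp_rw [Finset.sum_mul]
      rw [intervalIntegral.integral_finsetSum]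
      · refine Finset.sum_congr rfl fun i _ => ?_
        simp only [A]
        rw [← intervalIntegral.integral_mul_const]
        congr 1; ext θ; ring
      · intro i _
        have := huc i
        exact Continuous.intervalIntegrable (by fun_prop) _ _)
  rw [integral_sq_sum_orth u huc hu_orth, integral_sq_sum_orth (fun i => deriv (u i)) hu'c
    (fun i j hij => by rw [hen, hu_orth i j hij, mul_zero])] at hW
  simp_rw [hen] at hW
  set M := μ ⟨k - 1, by omega⟩ with hM
  set N : Fin k → ℝ := fun i => ∫ θ in (0:ℝ)..(2 * π), u i θ * u i θ with hN
  have hS : 0 < ∑ i, a i ^ 2 * N i := by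
    obtain ⟨i, hi⟩ := Function.ne_iff.1 ha0
    refine Finset.sum_pos' (fun j _ => mul_nonneg (sq_nonneg _) (hpos j).le) ⟨i, Finset.mem_univ _, ?_⟩
    exact mul_pos (by have : a i ≠ 0 := hi
                      positivity) (hpos i)
  have hle : ∑ i, a i ^ 2 * (μ i * N i) ≤ M * ∑ i, a i ^ 2 * N i := by
    rw [Finset.mul_sum]
    refine Finset.sum_le_sum fun i _ => ?_
    have h1 : μ i ≤ M := hμ_mono (Fin.le_def.2 (by have := i.2; simp; omega))
    have h2 : 0 ≤ a i ^ 2 * N i := mul_nonneg (sq_nonneg _) (hpos i).le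
    nlinarith
  exact le_of_mul_le_mul_right (hW.trans hle) hS
end

section
/- Let f : ℝ → ℝ be a positive 2π-periodic C¹ function, and let u : ℝ → ℝ be a 2π-periodic C¹ function, not identically zero, with ∫₀^{2π} f(θ)u(θ) dθ = 0. Then (∫₀^{2π} (u')² dθ)/(∫₀^{2π} u² dθ) + (∫₀^{2π} (f')² dθ)/(∫₀^{2π} f² dθ) ≥ 1. -/
open Real

/-- Wirtinger's inequality for periodic C¹ functions, without the mean-zero assumption. -/
lemma wirtinger_circle (g : ℝ → ℝ) (hper : ∀ θ, g (θ + 2 * π) = g θ) (hC : ContDiff ℝ 1 g) :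
    (∫ θ in (0:ℝ)..(2 * π), (g θ) ^ 2) ≤ (∫ θ in (0:ℝ)..(2 * π), (deriv g θ) ^ 2) +
      (∫ θ in (0:ℝ)..(2 * π), g θ) ^ 2 / (2 * π) := by
  have hpi : (0:ℝ) < 2 * π := by positivity
  have hg : Continuous g := hC.continuous
  have hg' : Continuous (deriv g) := hC.continuous_deriv (le_refl _)
  have hmem : ∀ h : ℝ → ℝ, Continuous h → MeasureTheory.MemLp (fun x => (h x : ℂ)) 2
      (MeasureTheory.volume.restrict (Set.Ioc 0 (2 * π))) := by
    intro h hh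
    have hc : Continuous (fun x => (h x : ℂ)) := by fun_prop
    rw [MeasureTheory.memLp_two_iff_integrable_sq_norm hc.aestronglyMeasurable]
    have hc2 : Continuous (fun x => ‖(h x : ℂ)‖ ^ 2) := by fun_prop
    exact ((hc2.integrableOn_Icc (a := 0) (b := 2 * π))).mono_set Set.Ioc_subset_Icc_self
  have s1 := hasSum_sq_fourierCoeffOn hpi (hmem g hg)
  have s2 := hasSum_sq_fourierCoeffOn hpi (hmem _ hg')
  have s3 := hasSum_ite_eq (0:ℤ) (‖fourierCoeffOn hpi (fun x => (g x : ℂ)) 0‖ ^ 2)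
  have key := hasSum_le (fun n => ?_) s1 (s2.add s3)
  · have h0 : fourierCoeffOn hpi (fun x => (g x : ℂ)) 0 =
        (((2 * π)⁻¹ * ∫ θ in (0:ℝ)..(2 * π), g θ : ℝ) : ℂ) := by
      rw [fourierCoeffOn_eq_integral]
      simp [intervalIntegral.integral_ofReal]
    rw [h0] at key
    simp only [Complex.norm_real, Real.norm_eq_abs, sq_abs, smul_eq_mul, sub_zero] at key
    have := mul_le_mul_of_nonneg_left key hpi.le
    calc _ = _ := by field_simp
      _ ≤ _ := this
      _ = _ := by field_simp
  · by_cases hn : n = 0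
    · subst hn
      simp
    · have hd := fourierCoeffOn_of_hasDerivAt (f := fun x => (g x : ℂ))
        (f' := fun x => ((deriv g x : ℝ) : ℂ)) hpi hn
        (fun x _ => ((hC.differentiable (by norm_num)) x).hasDerivAt.ofReal_comp)
        (Continuous.intervalIntegrable (by fun_prop) _ _)
      have hz : g (2 * π) = g 0 := by simpa using hper 0
      rw [hd, hz]
      have hn1 : (1:ℝ) ≤ |(n:ℝ)| := by exact_mod_cast Int.one_le_abs hn
      simp only [hn, if_false, add_zero, sub_self, mul_zero, zero_sub]
      have e : ‖1 / (-2 * (π:ℂ) * Complex.I * n) * -((((2 * π : ℝ) : ℂ) - ((0:ℝ) : ℂ)) *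
          fourierCoeffOn hpi (fun x => ((deriv g x : ℝ) : ℂ)) n)‖ =
          ‖fourierCoeffOn hpi (fun x => ((deriv g x : ℝ) : ℂ)) n‖ / |(n:ℝ)| := by
        simp [abs_of_pos pi_pos]
        field_simp
      rw [e]
      gcongr
      exact div_le_self (norm_nonneg _) hn1

theorem rayleigh_quotient_sum_ge_one_circle
    (f u : ℝ → ℝ)
    (hf_pos : ∀ θ, 0 < f θ)
    (hf_per : ∀ θ, f (θ + 2 * π) = f θ)
    (hf_C1 : ContDiff ℝ 1 f)
    (hu_per : ∀ θ, u (θ + 2 * π) = u θ)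
    (hu_C1 : ContDiff ℝ 1 u)
    (hu_ne : ¬ ∀ θ, u θ = 0)
    (hfu : ∫ θ in (0:ℝ)..(2 * π), f θ * u θ = 0) :
    1 ≤ (∫ θ in (0:ℝ)..(2 * π), (deriv u θ) ^ 2) / (∫ θ in (0:ℝ)..(2 * π), (u θ) ^ 2) +
        (∫ θ in (0:ℝ)..(2 * π), (deriv f θ) ^ 2) / (∫ θ in (0:ℝ)..(2 * π), (f θ) ^ 2) := by
  have hpi : (0:ℝ) < 2 * π := by positivity
  have hf : Continuous f := hf_C1.continuous
  have hu : Continuous u := hu_C1.continuous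
  have wu := wirtinger_circle u hu_per hu_C1
  have wf := wirtinger_circle f hf_per hf_C1
  have hB : 0 < ∫ θ in (0:ℝ)..(2 * π), (f θ) ^ 2 :=
    intervalIntegral.integral_pos hpi (by fun_prop) (fun x _ => sq_nonneg _)
      ⟨0, ⟨le_refl _, hpi.le⟩, by have := hf_pos 0; positivity⟩
  have hA : 0 < ∫ θ in (0:ℝ)..(2 * π), (u θ) ^ 2 := by
    push Not at hu_ne
    obtain ⟨x, hx⟩ := hu_ne
    obtain ⟨y, hy, hxy⟩ := Function.Periodic.exists_mem_Ico₀ (f := u) hu_per hpi x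
    exact intervalIntegral.integral_pos hpi (by fun_prop) (fun x _ => sq_nonneg _)
      ⟨y, ⟨hy.1, hy.2.le⟩, by rw [← hxy]; positivity⟩
  have bessel : ∀ s t : ℝ, 0 ≤ 2 * π - 2 * s * (∫ θ in (0:ℝ)..(2 * π), u θ)
      - 2 * t * (∫ θ in (0:ℝ)..(2 * π), f θ) + s ^ 2 * (∫ θ in (0:ℝ)..(2 * π), (u θ) ^ 2)
      + t ^ 2 * (∫ θ in (0:ℝ)..(2 * π), (f θ) ^ 2) := by
    intro s t
    have h0 : 0 ≤ ∫ θ in (0:ℝ)..(2 * π), (1 - s * u θ - t * f θ) ^ 2 :=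
      intervalIntegral.integral_nonneg hpi.le (fun x _ => sq_nonneg _)
    have e : ∀ θ, (1 - s * u θ - t * f θ) ^ 2 = 1 - 2 * s * u θ - 2 * t * f θ
        + s ^ 2 * (u θ) ^ 2 + t ^ 2 * (f θ) ^ 2 + 2 * s * t * (f θ * u θ) := by
      intro θ; ring
    simp_rw [e] at h0
    rw [intervalIntegral.integral_add, intervalIntegral.integral_add,
      intervalIntegral.integral_add, intervalIntegral.integral_sub,
      intervalIntegral.integral_sub] at h0
    · simp only [intervalIntegral.integral_const_mul, hfu, intervalIntegral.integral_const,
        smul_eq_mul] at h0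
      linarith
    all_goals exact Continuous.intervalIntegrable (by fun_prop) _ _
  generalize (∫ θ in (0:ℝ)..(2 * π), (deriv u θ) ^ 2) = P at *
  generalize (∫ θ in (0:ℝ)..(2 * π), (deriv f θ) ^ 2) = Q at *
  generalize (∫ θ in (0:ℝ)..(2 * π), (u θ) ^ 2) = A at *
  generalize (∫ θ in (0:ℝ)..(2 * π), (f θ) ^ 2) = B at *
  generalize (∫ θ in (0:ℝ)..(2 * π), u θ) = a at *
  generalize (∫ θ in (0:ℝ)..(2 * π), f θ) = b at *
  have hb := bessel (a / A) (b / B)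
  have hb' : a ^ 2 / A + b ^ 2 / B ≤ 2 * π := by
    have e1 : (a / A) ^ 2 * A = a ^ 2 / A := by field_simp
    have e2 : (b / B) ^ 2 * B = b ^ 2 / B := by field_simp
    have e3 : 2 * (a / A) * a = 2 * (a ^ 2 / A) := by ring
    have e4 : 2 * (b / B) * b = 2 * (b ^ 2 / B) := by ring
    rw [e1, e2, e3, e4] at hb
    linarith
  have hu1 : 1 - a ^ 2 / A / (2 * π) ≤ P / A := by
    rw [le_div_iff₀ hA]
    have : (1 - a ^ 2 / A / (2 * π)) * A = A - a ^ 2 / (2 * π) := by field_simp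
    linarith
  have hf1 : 1 - b ^ 2 / B / (2 * π) ≤ Q / B := by
    rw [le_div_iff₀ hB]
    have : (1 - b ^ 2 / B / (2 * π)) * B = B - b ^ 2 / (2 * π) := by field_simp
    linarith
  have : (a ^ 2 / A + b ^ 2 / B) / (2 * π) ≤ 1 := (div_le_one hpi).2 hb'
  rw [add_div] at this
  linarith
end

section
/- Let φ : ℝ → ℝ be a continuous 2π-periodic function that attains both strictly positive and strictly negative values. Then there exists a continuous 2π-periodic function f : ℝ → ℝ with f > 0 everywhere and ∫₀^{2π} f(θ)φ(θ) dθ = 0. -/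
open Real

lemma aux_pos (g : ℝ → ℝ) (hc : Continuous g) (hp : ∀ θ, g (θ + 2 * π) = g θ)
    (hpos : ∃ θ, 0 < g θ) :
    0 < ∫ θ in (0:ℝ)..(2 * π), max (g θ) 0 * g θ := by
  obtain ⟨t, ht⟩ := hpos
  have hper : Function.Periodic g (2 * π) := hp
  obtain ⟨s, hs, hst⟩ := hper.exists_mem_Ico₀ (by positivity) t
  refine intervalIntegral.integral_pos (by positivity) (by fun_prop) ?_ ⟨s, ⟨hs.1, hs.2.le⟩, ?_⟩
  · intro x _
    rcases le_total (g x) 0 with h | h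
    · simp [h]
    · rw [max_eq_left h]; positivity
  · rw [← hst, max_eq_left ht.le]; positivity

theorem exists_positive_orthogonal_to_sign_changing
    (φ : ℝ → ℝ)
    (hφ_cont : Continuous φ)
    (hφ_per : ∀ θ, φ (θ + 2 * π) = φ θ)
    (hφ_pos : ∃ θ, 0 < φ θ)
    (hφ_neg : ∃ θ, φ θ < 0) :
    ∃ f : ℝ → ℝ, Continuous f ∧ (∀ θ, f (θ + 2 * π) = f θ) ∧
      (∀ θ, 0 < f θ) ∧ (∫ θ in (0:ℝ)..(2 * π), f θ * φ θ) = 0 := by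
  have hP := aux_pos φ hφ_cont hφ_per hφ_pos
  have hN := aux_pos (fun x => - φ x) (by fun_prop) (by simp [hφ_per])
    (by obtain ⟨t, ht⟩ := hφ_neg; exact ⟨t, by simpa using ht⟩)
  set P := ∫ θ in (0:ℝ)..(2 * π), max (φ θ) 0 * φ θ with hPd
  set N := ∫ θ in (0:ℝ)..(2 * π), max (-φ θ) 0 * (-φ θ) with hNd
  set I := ∫ θ in (0:ℝ)..(2 * π), φ θ with hI
  obtain ⟨a, b, ha, hb, hab⟩ : ∃ a b : ℝ, 0 ≤ a ∧ 0 ≤ b ∧ I + a * P - b * N = 0 := by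
    rcases le_total I 0 with h | h
    · exact ⟨-I / P, 0, div_nonneg (by linarith) hP.le, le_rfl, by field_simp; ring⟩
    · exact ⟨0, I / N, le_rfl, div_nonneg h hN.le, by field_simp; ring⟩
  refine ⟨fun x => 1 + a * max (φ x) 0 + b * max (-φ x) 0, by fun_prop, by simp [hφ_per],
    fun x => by positivity, ?_⟩
  refine Eq.trans ?_ hab
  rw [hPd, hNd, hI, ← intervalIntegral.integral_const_mul,
    ← intervalIntegral.integral_const_mul, ← intervalIntegral.integral_add,
    ← intervalIntegral.integral_sub]
  · congr 1; ext x; ring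
  all_goals exact Continuous.intervalIntegrable (by fun_prop) _ _
end

section
/- There exist smooth functions f, φ : ℝ² → ℝ, each 2π-periodic in both variables, such that: f(x,y) > 0 for all (x,y); ∫₀^{2π}∫₀^{2π} f(x,y)cos x dx dy = ∫₀^{2π}∫₀^{2π} f(x,y)sin x dx dy = ∫₀^{2π}∫₀^{2π} f(x,y)cos y dx dy = ∫₀^{2π}∫₀^{2π} f(x,y)sin y dx dy = 0; ∫₀^{2π}∫₀^{2π} f(x,y)φ(x,y) dx dy = 0; and ∫₀^{2π}∫₀^{2π} [(∂φ/∂x)² + (∂φ/∂y)²] dx dy < ∫₀^{2π}∫₀^{2π} φ(x,y)² dx dy. -/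
open Real

lemma trig_int (A B C D E F G H : ℝ) :
    (∫ x in (0:ℝ)..(2 * π), (A + B * cos x + C * cos x ^ 2 + D * cos x ^ 3 + E * cos x ^ 4
      + sin x * (F + G * cos x + H * cos x ^ 2))) = 2 * π * (A + C / 2 + 3 * E / 8) := by
  have hd : ∀ x ∈ Set.uIcc (0:ℝ) (2 * π), HasDerivAt (fun x : ℝ => A * x + B * sin x
      + C * (x / 2 + sin x * cos x / 2) + D * (sin x - sin x ^ 3 / 3)
      + E * (3 * x / 8 + 3 / 8 * (sin x * cos x) + 1 / 4 * (cos x ^ 3 * sin x))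
      - F * cos x - G * (cos x ^ 2 / 2) - H * (cos x ^ 3 / 3))
      (A + B * cos x + C * cos x ^ 2 + D * cos x ^ 3 + E * cos x ^ 4
      + sin x * (F + G * cos x + H * cos x ^ 2)) x := by
    intro x _
    have hs := hasDerivAt_sin x
    have hc := hasDerivAt_cos x
    have hi := hasDerivAt_id' x
    have h := ((((((hi.const_mul A).add (hs.const_mul B)).add
      (((hi.div_const 2).add ((hs.mul hc).div_const 2)).const_mul C)).add
      ((hs.sub ((hs.pow 3).div_const 3)).const_mul D)).add
      (((((hi.const_mul 3).div_const 8).add ((hs.mul hc).const_mul (3 / 8))).add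
        (((hc.pow 3).mul hs).const_mul (1 / 4))).const_mul E)).sub
      (hc.const_mul F)).sub (((hc.pow 2).div_const 2).const_mul G) |>.sub
      (((hc.pow 3).div_const 3).const_mul H)
    refine HasDerivAt.congr_deriv h ?_
    have e : sin x ^ 2 = 1 - cos x ^ 2 := by rw [sin_sq]
    push_cast
    norm_num
    ring_nf
    simp only [e]
    ring
  rw [intervalIntegral.integral_eq_sub_of_hasDerivAt hd
    (Continuous.intervalIntegrable (by fun_prop) _ _)]
  simp
  ring

lemma trig_int' {g : ℝ → ℝ} (A B C D E F G H : ℝ)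
    (h : ∀ x, g x = A + B * cos x + C * cos x ^ 2 + D * cos x ^ 3 + E * cos x ^ 4
      + sin x * (F + G * cos x + H * cos x ^ 2)) :
    (∫ x in (0:ℝ)..(2 * π), g x) = 2 * π * (A + C / 2 + 3 * E / 8) := by
  rw [← trig_int A B C D E F G H]
  simp only [h]

lemma dphi (A B C x : ℝ) :
    deriv (fun t => A + B * cos t + C * cos t ^ 2) x = - sin x * (B + 2 * C * cos x) := by
  have hc := hasDerivAt_cos x
  have h := ((hc.const_mul B).const_add A).add ((hc.pow 2).const_mul C)
  have h2 : HasDerivAt (fun t => A + B * cos t + C * cos t ^ 2)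
      (- sin x * (B + 2 * C * cos x)) x := by
    refine HasDerivAt.congr_deriv h ?_
    push_cast
    ring
  exact h2.deriv

theorem counterexample_on_torus :
    ∃ f φ : ℝ → ℝ → ℝ,
      ContDiff ℝ (⊤ : ℕ∞) (fun p : ℝ × ℝ => f p.1 p.2) ∧
      ContDiff ℝ (⊤ : ℕ∞) (fun p : ℝ × ℝ => φ p.1 p.2) ∧
      (∀ x y, f (x + 2 * π) y = f x y ∧ f x (y + 2 * π) = f x y) ∧
      (∀ x y, φ (x + 2 * π) y = φ x y ∧ φ x (y + 2 * π) = φ x y) ∧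
      (∀ x y, 0 < f x y) ∧
      (∫ y in (0:ℝ)..(2 * π), ∫ x in (0:ℝ)..(2 * π), f x y * Real.cos x) = 0 ∧
      (∫ y in (0:ℝ)..(2 * π), ∫ x in (0:ℝ)..(2 * π), f x y * Real.sin x) = 0 ∧
      (∫ y in (0:ℝ)..(2 * π), ∫ x in (0:ℝ)..(2 * π), f x y * Real.cos y) = 0 ∧
      (∫ y in (0:ℝ)..(2 * π), ∫ x in (0:ℝ)..(2 * π), f x y * Real.sin y) = 0 ∧
      (∫ y in (0:ℝ)..(2 * π), ∫ x in (0:ℝ)..(2 * π), f x y * φ x y) = 0 ∧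
      (∫ y in (0:ℝ)..(2 * π), ∫ x in (0:ℝ)..(2 * π),
          (deriv (fun t => φ t y) x) ^ 2 + (deriv (fun t => φ x t) y) ^ 2)
        < ∫ y in (0:ℝ)..(2 * π), ∫ x in (0:ℝ)..(2 * π), (φ x y) ^ 2 := by
  obtain ⟨a, ha0, ha1, c, hc, hc1⟩ : ∃ a : ℝ, 0 < a ∧ a < 1 ∧ ∃ c : ℝ,
      c = a ^ 2 + a ^ 4 / 12 ∧ 1 < c :=
    ⟨99 / 100, by norm_num, by norm_num, _, rfl, by norm_num⟩
  have hs : ∀ x : ℝ, sin x ^ 2 = 1 - cos x ^ 2 := fun x => sin_sq x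
  refine ⟨fun x y => 1 + 2 * a * cos x * cos y + a ^ 2 * (cos x ^ 2 + cos y ^ 2 - 1),
    fun x y => c - 2 * a * cos x * cos y - a ^ 2 / 3 * (cos x ^ 2 + cos y ^ 2 - 1),
    by fun_prop, by fun_prop, by simp, by simp, ?_, ?_, ?_, ?_, ?_, ?_, ?_⟩
  · intro x y
    have h1 : 0 < 1 + a * cos (x + y) := by nlinarith [neg_one_le_cos (x + y)]
    have h2 : 0 < 1 + a * cos (x - y) := by nlinarith [neg_one_le_cos (x - y)]
    have h := mul_pos h1 h2
    rw [cos_add, cos_sub] at h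
    refine lt_of_lt_of_eq h ?_
    linear_combination -a ^ 2 * (sin y ^ 2 * hs x + (1 - cos x ^ 2) * hs y)
  · refine (intervalIntegral.integral_congr (fun y _ => trig_int'
      0 (1 - a ^ 2 + a ^ 2 * cos y ^ 2) (2 * a * cos y) (a ^ 2) 0 0 0 0 (fun x => by ring))).trans ?_
    refine (trig_int' 0 (2 * π * a) 0 0 0 0 0 0 (fun y => by ring)).trans ?_
    ring
  · refine (intervalIntegral.integral_congr (fun y _ => trig_int'
      0 0 0 0 0 (1 - a ^ 2 + a ^ 2 * cos y ^ 2) (2 * a * cos y) (a ^ 2) (fun x => by ring))).trans ?_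
    refine (trig_int' 0 0 0 0 0 0 0 0 (fun y => by ring)).trans ?_
    ring
  · refine (intervalIntegral.integral_congr (fun y _ => trig_int'
      ((1 - a ^ 2 + a ^ 2 * cos y ^ 2) * cos y) ((2 * a * cos y) * cos y) ((a ^ 2) * cos y) 0 0 0 0 0 (fun x => by ring))).trans ?_
    refine (trig_int' 0 (2 * π * (1 - a ^ 2 / 2)) 0 (2 * π * a ^ 2) 0 0 0 0 (fun y => by ring)).trans ?_
    ring
  · refine (intervalIntegral.integral_congr (fun y _ => trig_int'
      ((1 - a ^ 2 + a ^ 2 * cos y ^ 2) * sin y) ((2 * a * cos y) * sin y) ((a ^ 2) * sin y) 0 0 0 0 0 (fun x => by ring))).trans ?_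
    refine (trig_int' 0 0 0 0 0 (2 * π * (1 - a ^ 2 / 2)) 0 (2 * π * a ^ 2) (fun y => by ring)).trans ?_
    ring
  · refine (intervalIntegral.integral_congr (fun y _ => trig_int'
      ((1 - a ^ 2 + a ^ 2 * cos y ^ 2) * (c + a ^ 2 / 3 - a ^ 2 / 3 * cos y ^ 2)) ((1 - a ^ 2 + a ^ 2 * cos y ^ 2) * (-(2 * a * cos y)) + (2 * a * cos y) * (c + a ^ 2 / 3 - a ^ 2 / 3 * cos y ^ 2)) ((1 - a ^ 2 + a ^ 2 * cos y ^ 2) * (-(a ^ 2 / 3)) + (2 * a * cos y) * (-(2 * a * cos y)) + (a ^ 2) * (c + a ^ 2 / 3 - a ^ 2 / 3 * cos y ^ 2)) ((2 * a * cos y) * (-(a ^ 2 / 3)) + (a ^ 2) * (-(2 * a * cos y))) ((a ^ 2) * (-(a ^ 2 / 3))) 0 0 0 (fun x => by ring))).trans ?_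
    refine (trig_int' (2 * π * ((1 - a ^ 2) * (c + a ^ 2 / 3) + ((1 - a ^ 2) * -(a ^ 2 / 3) + a ^ 2 * (c + a ^ 2 / 3)) / 2 + 3 / 8 * (a ^ 2 * -(a ^ 2 / 3)))) 0 (2 * π * (a ^ 2 * (c + a ^ 2 / 3) - (1 - a ^ 2) * a ^ 2 / 3 + (-(a ^ 4 / 3) - 4 * a ^ 2 - a ^ 4 / 3) / 2)) 0 (2 * π * -(a ^ 4 / 3)) 0 0 0 (fun y => by ring)).trans ?_
    rw [hc]; ring
  · have d1 : ∀ x y : ℝ, deriv (fun t => c - 2 * a * cos t * cos y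
        - a ^ 2 / 3 * (cos t ^ 2 + cos y ^ 2 - 1)) x
        = - sin x * (-(2 * a * cos y) + 2 * (-(a ^ 2 / 3)) * cos x) := by
      intro x y
      rw [← dphi (c + a ^ 2 / 3 - a ^ 2 / 3 * cos y ^ 2)]
      congr 1
      funext t
      ring
    have d2 : ∀ x y : ℝ, deriv (fun t => c - 2 * a * cos x * cos t
        - a ^ 2 / 3 * (cos x ^ 2 + cos t ^ 2 - 1)) y
        = - sin y * (-(2 * a * cos x) + 2 * (-(a ^ 2 / 3)) * cos y) := by
      intro x y
      rw [← d1]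
      congr 1
      funext t
      ring
    have e1 := (intervalIntegral.integral_congr (a := 0) (b := 2 * π) (μ := MeasureTheory.volume)
      (fun y _ => trig_int' (g := fun x => (deriv (fun t => c - 2 * a * cos t * cos y
        - a ^ 2 / 3 * (cos t ^ 2 + cos y ^ 2 - 1)) x) ^ 2 + (deriv (fun t => c - 2 * a * cos x * cos t
        - a ^ 2 / 3 * (cos x ^ 2 + cos t ^ 2 - 1)) y) ^ 2)
      (4 * a ^ 2 * cos y ^ 2 + (1 - cos y ^ 2) * 4 * (a ^ 2 / 3) ^ 2 * cos y ^ 2) (8 * a * (a ^ 2 / 3) * cos y + (1 - cos y ^ 2) * 8 * a * (a ^ 2 / 3) * cos y) (4 * (a ^ 2 / 3) ^ 2 - 4 * a ^ 2 * cos y ^ 2 + (1 - cos y ^ 2) * 4 * a ^ 2) (-8 * a * (a ^ 2 / 3) * cos y) (-4 * (a ^ 2 / 3) ^ 2) 0 0 0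
      (fun x => by
        simp only [d1, d2, mul_pow, neg_sq, hs]
        ring))).trans
      (trig_int' (2 * π * (2 * (a ^ 2 / 3) ^ 2 + 2 * a ^ 2 - 3 / 2 * (a ^ 2 / 3) ^ 2)) 0 (2 * π * (4 * (a ^ 2 / 3) ^ 2)) 0 (2 * π * (-4 * (a ^ 2 / 3) ^ 2)) 0 0 0 (fun y => by ring))
    have e2 := (intervalIntegral.integral_congr (a := 0) (b := 2 * π) (μ := MeasureTheory.volume)
      (fun y _ => trig_int' (g := fun x => (c - 2 * a * cos x * cos y
        - a ^ 2 / 3 * (cos x ^ 2 + cos y ^ 2 - 1)) ^ 2)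
      ((c + a ^ 2 / 3 - a ^ 2 / 3 * cos y ^ 2) * (c + a ^ 2 / 3 - a ^ 2 / 3 * cos y ^ 2)) ((c + a ^ 2 / 3 - a ^ 2 / 3 * cos y ^ 2) * (-(2 * a * cos y)) + (-(2 * a * cos y)) * (c + a ^ 2 / 3 - a ^ 2 / 3 * cos y ^ 2)) ((c + a ^ 2 / 3 - a ^ 2 / 3 * cos y ^ 2) * (-(a ^ 2 / 3)) + (-(2 * a * cos y)) * (-(2 * a * cos y)) + (-(a ^ 2 / 3)) * (c + a ^ 2 / 3 - a ^ 2 / 3 * cos y ^ 2)) ((-(2 * a * cos y)) * (-(a ^ 2 / 3)) + (-(a ^ 2 / 3)) * (-(2 * a * cos y))) ((-(a ^ 2 / 3)) * (-(a ^ 2 / 3))) 0 0 0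
      (fun x => by ring))).trans
      (trig_int' (2 * π * ((c + a ^ 2 / 3) ^ 2 + (c + a ^ 2 / 3) * -(a ^ 2 / 3) + 3 / 8 * (a ^ 2 / 3) ^ 2)) 0 (2 * π * (-2 * (c + a ^ 2 / 3) * (a ^ 2 / 3) + (a ^ 2 / 3) ^ 2 + 2 * a ^ 2)) 0 (2 * π * (a ^ 2 / 3) ^ 2) 0 0 0 (fun y => by ring))
    refine e1.trans_lt (lt_of_lt_of_eq ?_ e2.symm)
    have hp : 0 < (2 * π) ^ 2 * (c ^ 2 - c) := by
      have := pi_pos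
      have : 0 < c ^ 2 - c := by nlinarith
      positivity
    rw [← sub_pos]
    convert hp using 1
    have : a ^ 4 = 12 * (c - a ^ 2) := by rw [hc]; ring
    ring_nf
    simp only [this]
    ring
end

section
/- Let ε be a real number with 1/2 < ε < 1 and define φ : ℝ² → ℝ by φ(x,y) = ε + cos x · cos y. Then φ attains both strictly positive and strictly negative values, and ∫₀^{2π}∫₀^{2π} [(∂φ/∂x)² + (∂φ/∂y)²] dx dy = 2π² < π²(4ε² + 1) = ∫₀^{2π}∫₀^{2π} φ(x,y)² dx dy. -/
open Real

lemma trig_int_s16 (a b c : ℝ) :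
    ∫ x in (0:ℝ)..(2 * π), (a + b * Real.cos x + c * Real.cos x ^ 2) = 2 * π * a + π * c := by
  rw [intervalIntegral.integral_add, intervalIntegral.integral_add,
    intervalIntegral.integral_const_mul, intervalIntegral.integral_const_mul,
    integral_cos, integral_cos_sq, intervalIntegral.integral_const]
  · simp
    ring
  all_goals exact Continuous.intervalIntegrable (by fun_prop) _ _

theorem torus_test_function_computation
    (ε : ℝ) (hε : 1 / 2 < ε ∧ ε < 1)
    (φ : ℝ → ℝ → ℝ)
    (hφ : ∀ x y, φ x y = ε + Real.cos x * Real.cos y) :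
    (∃ x y, 0 < φ x y) ∧ (∃ x y, φ x y < 0) ∧
    (∫ y in (0:ℝ)..(2 * π), ∫ x in (0:ℝ)..(2 * π),
        (deriv (fun t => φ t y) x) ^ 2 + (deriv (fun t => φ x t) y) ^ 2)
      = 2 * π ^ 2 ∧
    2 * π ^ 2 < π ^ 2 * (4 * ε ^ 2 + 1) ∧
    π ^ 2 * (4 * ε ^ 2 + 1)
      = ∫ y in (0:ℝ)..(2 * π), ∫ x in (0:ℝ)..(2 * π), (φ x y) ^ 2 := by
  obtain ⟨h1, h2⟩ := hε
  refine ⟨⟨0, 0, ?_⟩, ⟨0, π, ?_⟩, ?_, ?_, ?_⟩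
  · rw [hφ]; simp; linarith
  · rw [hφ]; simp; linarith
  · have hd1 : ∀ x y, deriv (fun t => φ t y) x = -Real.sin x * Real.cos y := by
      intro x y
      simp only [hφ]
      exact (((Real.hasDerivAt_cos x).mul_const (Real.cos y)).const_add ε).deriv
    have hd2 : ∀ x y, deriv (fun t => φ x t) y = Real.cos x * -Real.sin y := by
      intro x y
      simp only [hφ]
      exact (((Real.hasDerivAt_cos y).const_mul (Real.cos x)).const_add ε).deriv
    have hin : ∀ y, (∫ x in (0:ℝ)..(2 * π),
        (deriv (fun t => φ t y) x) ^ 2 + (deriv (fun t => φ x t) y) ^ 2) = π := by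
      intro y
      have : ∀ x, (deriv (fun t => φ t y) x) ^ 2 + (deriv (fun t => φ x t) y) ^ 2
          = Real.cos y ^ 2 + 0 * Real.cos x + (1 - 2 * Real.cos y ^ 2) * Real.cos x ^ 2 := by
        intro x
        rw [hd1, hd2, mul_pow, mul_pow, neg_sq, neg_sq, Real.sin_sq, Real.sin_sq]
        ring
      simp only [this]
      rw [trig_int_s16]
      ring
    simp only [hin]
    simp
    ring
  · have : 0 < π ^ 2 := by positivity
    have h3 : 0 < 4 * ε ^ 2 - 1 := by nlinarith
    nlinarith [mul_pos this h3]
  · have hin : ∀ y, (∫ x in (0:ℝ)..(2 * π), (φ x y) ^ 2)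
        = 2 * π * ε ^ 2 + 0 * Real.cos y + π * Real.cos y ^ 2 := by
      intro y
      have : ∀ x, (φ x y) ^ 2
          = ε ^ 2 + (2 * ε * Real.cos y) * Real.cos x + Real.cos y ^ 2 * Real.cos x ^ 2 := by
        intro x
        rw [hφ]
        ring
      simp only [this]
      rw [trig_int_s16]
      ring
    simp only [hin]
    rw [trig_int_s16]
    ring
end
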